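/- arXiv:2302.03252 — 4 statements merged into one kernel-verified Lean document; each statement's English description precedes it below -/
import Mathlib

section
/- Let θ be a nonzero real algebraic number. Then cos θ is transcendental (not an algebraic number). -/
open Polynomial

theorem hl_integral {K : Type*} [Field K] (L : ℤ) (γ : K) (h : IsIntegral ℤ ((L : K) * γ))
    (g : ℤ[X]) (N : ℕ) (hN : g.natDegree ≤ N) : IsIntegral ℤ ((L : K) ^ N * aeval γ g) := by
  rw [aeval_eq_sum_range' (Nat.lt_succ_of_le hN), Finset.mul_sum]
  refine IsIntegral.sum _ fun i hi => ?_
  have hi' : i ≤ N := Nat.lt_succ_iff.mp (Finset.mem_range.mp hi)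
  have : (L : K) ^ N * (g.coeff i • γ ^ i) =
      ((g.coeff i * L ^ (N - i) : ℤ) : K) * ((L : K) * γ) ^ i := by
    obtain ⟨k, rfl⟩ := Nat.exists_eq_add_of_le hi'
    rw [Nat.add_sub_cancel_left, zsmul_eq_mul]
    push_cast
    ring
  rw [this]
  exact (isIntegral_algebraMap (R := ℤ) (A := K) (x := g.coeff i * L ^ (N - i))).mul (h.pow i)

theorem hl_core {K : Type*} [Field K] [Algebra ℚ K] [FiniteDimensional ℚ K] [IsGalois ℚ K]
    (ι : K →ₐ[ℚ] ℂ) (H : K →₀ ℤ) (hinv : ∀ (σ : Gal(K/ℚ)) γ, H (σ γ) = H γ) (h0 : H 0 ≠ 0)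
    (hs : ∑ γ ∈ H.support, (H γ : ℂ) * Complex.exp (ι γ) = 0) : False := by
  classical
  have : CharZero K := algebraRat.charZero K
  set S := H.support.erase 0 with hS
  have hsplit : (H 0 : ℂ) + ∑ γ ∈ S, (H γ : ℂ) * Complex.exp (ι γ) = 0 := by
    rw [← Finset.add_sum_erase _ _ (Finsupp.mem_support_iff.mpr h0)] at hs
    simpa using hs
  -- the polynomial
  have hpoly : ∀ γ : K, ∃ f : ℤ[X], γ ≠ 0 → f.coeff 0 ≠ 0 ∧ aeval γ f = 0 := by
    intro γ
    by_cases hγ : γ = 0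
    · exact ⟨0, fun h => absurd hγ h⟩
    have h1 : IsAlgebraic ℚ γ := Algebra.IsAlgebraic.isAlgebraic γ
    have h2 : IsAlgebraic ℤ γ := (IsFractionRing.isAlgebraic_iff ℤ ℚ K).mpr h1
    obtain ⟨q, hq1, hq2⟩ := h2.exists_nonzero_coeff_and_aeval_eq_zero
      (mem_nonZeroDivisors_of_ne_zero hγ)
    exact ⟨q, fun _ => ⟨hq1, hq2⟩⟩
  choose fγ hfγ using hpoly
  set f : ℤ[X] := ∏ γ ∈ S, fγ γ with hf
  have hSne : ∀ γ ∈ S, γ ≠ 0 := fun γ h => Finset.ne_of_mem_erase h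
  have hf0 : f.eval 0 ≠ 0 := by
    rw [hf, eval_prod]
    refine Finset.prod_ne_zero_iff.mpr fun γ h => ?_
    rw [← coeff_zero_eq_eval_zero]
    exact (hfγ γ (hSne γ h)).1
  have hfne : f ≠ 0 := by rintro h; simp [h] at hf0
  have hroot : ∀ γ ∈ S, ι γ ∈ f.aroots ℂ := by
    intro γ h
    rw [mem_aroots]
    refine ⟨hfne, ?_⟩
    have : aeval γ f = 0 := by
      rw [hf, map_prod]
      exact Finset.prod_eq_zero h (hfγ γ (hSne γ h)).2
    have h2 := congrArg (ι.restrictScalars ℤ) this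
    rw [← aeval_algHom_apply] at h2
    simpa using h2
  -- denominators
  obtain ⟨L, hL0, hL⟩ : ∃ L : ℤ, L ≠ 0 ∧ ∀ γ ∈ S, IsIntegral ℤ ((L : K) * γ) := by
    have : Algebra.IsAlgebraic ℤ K := ⟨fun γ => (IsFractionRing.isAlgebraic_iff ℤ ℚ K).mpr
      (Algebra.IsAlgebraic.isAlgebraic γ)⟩
    obtain ⟨y, hy, h⟩ := Algebra.IsAlgebraic.exists_integral_multiples ℤ (A := K) S
    exact ⟨y, hy, fun γ hγ => by simpa using h γ hγ⟩
  obtain ⟨c, hc⟩ := LindemannWeierstrass.exp_polynomial_approx f hf0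
  set D := f.natDegree with hD
  set B : ℝ := ∑ γ ∈ S, |(H γ : ℝ)| with hB
  have hlim := FloorSemiring.tendsto_mul_pow_div_factorial_sub_atTop B (|(L : ℝ)| ^ D * |c|) 1
  obtain ⟨p0, hp0⟩ := Filter.eventually_atTop.mp (hlim.eventually (gt_mem_nhds zero_lt_one))
  obtain ⟨p, hple, hp⟩ := Nat.exists_infinite_primes
    (p0 + (eval 0 f).natAbs + (H 0).natAbs + L.natAbs + 1)
  obtain ⟨n, hn, g, hgdeg, hg⟩ := hc p (by omega) hp
  -- the integer
  obtain ⟨m, hm⟩ : ∃ m : ℤ, (m : K) = ∑ γ ∈ S, (H γ : K) * ((L : K) ^ (p * D) * aeval γ g) := by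
    set x : K := ∑ γ ∈ S, (H γ : K) * ((L : K) ^ (p * D) * aeval γ g) with hx
    have hint : IsIntegral ℤ x := by
      refine IsIntegral.sum _ fun γ hγ => ?_
      exact (isIntegral_algebraMap (R := ℤ) (A := K) (x := H γ)).mul
        (hl_integral L γ (hL γ hγ) g _ (hgdeg.trans (Nat.sub_le _ _)))
    have hfix : ∀ σ : Gal(K/ℚ), σ x = x := by
      intro σ
      rw [hx, map_sum]
      refine Finset.sum_bij (fun γ _ => σ γ) ?_ ?_ ?_ ?_
      · intro γ hγ
        simp only [hS, Finset.mem_erase, Finsupp.mem_support_iff] at hγ ⊢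
        rw [hinv]
        exact ⟨by simpa using hγ.1, hγ.2⟩
      · intro a _ b _ h
        exact σ.injective h
      · intro b hb
        refine ⟨σ.symm b, ?_, by simp⟩
        simp only [hS, Finset.mem_erase, Finsupp.mem_support_iff] at hb ⊢
        rw [hinv]
        exact ⟨by simpa using hb.1, hb.2⟩
      · intro γ _
        rw [hinv, map_mul, map_mul, map_pow, map_intCast, map_intCast]
        have := aeval_algHom_apply ((σ : K →ₐ[ℚ] K).restrictScalars ℤ) γ g
        simp at this
        rw [this]
    obtain ⟨q, hq⟩ := (IsGalois.mem_range_algebraMap_iff_fixed x).mpr hfix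
    rw [← hq] at hint
    have hqi : IsIntegral ℤ q :=
      (isIntegral_algebraMap_iff (algebraMap ℚ K).injective).mp hint
    obtain ⟨m, hm⟩ := IsIntegrallyClosed.isIntegral_iff.mp hqi
    exact ⟨m, by rw [← hq, ← hm]; simp⟩
  have hmC : (m : ℂ) = ∑ γ ∈ S, (H γ : ℂ) * ((L : ℂ) ^ (p * D) * aeval (ι γ) g) := by
    have := congrArg ι hm
    rw [map_intCast, map_sum] at this
    rw [this]
    refine Finset.sum_congr rfl fun γ _ => ?_
    have h3 := aeval_algHom_apply (ι.restrictScalars ℤ) γ g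
    simp at h3
    simp [h3]
  have key : ((H 0 * n * L ^ (p * D) + p * m : ℤ) : ℂ) =
      -∑ γ ∈ S, (H γ : ℂ) * (L : ℂ) ^ (p * D) * (n • Complex.exp (ι γ) - p • aeval (ι γ) g) := by
    have h1 : (H 0 : ℂ) = -∑ γ ∈ S, (H γ : ℂ) * Complex.exp (ι γ) :=
      eq_neg_of_add_eq_zero_left hsplit
    push_cast
    rw [hmC, h1, neg_mul, neg_mul, Finset.sum_mul, Finset.sum_mul, Finset.mul_sum,
      ← Finset.sum_neg_distrib, ← Finset.sum_neg_distrib, ← Finset.sum_add_distrib]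
    refine Finset.sum_congr rfl fun γ _ => ?_
    rw [zsmul_eq_mul, nsmul_eq_mul]
    ring
  have hbound : ‖((H 0 * n * L ^ (p * D) + p * m : ℤ) : ℂ)‖ < 1 := by
    rw [key, norm_neg]
    refine lt_of_le_of_lt (norm_sum_le _ _) (lt_of_le_of_lt ?_ (hp0 p (by omega)))
    rw [hB, Finset.sum_mul, Finset.sum_div]
    refine Finset.sum_le_sum fun γ hγ => ?_
    rw [norm_mul, norm_mul, norm_pow, Complex.norm_intCast, Complex.norm_intCast]
    have h1 := hg (hroot γ hγ)
    have h2 : c ^ p / ((p - 1).factorial : ℝ) ≤ |c| ^ p / ((p - 1).factorial : ℝ) := by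
      refine div_le_div_of_nonneg_right ?_ (Nat.cast_nonneg _)
      rw [← abs_pow]; exact le_abs_self _
    calc _ ≤ |(H γ : ℝ)| * |(L : ℝ)| ^ (p * D) * (|c| ^ p / ((p - 1).factorial : ℝ)) := by
          gcongr
          exact h1.trans h2
      _ = _ := by
          rw [mul_pow, ← pow_mul, mul_comm D p]; ring
  rw [Complex.norm_intCast] at hbound
  have hz : H 0 * n * L ^ (p * D) + p * m = 0 := by
    rw [← Int.abs_lt_one_iff]
    exact_mod_cast hbound
  have hpp : Prime (p : ℤ) := Nat.prime_iff_prime_int.mp hp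
  have hdvd : (p : ℤ) ∣ H 0 * n * L ^ (p * D) := by
    rw [eq_neg_of_add_eq_zero_left hz]
    exact (dvd_mul_right _ _).neg_right
  have hsmall : ∀ a : ℤ, a ≠ 0 → a.natAbs < p → ¬ (p : ℤ) ∣ a := by
    intro a ha hlt h
    exact absurd (Nat.le_of_dvd (Int.natAbs_pos.mpr ha) (Int.natCast_dvd.mp h)) (by omega)
  rcases hpp.dvd_or_dvd hdvd with h | h
  · rcases hpp.dvd_or_dvd h with h | h
    · exact hsmall _ h0 (by omega) h
    · exact hn h
  · exact hsmall _ hL0 (by omega) (hpp.dvd_of_dvd_pow h)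

theorem hl_main {K : Type*} [Field K] [Algebra ℚ K] [FiniteDimensional ℚ K] [IsGalois ℚ K]
    (ι : K →ₐ[ℚ] ℂ) (b : K) (hb : b ≠ 0) (Q : ℤ[X]) (hQ : Q ≠ 0)
    (h : aeval (Complex.exp (ι b)) Q = 0) : False := by
  classical
  have : CharZero K := algebraRat.charZero K
  let F1 : K → AddMonoidAlgebra ℤ K := fun a => aeval (AddMonoidAlgebra.single a (1 : ℤ) : AddMonoidAlgebra ℤ K) Q
  let T : Gal(K/ℚ) → (AddMonoidAlgebra ℤ K ≃ₐ[ℤ] AddMonoidAlgebra ℤ K) := fun σ =>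
    AddMonoidAlgebra.domCongr ℤ ℤ (σ : K ≃+ K)
  have hT1 : ∀ σ a, T σ (F1 a) = F1 (σ a) := by
    intro σ a
    have := aeval_algHom_apply (T σ : AddMonoidAlgebra ℤ K →ₐ[ℤ] AddMonoidAlgebra ℤ K) (AddMonoidAlgebra.single a (1 : ℤ)) Q
    simp only [F1]
    rw [AlgEquiv.coe_toAlgHom] at this
    rw [← this]
    simp [T]
    rfl
  have hTc : ∀ σ (x : AddMonoidAlgebra ℤ K) γ, (T σ x).coeff (σ γ) = x.coeff γ := by
    intro σ x γ
    simp only [T]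
    rw [AddMonoidAlgebra.coeff_domCongr]
    congr 1
    exact σ.symm_apply_apply γ
  have hF1 : ∀ a : K, a ≠ 0 → F1 a ≠ 0 := by
    intro a ha h0
    have h1 : (F1 a).coeff (Q.natDegree • a) = Q.leadingCoeff := by
      simp only [F1]
      rw [aeval_eq_sum_range, AddMonoidAlgebra.coeff_sum, Finsupp.finsetSum_apply]
      rw [Finset.sum_eq_single Q.natDegree]
      · simp [AddMonoidAlgebra.single_pow]
      · intro i _ hi
        simp [AddMonoidAlgebra.single_pow, ha, hi]
      · simp
    rw [h0] at h1
    exact hQ (leadingCoeff_eq_zero.mp (by simpa using h1.symm))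
  let E : AddMonoidAlgebra ℤ K →ₐ[ℤ] ℂ := AddMonoidAlgebra.lift ℤ ℂ K
    { toFun := fun x => Complex.exp (ι x.toAdd), map_one' := by simp
      map_mul' := fun x y => by simp [Complex.exp_add] }
  have hE : ∀ x : AddMonoidAlgebra ℤ K, E x = ∑ γ ∈ x.coeff.support, (x.coeff γ : ℂ) * Complex.exp (ι γ) := by
    intro x
    simp only [E]
    rw [AddMonoidAlgebra.lift_apply, Finsupp.sum]
    simp
  let F : AddMonoidAlgebra ℤ K := ∏ σ : Gal(K/ℚ), F1 (σ b)
  have hF0 : F ≠ 0 := Finset.prod_ne_zero_iff.mpr fun σ _ => hF1 _ (by simpa using hb)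
  have hEF : E F = 0 := by
    simp only [F, map_prod]
    refine Finset.prod_eq_zero (Finset.mem_univ 1) ?_
    simp only [F1]
    rw [← aeval_algHom_apply]
    simpa [E] using h
  have hTF : ∀ σ, T σ F = F := by
    intro σ
    simp only [F, map_prod, hT1]
    exact Fintype.prod_equiv (Equiv.mulLeft σ) _ _ fun τ => rfl
  obtain ⟨γ0, hγ0⟩ : ∃ γ0, F.coeff γ0 ≠ 0 := by
    by_contra! hh
    exact hF0 (by ext γ; simpa using hh γ)
  let U : AddMonoidAlgebra ℤ K := ∑ σ : Gal(K/ℚ), AddMonoidAlgebra.single (-(σ γ0)) 1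
  have hTU : ∀ σ, T σ U = U := by
    intro σ
    simp only [U, map_sum]
    refine Fintype.sum_equiv (Equiv.mulLeft σ) _ _ fun τ => ?_
    simp [T]
    rfl
  refine hl_core ι (F * U).coeff ?_ ?_ ?_
  · intro σ γ
    have : T σ (F * U) = F * U := by rw [map_mul, hTF, hTU]
    conv_lhs => rw [← this]
    exact hTc _ _ _
  · have : (F * U).coeff 0 = Fintype.card Gal(K/ℚ) * F.coeff γ0 := by
      simp only [U, Finset.mul_sum]
      rw [AddMonoidAlgebra.coeff_sum, Finsupp.finsetSum_apply]
      have h2 : ∀ σ : Gal(K/ℚ), (F * AddMonoidAlgebra.single (-(σ γ0)) 1).coeff 0 = F.coeff γ0 := by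
        intro σ
        rw [AddMonoidAlgebra.coeff_mul_single_apply, ← hTc σ F γ0, hTF]
        simp
      rw [Finset.sum_congr rfl fun σ _ => h2 σ]
      simp
    rw [this]
    exact mul_ne_zero (by exact_mod_cast Fintype.card_ne_zero) hγ0
  · rw [← hE, map_mul, hEF, zero_mul]

theorem hl_aux {K : Type*} [Field K] [Algebra ℚ K] (β : ℂ) (hβ : β ≠ 0) (h : IsAlgebraic ℚ β)
    [IsSplittingField ℚ K (minpoly ℚ β)] :
    Transcendental ℚ (Complex.exp β) := by
  intro hexp
  have hexp' : IsAlgebraic ℤ (Complex.exp β) := (IsFractionRing.isAlgebraic_iff ℤ ℚ ℂ).mpr hexp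
  obtain ⟨Q, hQ, hQ0⟩ := hexp'
  set P := minpoly ℚ β with hP
  have : FiniteDimensional ℚ K := IsSplittingField.finiteDimensional K P
  have : IsGalois ℚ K := IsGalois.of_separable_splitting_field (p := P)
    (minpoly.irreducible h.isIntegral).separable
  let ι : K →ₐ[ℚ] ℂ := IsAlgClosed.lift
  obtain ⟨b, hb⟩ : ∃ b : K, ι b = β := by
    have hs : (P.map (algebraMap ℚ K)).Splits := IsSplittingField.splits K P
    have hi := hs.image_rootSet ι
    have hm : β ∈ P.rootSet ℂ := by
      rw [mem_rootSet]
      exact ⟨minpoly.ne_zero h.isIntegral, minpoly.aeval _ _⟩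
    rw [← hi] at hm
    obtain ⟨b, -, hb⟩ := hm
    exact ⟨b, hb⟩
  refine hl_main ι b (by rintro rfl; exact hβ (by simpa using hb.symm)) Q hQ (by rw [hb]; exact hQ0)

theorem hermite_lindemann (β : ℂ) (hβ : β ≠ 0) (h : IsAlgebraic ℚ β) :
    Transcendental ℚ (Complex.exp β) :=
  @hl_aux (minpoly ℚ β).SplittingField _ _ β hβ h
    (IsSplittingField.splittingField _)

theorem cos_transcendental_of_algebraic (θ : ℝ) (hθ : θ ≠ 0) (halg : IsAlgebraic ℚ θ) :
    Transcendental ℚ (Real.cos θ) := by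
  intro hcos
  have hI : IsAlgebraic ℚ Complex.I := by
    refine ⟨X ^ 2 + 1, ?_, by simp⟩
    intro h
    have := congrArg (eval 0) h
    simp at this
  have hθ' : IsAlgebraic ℚ (θ : ℂ) := halg.algebraMap
  have hc : IsAlgebraic ℚ ((Real.cos θ : ℝ) : ℂ) := hcos.algebraMap
  have hT := hermite_lindemann (θ * Complex.I) (by simp [hθ]) (hθ'.mul hI)
  have hsin : IsAlgebraic ℚ (Complex.sin θ) := by
    refine IsAlgebraic.of_pow (n := 2) two_pos ?_
    rw [Complex.sin_sq]
    push_cast at hc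
    exact (isAlgebraic_one).sub (hc.pow 2)
  apply hT
  rw [Complex.exp_mul_I]
  push_cast at hc
  exact hc.add (hsin.mul hI)
end

section
/- Let α be a real irrational algebraic number. Then cos(απ) is transcendental. -/
open NumberField

lemma gs_factor (f : ℂ → ℂ) (hf : Differentiable ℂ f) (S : Finset ℂ) (hS : ∀ s ∈ S, f s = 0) :
    ∃ g : ℂ → ℂ, Differentiable ℂ g ∧ ∀ z, f z = (∏ s ∈ S, (z - s)) * g z := by
  classical
  induction S using Finset.induction_on with
  | empty => exact ⟨f, hf, by simp⟩
  | insert c S hc ih =>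
    obtain ⟨g, hg, hfg⟩ := ih (fun s hs => hS s (Finset.mem_insert_of_mem hs))
    have hgc : g c = 0 := by
      have h1 := hS c (Finset.mem_insert_self _ _)
      rw [hfg] at h1
      rcases mul_eq_zero.1 h1 with h | h
      · rw [Finset.prod_eq_zero_iff] at h
        obtain ⟨s, hs, h⟩ := h
        rw [sub_eq_zero] at h
        exact absurd (h ▸ hs) hc
      · exact h
    refine ⟨dslope g c, ?_, fun z => ?_⟩
    · rw [← differentiableOn_univ] at hg ⊢
      exact (Complex.differentiableOn_dslope Filter.univ_mem).2 hg
    · rw [Finset.prod_insert hc, hfg]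
      have := sub_smul_dslope g c z
      rw [hgc, sub_zero, smul_eq_mul] at this
      rw [← this]; ring

lemma gs_schwarz (f : ℂ → ℂ) (hf : Differentiable ℂ f) (S : Finset ℂ) (hS : ∀ s ∈ S, f s = 0)
    (r : ℝ) (hr : 0 < r) (hSr : ∀ s ∈ S, ‖s‖ ≤ r) (B : ℝ)
    (hB : ∀ z : ℂ, ‖z‖ = 11 * r → ‖f z‖ ≤ B) (x : ℂ) (hx : ‖x‖ ≤ 4 * r) :
    ‖f x‖ * 2 ^ S.card ≤ B := by
  obtain ⟨g, hg, hfg⟩ := gs_factor f hf S hS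
  have hB' : ∀ z : ℂ, ‖z‖ = 11 * r → ‖g z‖ ≤ B / (10 * r) ^ S.card := by
    intro z hz
    rw [le_div_iff₀ (by positivity)]
    refine le_trans ?_ (hB z hz)
    rw [hfg z, norm_mul, norm_prod, mul_comm]
    gcongr
    rw [← Finset.prod_const]
    refine Finset.prod_le_prod (fun _ _ => by positivity) fun s hs => ?_
    have := norm_sub_norm_le z s
    have := hSr s hs
    linarith
  have hgx : ‖g x‖ ≤ B / (10 * r) ^ S.card := by
    refine Complex.norm_le_of_forall_mem_frontier_norm_le (U := Metric.ball 0 (11 * r))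
      Metric.isBounded_ball hg.diffContOnCl ?_ (subset_closure ?_)
    · intro z hz
      rw [frontier_ball _ (by positivity)] at hz
      exact hB' z (by simpa using hz)
    · simp; linarith
  have hprod : ‖∏ s ∈ S, (x - s)‖ ≤ (5 * r) ^ S.card := by
    rw [norm_prod, ← Finset.prod_const]
    refine Finset.prod_le_prod (fun _ _ => by positivity) fun s hs => ?_
    have := norm_sub_le x s
    have := hSr s hs
    linarith
  rw [hfg x, norm_mul]
  have h1 : (10 * r) ^ S.card = (5 * r) ^ S.card * 2 ^ S.card := by
    rw [← mul_pow]; ring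
  rw [le_div_iff₀ (by positivity)] at hgx
  calc _ ≤ (5 * r) ^ S.card * ‖g x‖ * 2 ^ S.card := by gcongr
    _ = ‖g x‖ * (10 * r) ^ S.card := by rw [h1]; ring
    _ ≤ B := hgx

lemma gs_siegel (K : Type*) [Field K] [NumberField K] : ∃ C : ℝ, ∀ (p q : ℕ) (ι κ : Type)
    [Fintype ι] [Fintype κ] (A : ℝ) (M : Matrix ι κ (𝓞 K)), M ≠ 0 → 0 < p → p < q →
    Fintype.card ι = p → Fintype.card κ = q →
    (∀ k l, house ((algebraMap (𝓞 K) K) (M k l)) ≤ A) → 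
    ∃ (ξ : κ → 𝓞 K), ξ ≠ 0 ∧ M.mulVec ξ = 0 ∧
    ∀ l, house (ξ l).1 ≤ C * ((C * q * A) ^ ((p : ℝ) / (q - p))) := by
  classical
  refine ⟨?C, fun p q ι κ _ _ A M hM hp hpq h1 h2 h3 => ?h⟩
  case h => exact NumberField.house.exists_ne_zero_int_vec_house_le K M hM hp hpq h2 h3 h1

lemma gs_integral {K : Type*} [Field K] [NumberField K] (a b : K) (d : ℕ)
    (ha : IsIntegral ℤ (d * a)) (hb : IsIntegral ℤ (d * b)) (I E i e m n : ℕ) (hi : i ≤ I)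
    (he : e ≤ E) : IsIntegral ℤ ((d : K) ^ (I + E) * ((m + n * a) ^ i * b ^ e)) := by
  obtain ⟨i', rfl⟩ := Nat.exists_eq_add_of_le hi
  obtain ⟨e', rfl⟩ := Nat.exists_eq_add_of_le he
  have : (d : K) ^ (i + i' + (e + e')) * ((m + n * a) ^ i * b ^ e) =
      (d : K) ^ (i' + e') * ((d * m + n * (d * a)) ^ i * (d * b) ^ e) := by
    have : (d * m + n * (d * a) : K) = d * (m + n * a) := by ring
    rw [this, mul_pow, mul_pow]; ring
  rw [this]
  have hN : ∀ k : ℕ, IsIntegral ℤ (k : K) := fun k => by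
    simpa using isIntegral_algebraMap (R := ℤ) (A := K) (x := (k : ℤ))
  exact ((hN d).pow _).mul (((((hN d).mul (hN m)).add ((hN n).mul ha)).pow _).mul (hb.pow _))

lemma gs_vanish {K : Type*} [Field K] [CharZero K] (a b : K) (hb : b ≠ 0)
    (hb1 : ∀ n : ℕ, 0 < n → b ^ n ≠ 1) (D E : ℕ) (ξ : Fin D × Fin E → K)
    (h : ∀ m n : ℕ, ∑ l, ξ l * ((m + n * a) ^ (l.1 : ℕ) * b ^ ((l.2 : ℕ) * n)) = 0) : ξ = 0 := by
  classical
  have key : ∀ n : ℕ, ∀ i : Fin D, ∑ j : Fin E, ξ (i, j) * (b ^ n) ^ (j : ℕ) = 0 := by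
    intro n
    let P : Polynomial K := ∑ i : Fin D, Polynomial.monomial (i : ℕ)
      (∑ j : Fin E, ξ (i, j) * (b ^ n) ^ (j : ℕ))
    have hP : P = 0 := by
      refine Polynomial.eq_zero_of_infinite_isRoot P ?_
      refine Set.Infinite.mono (s := Set.range fun m : ℕ => (m + n * a : K)) ?_ 
        (Set.infinite_range_of_injective fun x y hxy => by simpa using hxy)
      rintro _ ⟨m, rfl⟩
      have := h m n
      simp only [Set.mem_ofPred_eq, Polynomial.IsRoot, P, Polynomial.eval_finsetSum,
        Polynomial.eval_monomial]
      rw [Fintype.sum_prod_type] at this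
      rw [← this]
      refine Finset.sum_congr rfl fun i _ => ?_
      rw [Finset.sum_mul]
      refine Finset.sum_congr rfl fun j _ => ?_
      rw [← pow_mul, mul_comm n]; ring
    intro i
    have := congrArg (fun p => p.coeff (i : ℕ)) hP
    simpa [P, Polynomial.finsetSum_coeff, Polynomial.coeff_monomial, Fin.val_inj] using this
  ext ⟨i, j⟩
  let Q : Polynomial K := ∑ j : Fin E, Polynomial.monomial (j : ℕ) (ξ (i, j))
  have hQ : Q = 0 := by
    refine Polynomial.eq_zero_of_infinite_isRoot Q ?_
    refine Set.Infinite.mono (s := Set.range fun n : ℕ => b ^ n) ?_ 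
        (Set.infinite_range_of_injective ?_)
    · rintro _ ⟨n, rfl⟩
      have := key n i
      simpa [Q, Polynomial.IsRoot, Polynomial.eval_finsetSum] using this
    · have aux : ∀ x y : ℕ, x < y → b ^ x ≠ b ^ y := by
        intro x y hxy he
        obtain ⟨k, rfl⟩ := Nat.exists_eq_add_of_lt hxy
        refine hb1 (k + 1) (by omega) ?_
        rw [add_assoc, pow_add] at he
        exact (mul_left_cancel₀ (pow_ne_zero x hb) (by rw [mul_one]; exact he)).symm
      intro x y hxy
      rcases lt_trichotomy x y with h | h | h
      · exact absurd hxy (aux _ _ h)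
      · exact h
      · exact absurd hxy.symm (aux _ _ h)
  have := congrArg (fun p => p.coeff (j : ℕ)) hQ
  simpa [Q, Polynomial.finsetSum_coeff, Polynomial.coeff_monomial, Fin.val_inj] using this

lemma gs_norm {K : Type*} [Field K] [NumberField K] (φ : K →+* ℂ) (v : K) (hv : IsIntegral ℤ v)
    (hv0 : v ≠ 0) : 1 ≤ ‖φ v‖ * house v ^ (Module.finrank ℚ K - 1) := by
  refine le_trans ?_ (norm_norm_le_norm_mul_house_pow v φ)
  have h1 : IsIntegral ℤ (Algebra.norm ℚ v) := Algebra.isIntegral_norm ℚ hv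
  obtain ⟨k, hk⟩ := IsIntegrallyClosed.isIntegral_iff.1 h1
  rw [← hk]
  have : k ≠ 0 := by
    rintro rfl
    simp at hk
    exact hv0 (Algebra.norm_eq_zero_iff.1 hk.symm)
  have h2 := Int.one_le_abs this
  simp only [algebraMap_int_eq, eq_intCast]
  rw [← Rat.norm_cast_real, Real.norm_eq_abs]
  exact_mod_cast h2

lemma gs_den {K : Type*} [Field K] [NumberField K] (a b : K) : ∃ d : ℕ, d ≠ 0 ∧
    IsIntegral ℤ (d * a) ∧ IsIntegral ℤ (d * b) := by
  classical
  obtain ⟨y, hy, h⟩ := exists_integral_multiples ℤ ℚ ({a, b} : Finset K)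
  have key : ∀ x : K, IsIntegral ℤ (y • x) → IsIntegral ℤ ((y.natAbs : K) * x) := by
    intro x hx
    rw [zsmul_eq_mul] at hx
    have h1 : ((y.natAbs : ℤ) : K) = (y.natAbs : K) := by simp
    rcases Int.natAbs_eq y with h | h
    · rw [h] at hx
      rwa [h1] at hx
    · rw [h] at hx
      push_cast at hx
      rw [neg_mul] at hx
      simpa using hx.neg
  exact ⟨y.natAbs, by simpa using hy, key _ (h a (by simp)), key _ (h b (by simp))⟩

lemma gs_large (k : ℕ) : ∃ T : ℕ, ∀ s : ℕ, T ≤ s → (s : ℝ) ^ k < 2 ^ s := by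
  have := isLittleO_pow_const_const_pow_of_one_lt (R := ℝ) k (r := 2) (by norm_num)
  have := this.def (c := 1/2) (by norm_num)
  obtain ⟨T, hT⟩ := Filter.eventually_atTop.1 this
  refine ⟨T, fun s hs => ?_⟩
  have := hT s hs
  simp at this
  have h2 : (0:ℝ) < 2 ^ s := by positivity
  linarith


lemma gs_house_term {K : Type*} [Field K] [NumberField K] (a b : K) (c : ℝ)
    (hc1 : 1 ≤ c) (hca : 1 + house a ≤ c) (hcb : house b ≤ c) (I E i e m n M : ℕ) (hi : i ≤ I)
    (he : e ≤ E) (hm : m ≤ M) (hn : n ≤ M) (hM : 1 ≤ M) :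
    house ((m + n * a) ^ i * b ^ e) ≤ (M * c) ^ I * c ^ E := by
  have hM' : (1 : ℝ) ≤ M := by exact_mod_cast hM
  have hm' : (m : ℝ) ≤ M := by exact_mod_cast hm
  have hn' : (n : ℝ) ≤ M := by exact_mod_cast hn
  have h1 : house (m + n * a : K) ≤ M * c := by
    refine (house_add_le _ _).trans ?_
    rw [house_nat_mul]
    have : house (m : K) = m := by simpa using house_intCast (K := K) (m : ℤ)
    rw [this]
    have h0 := house_nonneg a
    calc (m : ℝ) + n * house a ≤ M + M * house a := by gcongr
      _ = M * (1 + house a) := by ring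
      _ ≤ M * c := by gcongr
  have hMc : 1 ≤ M * c := one_le_mul_of_one_le_of_one_le hM' hc1
  refine (house_mul_le _ _).trans (mul_le_mul ?_ ?_ (house_nonneg _) (by positivity))
  · exact (house_pow_le _ _).trans ((pow_le_pow_left₀ (house_nonneg _) h1 _).trans
      (pow_le_pow_right₀ hMc hi))
  · exact (house_pow_le _ _).trans ((pow_le_pow_left₀ (house_nonneg _) hcb _).trans
      (pow_le_pow_right₀ hc1 he))

lemma gs_house_natpow {K : Type*} [Field K] [NumberField K] (d k : ℕ) (x : K) :
    house ((d : K) ^ k * x) = (d : ℝ) ^ k * house x := by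
  have := house_nat_mul x (d ^ k)
  push_cast at this
  exact this

lemma gs_aux {K : Type*} [Field K] [NumberField K] (a b : K) (d : ℕ) (hd : d ≠ 0)
    (ha : IsIntegral ℤ (d * a)) (hb : IsIntegral ℤ (d * b)) : ∃ C : ℝ, ∀ t : ℕ, C ≤ t →
    ∃ ξ : Fin (2 * t ^ 3) × Fin t → 𝓞 K, ξ ≠ 0 ∧
      (∀ m n : ℕ, m < t ^ 2 → n < t ^ 2 →
        ∑ l, (ξ l : K) * ((m + n * a) ^ (l.1 : ℕ) * b ^ ((l.2 : ℕ) * n)) = 0) ∧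
      ∀ l, house (ξ l : K) ≤ (t : ℝ) ^ (17 * t ^ 3) := by
  obtain ⟨C₀, hC₀⟩ := gs_siegel K
  refine ⟨max (max 2 |C₀|) (max d (max (1 + house a) (house b))), fun t ht => ?_⟩
  simp only [max_le_iff] at ht
  obtain ⟨⟨ht2, htC⟩, htd, hta, htb⟩ := ht
  have ht1 : (1 : ℝ) ≤ t := by linarith
  have ht0 : 0 < t := by exact_mod_cast (by linarith : (0:ℝ) < t)
  have ht0' : (0 : ℝ) < t := by linarith
  let M : Matrix (Fin (t ^ 2) × Fin (t ^ 2)) (Fin (2 * t ^ 3) × Fin t) (𝓞 K) := fun k l =>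
    ⟨(d : K) ^ (2 * t ^ 3 + t * t ^ 2) *
      (((k.1 : ℕ) + (k.2 : ℕ) * a) ^ (l.1 : ℕ) * b ^ ((l.2 : ℕ) * (k.2 : ℕ))),
      gs_integral a b d ha hb _ _ _ _ _ _ l.1.2.le (Nat.mul_le_mul l.2.2.le k.2.2.le)⟩
  have hM : M ≠ 0 := by
    intro h
    have h1 := congrFun (congrFun h (⟨0, by positivity⟩, ⟨0, by positivity⟩))
      (⟨0, by positivity⟩, ⟨0, ht0⟩)
    have h2 := congrArg (fun x : 𝓞 K => (x : K)) h1
    simp [M, hd] at h2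
  have hA : ∀ k l, house ((algebraMap (𝓞 K) K) (M k l)) ≤ (t : ℝ) ^ (10 * t ^ 3) := by
    intro k l
    have h1 : (algebraMap (𝓞 K) K) (M k l) = (d : K) ^ (2 * t ^ 3 + t * t ^ 2) *
      (((k.1 : ℕ) + (k.2 : ℕ) * a) ^ (l.1 : ℕ) * b ^ ((l.2 : ℕ) * (k.2 : ℕ))) := rfl
    rw [h1, gs_house_natpow]
    have h2 := gs_house_term a b t ht1 hta htb (2 * t ^ 3) (t * t ^ 2) l.1 (l.2 * k.2) k.1 k.2
      (t ^ 2) l.1.2.le (Nat.mul_le_mul l.2.2.le k.2.2.le) k.1.2.le k.2.2.le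
      (Nat.one_le_pow _ _ ht0)
    calc _ ≤ (t : ℝ) ^ (2 * t ^ 3 + t * t ^ 2) *
          (((t ^ 2 : ℕ) * t : ℝ) ^ (2 * t ^ 3) * (t : ℝ) ^ (t * t ^ 2)) := by
          gcongr
          exact house_nonneg _
      _ = (t : ℝ) ^ (10 * t ^ 3) := by
          push_cast
          rw [← pow_succ, ← pow_mul, ← pow_add, ← pow_add]
          congr 1; ring
  obtain ⟨ξ, hξ0, hξM, hξ⟩ := hC₀ (t ^ 4) (2 * t ^ 4) _ _ _ M hM (by positivity)
    (by have : 0 < t ^ 4 := by positivity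
        omega) (by simp; ring) (by simp; ring) hA
  refine ⟨ξ, hξ0, ?_, ?_⟩
  · intro m n hm hn
    have h1 := congrFun hξM (⟨m, hm⟩, ⟨n, hn⟩)
    have h2 := congrArg (algebraMap (𝓞 K) K) h1
    simp only [Matrix.mulVec, dotProduct, map_sum, map_mul, Pi.zero_apply, map_zero] at h2
    have h3 : (d : K) ^ (2 * t ^ 3 + t * t ^ 2) *
      ∑ l, (ξ l : K) * ((m + n * a) ^ (l.1 : ℕ) * b ^ ((l.2 : ℕ) * n)) = 0 := by
      rw [← h2, Finset.mul_sum]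
      refine Finset.sum_congr rfl fun l _ => ?_
      have h4 : (algebraMap (𝓞 K) K) (M (⟨m, hm⟩, ⟨n, hn⟩) l) =
        (d : K) ^ (2 * t ^ 3 + t * t ^ 2) *
        ((m + n * a) ^ (l.1 : ℕ) * b ^ ((l.2 : ℕ) * n)) := rfl
      rw [h4]; ring
    exact (mul_eq_zero.1 h3).resolve_left (pow_ne_zero _ (by exact_mod_cast hd))
  · intro l
    refine (hξ l).trans ?_
    have h1 : ((t ^ 4 : ℕ) : ℝ) / ((2 * t ^ 4 : ℕ) - (t ^ 4 : ℕ)) = 1 := by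
      push_cast
      rw [div_eq_one_iff_eq] <;> ring_nf
      positivity
    rw [h1, Real.rpow_one]
    calc C₀ * (C₀ * (2 * t ^ 4 : ℕ) * (t : ℝ) ^ (10 * t ^ 3))
        = C₀ * C₀ * ((2 * t ^ 4 : ℕ) * (t : ℝ) ^ (10 * t ^ 3)) := by ring
      _ ≤ (t * t) * ((t * t ^ 4 : ℝ) * (t : ℝ) ^ (10 * t ^ 3)) := by
          push_cast
          gcongr ?_ * (?_ * _ * _)
          rw [← abs_mul_abs_self]
          gcongr
      _ = (t : ℝ) ^ (7 + 10 * t ^ 3) := by ring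
      _ ≤ (t : ℝ) ^ (17 * t ^ 3) := by
          refine pow_le_pow_right₀ ht1 ?_
          have : 0 < t ^ 3 := by positivity
          omega

lemma gs_step {K : Type*} [Field K] [NumberField K] (φ : K →+* ℂ) (a b : K) (α : ℝ)
    (hirr : Irrational α) (hφa : φ a = α)
    (hφb : φ b = Complex.exp (2 * Real.pi * Complex.I * α)) (d : ℕ) (hd : d ≠ 0)
    (ha : IsIntegral ℤ (d * a)) (hb : IsIntegral ℤ (d * b)) : ∃ C : ℕ, ∀ t s : ℕ, C ≤ t → t ≤ s →
    ∀ ξ : Fin (2 * t ^ 3) × Fin t → 𝓞 K, 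
      (∀ l, house (ξ l : K) ≤ (t : ℝ) ^ (17 * t ^ 3)) →
      (∀ m n : ℕ, m < s ^ 2 → n < s ^ 2 →
        ∑ l, (ξ l : K) * ((m + n * a) ^ (l.1 : ℕ) * b ^ ((l.2 : ℕ) * n)) = 0) →
      (∀ m n : ℕ, m < (s + 1) ^ 2 → n < (s + 1) ^ 2 →
        ∑ l, (ξ l : K) * ((m + n * a) ^ (l.1 : ℕ) * b ^ ((l.2 : ℕ) * n)) = 0) := by
  classical
  obtain ⟨T, hT⟩ := gs_large (38 * Module.finrank ℚ K)
  set c₀ : ℝ := 1 + |α| with hc₀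
  have hc₀1 : 1 ≤ c₀ := by rw [hc₀]; linarith [abs_nonneg α]
  obtain ⟨C, hC⟩ := exists_nat_ge (max (max 2 (max (Real.exp (22 * Real.pi * c₀)) (11 * c₀)))
    (max d (max (4 * (1 + house a)) (4 * house b))))
  refine ⟨max C T, fun t s ht hts ξ hξ hz m n hm hn => ?_⟩
  have hTs : T ≤ s := (le_max_right _ _).trans (ht.trans hts)
  have hCt : (C : ℝ) ≤ t := by exact_mod_cast (le_max_left _ _).trans ht
  have hbig := hT s hTs
  have ht' := hC.trans hCt
  simp only [max_le_iff] at ht'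
  obtain ⟨⟨ht2, hte, ht11⟩, htd, hta, htb⟩ := ht'
  have hts' : (t : ℝ) ≤ s := by exact_mod_cast hts
  have ht1 : (1 : ℝ) ≤ t := by linarith
  have hs1 : (1 : ℝ) ≤ s := by linarith
  have hs0 : 0 < s := by exact_mod_cast (by linarith : (0:ℝ) < s)
  have ht0 : 0 < t := by exact_mod_cast (by linarith : (0:ℝ) < t)
  set x : ℝ := (s : ℝ) ^ (s ^ 3) with hx
  have hx1 : 1 ≤ x := one_le_pow₀ hs1
  have hxk : ∀ k : ℕ, x ^ k = (s : ℝ) ^ (k * s ^ 3) := by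
    intro k; rw [hx, ← pow_mul]; congr 1; ring
  -- elementary bounds
  have b1 : (2 * t ^ 4 : ℝ) ≤ x ^ 5 := by
    calc (2 * t ^ 4 : ℝ) ≤ s * s ^ 4 := by gcongr; linarith
      _ = (s : ℝ) ^ 5 := by ring
      _ ≤ x ^ 5 := by
        rw [hxk]
        refine pow_le_pow_right₀ hs1 ?_
        have : 0 < s ^ 3 := by positivity
        omega
  have b2 : (t : ℝ) ^ (17 * t ^ 3) ≤ x ^ 17 := by
    rw [hxk]
    calc (t : ℝ) ^ (17 * t ^ 3) ≤ (s : ℝ) ^ (17 * t ^ 3) := by gcongr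
      _ ≤ _ := pow_le_pow_right₀ hs1 (by gcongr)
  have b3 : ∀ y : ℝ, 0 ≤ y → y ≤ s ^ 3 → ∀ i : ℕ, i ≤ 2 * t ^ 3 → 
      y ^ i ≤ x ^ 6 := by
    intro y hy0 hy i hi
    rw [hxk]
    calc y ^ i ≤ ((s : ℝ) ^ 3) ^ i := by gcongr
      _ = (s : ℝ) ^ (3 * i) := by rw [← pow_mul]
      _ ≤ _ := pow_le_pow_right₀ hs1 (by
        have : t ^ 3 ≤ s ^ 3 := by gcongr
        omega)
  have b4 : (d : ℝ) ^ (2 * t ^ 3 + t * (4 * s ^ 2)) ≤ x ^ 6 := by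
    rw [hxk]
    calc (d : ℝ) ^ (2 * t ^ 3 + t * (4 * s ^ 2)) ≤ (s : ℝ) ^ (2 * t ^ 3 + t * (4 * s ^ 2)) := by
          gcongr; exact (by exact_mod_cast htd.trans hts' : d ≤ s)
      _ ≤ (s : ℝ) ^ (2 * s ^ 3 + s * (4 * s ^ 2)) := pow_le_pow_right₀ hs1 (by gcongr)
      _ = _ := by congr 1; ring
  have hsq : (s + 1) ^ 2 ≤ 4 * s ^ 2 := by nlinarith
  have hcard : Fintype.card (Fin (2 * t ^ 3) × Fin t) = 2 * t ^ 4 := by simp; ring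
  -- the value
  set v : ℕ → ℕ → K := fun m n =>
    ∑ l, (ξ l : K) * ((m + n * a) ^ (l.1 : ℕ) * b ^ ((l.2 : ℕ) * n)) with hv
  change v m n = 0
  -- the analytic function
  let f : ℂ → ℂ := fun z => ∑ l, φ (ξ l : K) * (z ^ (l.1 : ℕ) *
    Complex.exp (2 * Real.pi * Complex.I * (l.2 : ℕ) * z))
  have hf : Differentiable ℂ f := by
    intro z
    simp only [f]
    fun_prop
  have hfv : ∀ m n : ℕ, f (m + n * α) = φ (v m n) := by
    intro m n
    simp only [f, hv, map_sum, map_mul, map_pow, map_add, map_natCast, hφa, hφb]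
    refine Finset.sum_congr rfl fun l _ => ?_
    congr 2
    rw [← Complex.exp_nat_mul]
    have h1 : 2 * Real.pi * Complex.I * (l.2 : ℕ) * (m + n * α) =
      ((l.2 : ℕ) * n : ℕ) * (2 * Real.pi * Complex.I * α) +
      ((l.2 : ℕ) * m : ℕ) * (2 * Real.pi * Complex.I) := by push_cast; ring
    rw [h1, Complex.exp_add, Complex.exp_nat_mul_two_pi_mul_I, mul_one]
  let S : Finset ℂ := (Finset.range (s ^ 2) ×ˢ Finset.range (s ^ 2)).image
    fun k => (k.1 + k.2 * α : ℂ)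
  have hScard : S.card = s ^ 4 := by
    rw [Finset.card_image_of_injective]
    · simp; ring
    · rintro ⟨m₁, n₁⟩ ⟨m₂, n₂⟩ h
      have h' : (m₁ + n₁ * α : ℝ) = m₂ + n₂ * α := by
        simp only at h
        exact_mod_cast h
      have hn' : n₁ = n₂ := by
        by_contra hne
        have hne' : (n₁ - n₂ : ℝ) ≠ 0 := by
          rw [sub_ne_zero]; exact_mod_cast hne
        refine hirr ⟨((m₂ : ℚ) - m₁) / ((n₁ : ℚ) - n₂), ?_⟩
        push_cast
        rw [div_eq_iff hne']
        linarith
      subst hn'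
      have : (m₁ : ℝ) = m₂ := by linarith
      have : m₁ = m₂ := by exact_mod_cast this
      rw [this]
  have hnorm : ∀ (m n M : ℕ), m ≤ M → n ≤ M → ‖(m + n * α : ℂ)‖ ≤ c₀ * M := by
    intro m n M hm hn
    refine (norm_add_le _ _).trans ?_
    simp only [norm_mul, Complex.norm_natCast, Complex.norm_real, Real.norm_eq_abs]
    have hm' : (m : ℝ) ≤ M := by exact_mod_cast hm
    have hn' : (n : ℝ) ≤ M := by exact_mod_cast hn
    calc (m + n * |α| : ℝ) ≤ M + M * |α| := by gcongr
      _ = c₀ * M := by rw [hc₀]; ring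
  set r : ℝ := c₀ * s ^ 2 with hr
  have hr0 : 0 < r := by positivity
  have hfB : ∀ z : ℂ, ‖z‖ = 11 * r → ‖f z‖ ≤ x ^ 29 := by
    intro z hzr
    calc ‖f z‖ ≤ ∑ l : Fin (2 * t ^ 3) × Fin t, x ^ 17 * (x ^ 6 * x) := by
          refine norm_sum_le_of_le _ fun l _ => ?_
          rw [norm_mul, norm_mul, norm_pow]
          have e1 : ‖φ (ξ l : K)‖ ≤ x ^ 17 :=
            (norm_embedding_le_house _ _).trans ((hξ l).trans b2)
          have e2 : ‖z‖ ^ (l.1 : ℕ) ≤ x ^ 6 := by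
            refine b3 _ (norm_nonneg _) ?_ _ l.1.2.le
            rw [hzr, hr]
            calc 11 * (c₀ * s ^ 2 : ℝ) = (11 * c₀) * s ^ 2 := by ring
              _ ≤ s * s ^ 2 := by gcongr; linarith
              _ = _ := by ring
          have e3 : ‖Complex.exp (2 * Real.pi * Complex.I * (l.2 : ℕ) * z)‖ ≤ x := by
            refine (Complex.norm_exp_le_exp_norm _).trans ?_
            simp only [norm_mul, Complex.norm_natCast, Complex.norm_real, Real.norm_eq_abs,
              Complex.norm_I, mul_one, abs_of_pos Real.pi_pos, Complex.norm_ofNat]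
            rw [hzr, hr]
            have hl : ((l.2 : ℕ) : ℝ) ≤ s := by
              have : (l.2 : ℕ) ≤ s := l.2.2.le.trans hts
              exact_mod_cast this
            calc Real.exp (2 * Real.pi * (l.2 : ℕ) * (11 * (c₀ * s ^ 2)))
                ≤ Real.exp (2 * Real.pi * s * (11 * (c₀ * s ^ 2))) := by gcongr
              _ = Real.exp (22 * Real.pi * c₀) ^ (s ^ 3) := by
                rw [← Real.exp_nat_mul]; push_cast; congr 1; ring
              _ ≤ x := by rw [hx]; gcongr; linarith
          gcongr
      _ = (2 * t ^ 4 : ℝ) * (x ^ 17 * (x ^ 6 * x)) := by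
          rw [Finset.sum_const, Finset.card_univ, hcard, nsmul_eq_mul]; push_cast; rfl
      _ ≤ x ^ 5 * (x ^ 17 * (x ^ 6 * x)) := by gcongr
      _ = x ^ 29 := by ring
  have hup : ‖φ (v m n)‖ * 2 ^ (s ^ 4) ≤ x ^ 29 := by
    rw [← hfv, ← hScard]
    refine gs_schwarz f hf S ?_ r hr0 ?_ _ hfB _ ?_
    · intro y hy
      simp only [S, Finset.mem_image, Finset.mem_product, Finset.mem_range] at hy
      obtain ⟨⟨m', n'⟩, ⟨h1, h2⟩, rfl⟩ := hy
      rw [hfv]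
      have : v m' n' = 0 := hz m' n' h1 h2
      rw [this, map_zero]
    · intro y hy
      simp only [S, Finset.mem_image, Finset.mem_product, Finset.mem_range] at hy
      obtain ⟨⟨m', n'⟩, ⟨h1, h2⟩, rfl⟩ := hy
      have := hnorm m' n' (s ^ 2) h1.le h2.le
      push_cast at this
      exact this
    · have := hnorm m n (4 * s ^ 2) (hm.le.trans hsq) (hn.le.trans hsq)
      push_cast at this
      refine this.trans (le_of_eq ?_)
      rw [hr]; ring
  by_contra hv0
  set k := 2 * t ^ 3 + t * (4 * s ^ 2) with hk
  have hd' : (d : K) ≠ 0 := by exact_mod_cast hd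
  have hint : IsIntegral ℤ ((d : K) ^ k * v m n) := by
    simp only [hv, Finset.mul_sum]
    refine IsIntegral.sum _ fun l _ => ?_
    have h1 := gs_integral a b d ha hb (2 * t ^ 3) (t * (4 * s ^ 2)) l.1 (l.2 * n) m n l.1.2.le
      (Nat.mul_le_mul l.2.2.le (hn.le.trans hsq))
    have h2 := (RingOfIntegers.isIntegral_coe (ξ l)).mul h1
    convert h2 using 1
    rw [hk]; ring
  have hhouse : house ((d : K) ^ k * v m n) ≤ x ^ 38 := by
    rw [gs_house_natpow]
    have e1 : house (v m n) ≤ (2 * t ^ 4 : ℝ) * (x ^ 17 * (x ^ 6 * x ^ 4)) := by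
      simp only [hv]
      refine (house_sum_le_sum_house _ _).trans ?_
      calc _ ≤ ∑ l : Fin (2 * t ^ 3) × Fin t, x ^ 17 * (x ^ 6 * x ^ 4) := by
            refine Finset.sum_le_sum fun l _ => ?_
            refine (house_mul_le _ _).trans ?_
            refine mul_le_mul ((hξ l).trans b2) ?_ (house_nonneg _) (by positivity)
            have hh := house_nonneg a
            refine (gs_house_term a b (s / 4) ?_ ?_ ?_ (2 * t ^ 3) (t * (4 * s ^ 2)) _ _ _ _
              (4 * s ^ 2) l.1.2.le (Nat.mul_le_mul l.2.2.le (hn.le.trans hsq))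
              (hm.le.trans hsq) (hn.le.trans hsq) ?_).trans ?_
            · linarith
            · linarith
            · linarith
            · nlinarith
            · have e5 : ((4 * s ^ 2 : ℕ) * (s / 4) : ℝ) = s ^ 3 := by push_cast; ring
              rw [e5]
              have e6 : ((s : ℝ) / 4) ^ (t * (4 * s ^ 2)) ≤ x ^ 4 := by
                rw [hxk]
                calc ((s : ℝ) / 4) ^ (t * (4 * s ^ 2)) ≤ (s : ℝ) ^ (t * (4 * s ^ 2)) := by
                      gcongr; linarith
                  _ ≤ (s : ℝ) ^ (s * (4 * s ^ 2)) := pow_le_pow_right₀ hs1 (by gcongr)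
                  _ = _ := by congr 1; ring
              exact mul_le_mul (b3 _ (by positivity) le_rfl _ le_rfl) e6 (by positivity)
                (by positivity)
        _ = _ := by
          rw [Finset.sum_const, Finset.card_univ, hcard, nsmul_eq_mul]; push_cast; rfl
    calc (d : ℝ) ^ k * house (v m n) ≤ x ^ 6 * (x ^ 5 * (x ^ 17 * (x ^ 6 * x ^ 4))) := by
          gcongr
          · exact house_nonneg _
          · exact e1.trans (by gcongr)
      _ = x ^ 38 := by ring
  have hN := gs_norm φ _ hint (mul_ne_zero (pow_ne_zero _ hd') hv0)
  rw [map_mul, map_pow, map_natCast, norm_mul, norm_pow, Complex.norm_natCast] at hN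
  have hfin : 0 < Module.finrank ℚ K := Module.finrank_pos
  have hcontra : (2 : ℝ) ^ (s ^ 4) ≤ x ^ (38 * Module.finrank ℚ K) := by
    calc (2 : ℝ) ^ (s ^ 4) = 1 * 2 ^ (s ^ 4) := by ring
      _ ≤ ((d : ℝ) ^ k * ‖φ (v m n)‖ * house ((d : K) ^ k * v m n) ^ (Module.finrank ℚ K - 1)) *
          2 ^ (s ^ 4) := by gcongr
      _ = (d : ℝ) ^ k * (‖φ (v m n)‖ * 2 ^ (s ^ 4)) *
          house ((d : K) ^ k * v m n) ^ (Module.finrank ℚ K - 1) := by ring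
      _ ≤ x ^ 6 * x ^ 29 * (x ^ 38) ^ (Module.finrank ℚ K - 1) := by
          refine mul_le_mul (mul_le_mul b4 hup (by positivity) (by positivity))
            (pow_le_pow_left₀ (house_nonneg _) hhouse _) (pow_nonneg (house_nonneg _) _)
            (by positivity)
      _ = x ^ (35 + 38 * (Module.finrank ℚ K - 1)) := by
          rw [← pow_mul x, ← pow_add x, ← pow_add x]
      _ ≤ _ := pow_le_pow_right₀ hx1 (by omega)
  have hlt : x ^ (38 * Module.finrank ℚ K) < (2 : ℝ) ^ (s ^ 4) := by
    calc x ^ (38 * Module.finrank ℚ K) = ((s : ℝ) ^ (38 * Module.finrank ℚ K)) ^ (s ^ 3) := by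
          rw [hxk, ← pow_mul]
      _ < (2 ^ s) ^ (s ^ 3) := by gcongr
      _ = _ := by rw [← pow_mul]; congr 1; ring
  exact absurd hcontra (not_le.2 hlt)

lemma gs_main {K : Type*} [Field K] [NumberField K] (φ : K →+* ℂ) (a b : K) (α : ℝ)
    (hirr : Irrational α) (hφa : φ a = α)
    (hφb : φ b = Complex.exp (2 * Real.pi * Complex.I * α)) : False := by
  obtain ⟨d, hd, ha, hb⟩ := gs_den a b
  obtain ⟨C₁, hC₁⟩ := gs_aux a b d hd ha hb
  obtain ⟨C₂, hC₂⟩ := gs_step φ a b α hirr hφa hφb d hd ha hb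
  obtain ⟨C₃, hC₃⟩ := exists_nat_ge C₁
  have ht1 : C₁ ≤ (max (max C₂ C₃) 1 : ℕ) := hC₃.trans (by
    exact_mod_cast (le_max_right C₂ C₃).trans (le_max_left _ _))
  have ht2 : C₂ ≤ max (max C₂ C₃) 1 := (le_max_left C₂ C₃).trans (le_max_left _ _)
  generalize max (max C₂ C₃) 1 = t at ht1 ht2
  obtain ⟨ξ, hξ0, hz, hξ⟩ := hC₁ t ht1
  have hall : ∀ s : ℕ, t ≤ s → ∀ m n : ℕ, m < s ^ 2 → n < s ^ 2 →
        ∑ l, (ξ l : K) * ((m + n * a) ^ (l.1 : ℕ) * b ^ ((l.2 : ℕ) * n)) = 0 := by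
    intro s hs
    induction s, hs using Nat.le_induction with
    | base => exact hz
    | succ s hs ih => exact hC₂ t s ht2 hs ξ hξ ih
  have hφb0 : φ b ≠ 0 := by rw [hφb]; exact Complex.exp_ne_zero _
  have hvan := gs_vanish a b (fun h => hφb0 (by rw [h, map_zero])) ?_ _ _
    (fun l => (ξ l : K)) ?_
  · apply hξ0
    ext l
    exact congrFun hvan l
  · intro n hn h
    have h1 := congrArg φ h
    rw [map_pow, hφb, map_one, ← Complex.exp_nat_mul, Complex.exp_eq_one_iff] at h1
    obtain ⟨k, hk⟩ := h1
    have h2 : (n * α : ℂ) = k := by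
      have h3 : (2 * Real.pi * Complex.I : ℂ) ≠ 0 := Complex.two_pi_I_ne_zero
      apply mul_right_cancel₀ h3
      rw [← hk]; ring
    have h4 : (n * α : ℝ) = k := by exact_mod_cast h2
    have hn' : (n : ℝ) ≠ 0 := by exact_mod_cast hn.ne'
    refine hirr ⟨(k : ℚ) / n, ?_⟩
    push_cast
    rw [div_eq_iff hn']
    linarith
  · intro m n
    refine hall (t + m + n + 1) (by omega) m n ?_ ?_ <;>
      exact lt_of_lt_of_le (by omega) (Nat.le_self_pow two_ne_zero (t + m + n + 1))

theorem cos_pi_mul_transcendental_of_algebraic_irrational (α : ℝ)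
    (halg : IsAlgebraic ℚ α) (hirr : Irrational α) :
    Transcendental ℚ (Real.cos (α * Real.pi)) := by
  intro hcos
  have h1 : IsAlgebraic ℚ ((α : ℝ) : ℂ) := halg.algebraMap (A := ℂ)
  have h2 : IsAlgebraic ℚ ((Real.cos (α * Real.pi) : ℝ) : ℂ) := hcos.algebraMap (A := ℂ)
  set c : ℂ := ((Real.cos (α * Real.pi) : ℝ) : ℂ) with hc
  set w : ℂ := ((Real.sin (α * Real.pi) : ℝ) : ℂ) with hw
  have hsq : w ^ 2 = 1 - c ^ 2 := by
    rw [hw, hc]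
    norm_cast
    rw [Real.sin_sq]
  have h3 : IsAlgebraic ℚ w := by
    refine IsAlgebraic.of_pow (n := 2) (by norm_num) ?_
    rw [hsq]
    exact isAlgebraic_one.sub (h2.pow 2)
  have hI : IsAlgebraic ℚ Complex.I := by
    refine IsAlgebraic.of_pow (n := 2) (by norm_num) ?_
    rw [Complex.I_sq]
    exact isAlgebraic_one.neg
  set β : ℂ := Complex.exp (2 * Real.pi * Complex.I * α) with hβ
  have hβ' : β = (c + w * Complex.I) ^ 2 := by
    rw [hβ, hc, hw, Complex.ofReal_cos, Complex.ofReal_sin, ← Complex.exp_mul_I,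
      ← Complex.exp_nat_mul]
    congr 1
    push_cast; ring
  have h4 : IsAlgebraic ℚ β := by
    rw [hβ']
    exact (h2.add (h3.mul hI)).pow 2
  let K := IntermediateField.adjoin ℚ ({(α : ℂ), β} : Set ℂ)
  have : FiniteDimensional ℚ K := by
    apply IntermediateField.finiteDimensional_adjoin
    intro x hx
    rcases hx with rfl | rfl
    · exact h1.isIntegral
    · exact h4.isIntegral
  have : NumberField K := ⟨⟩
  have hα : (α : ℂ) ∈ K := IntermediateField.subset_adjoin _ _ (by simp)
  have hβK : β ∈ K := IntermediateField.subset_adjoin _ _ (by simp)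
  exact gs_main (K := K) (algebraMap K ℂ) ⟨_, hα⟩ ⟨_, hβK⟩ α hirr rfl rfl
end

section
/- Let α and β be nonzero real algebraic numbers. Then cos(απ + β) is transcendental. -/
set_option linter.unusedSectionVars false

section helpers
open Polynomial NumberField

/-- Division of an entire function by its zeros at `0, ..., N - 1`. -/
lemma exists_quotient (N M : ℕ) (g : ℂ → ℂ) (hg : Differentiable ℂ g)
    (hM : ∀ i < N, ∀ k < M, iteratedDeriv k g (i : ℂ) = 0) :
    ∃ h : ℂ → ℂ, Differentiable ℂ h ∧
      ∀ z, g z = (∏ i ∈ Finset.range N, (z - (i : ℂ))) ^ M * h z := by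
  induction N with
  | zero => exact ⟨g, hg, by simp⟩
  | succ N ih =>
    obtain ⟨h, hh, hgh⟩ := ih (fun i hi => hM i (by omega))
    have hord : (M : ℕ∞) ≤ analyticOrderAt h (N : ℂ) := by
      have h1 : (M : ℕ∞) ≤ analyticOrderAt g (N : ℂ) :=
        (natCast_le_analyticOrderAt_iff_iteratedDeriv_eq_zero (hg.analyticAt _)).2
          (hM N (by omega))
      have h2 : g = (fun z => (∏ i ∈ Finset.range N, (z - (i : ℂ))) ^ M) * h := by
        ext z; simp [hgh z]
      have hd : Differentiable ℂ (fun z : ℂ => (∏ i ∈ Finset.range N, (z - (i : ℂ))) ^ M) := by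
        fun_prop
      have h3 : analyticOrderAt (fun z : ℂ => (∏ i ∈ Finset.range N, (z - (i : ℂ))) ^ M) (N : ℂ)
          = 0 := by
        rw [(hd.analyticAt _).analyticOrderAt_eq_zero]
        apply pow_ne_zero
        rw [Finset.prod_ne_zero_iff]
        intro i hi
        rw [sub_ne_zero]
        have := Finset.mem_range.1 hi
        exact_mod_cast (by omega : N ≠ i)
      rw [h2, analyticOrderAt_mul (hd.analyticAt _) (hh.analyticAt _), h3, zero_add] at h1
      exact h1
    -- divide h by (z - N)^M
    have key : ∀ M : ℕ, ∀ h : ℂ → ℂ, Differentiable ℂ h → (M : ℕ∞) ≤ analyticOrderAt h (N : ℂ) →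
        ∃ f : ℂ → ℂ, Differentiable ℂ f ∧ ∀ z, h z = (z - N) ^ M * f z := by
      intro M
      induction M with
      | zero => intro h hh _; exact ⟨h, hh, by simp⟩
      | succ M ih =>
        intro h hh ho
        have h0 : h (N : ℂ) = 0 := by
          have := (natCast_le_analyticOrderAt_iff_iteratedDeriv_eq_zero (hh.analyticAt _)).1 ho 0
            (by omega)
          simpa using this
        have hds : Differentiable ℂ (dslope h (N : ℂ)) := by
          rw [← differentiableOn_univ]
          exact (Complex.differentiableOn_dslope Filter.univ_mem).2 hh.differentiableOn
        have hfac : ∀ z, h z = (z - N) * dslope h (N : ℂ) z := by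
          intro z
          have := sub_smul_dslope h (N : ℂ) z
          rw [h0, sub_zero] at this
          rw [← this, smul_eq_mul]
        have ho' : (M : ℕ∞) ≤ analyticOrderAt (dslope h (N : ℂ)) (N : ℂ) := by
          have h2 : h = (fun z : ℂ => z - N) * dslope h (N : ℂ) := by
            ext z; rw [Pi.mul_apply]; exact hfac z
          have hd : Differentiable ℂ (fun z : ℂ => z - N) := by fun_prop
          have h3 : analyticOrderAt (fun z : ℂ => z - N) (N : ℂ) = 1 := by
            have : ((1 : ℕ) : ℕ∞) = analyticOrderAt (fun z : ℂ => z - N) (N : ℂ) := by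
              symm
              rw [(hd.analyticAt _).analyticOrderAt_eq_natCast]
              exact ⟨fun _ => 1, analyticAt_const, one_ne_zero, by simp⟩
            rw [← this]; rfl
          rw [h2, analyticOrderAt_mul (hd.analyticAt _) (hds.analyticAt _), h3] at ho
          push_cast at ho
          rw [add_comm] at ho
          exact (ENat.add_le_add_iff_left (by simp)).1 ho
        obtain ⟨f, hf, hf'⟩ := ih _ hds ho'
        exact ⟨f, hf, fun z => by rw [hfac z, hf' z]; ring⟩
    obtain ⟨f, hf, hf'⟩ := key M h hh hord
    exact ⟨f, hf, fun z => by rw [hgh z, hf' z, Finset.prod_range_succ, mul_pow, mul_assoc]⟩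

lemma schwarz_bound (N M : ℕ) (g : ℂ → ℂ) (hg : Differentiable ℂ g)
    (hM : ∀ i < N, ∀ k < M, iteratedDeriv k g (i : ℂ) = 0) (ρ S : ℝ)
    (hρ : 2 * ((N : ℝ) + 1) ≤ ρ) (hS : ∀ z, ‖z‖ = ρ → ‖g z‖ ≤ S) (n : ℕ) (hn : n < N) :
    ‖iteratedDeriv M g (n : ℂ)‖ ≤ M.factorial * ((2 * ((N : ℝ) + 1) / ρ) ^ (N * M) * S) := by
  obtain ⟨h, hh, hgh⟩ := exists_quotient N M g hg hM
  have hN : (0 : ℝ) ≤ N := Nat.cast_nonneg N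
  have hρ0 : 0 < ρ := by linarith
  have hbd : ∀ z, ‖z‖ = ρ → ‖h z‖ ≤ (2 / ρ) ^ (N * M) * S := by
    intro z hz
    have h1 := hS z hz
    rw [hgh z, norm_mul, norm_pow, norm_prod] at h1
    have h2 : (ρ / 2) ^ N ≤ ∏ i ∈ Finset.range N, ‖z - (i : ℂ)‖ := by
      rw [← Finset.card_range N, ← Finset.prod_const, Finset.card_range]
      apply Finset.prod_le_prod
      · intros; positivity
      · intro i hi
        have hi' : (i : ℝ) < N := by exact_mod_cast Finset.mem_range.1 hi
        have := norm_sub_norm_le z (i : ℂ)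
        rw [hz, Complex.norm_natCast] at this
        linarith
    have h3 : (ρ / 2) ^ (N * M) * ‖h z‖ ≤ S := by
      refine le_trans ?_ h1
      rw [pow_mul]
      gcongr
    have h4 : (2 / ρ) ^ (N * M) * (ρ / 2) ^ (N * M) = 1 := by
      rw [← mul_pow]
      have : 2 / ρ * (ρ / 2) = 1 := by field_simp
      rw [this, one_pow]
    calc ‖h z‖ = (2 / ρ) ^ (N * M) * ((ρ / 2) ^ (N * M) * ‖h z‖) := by
            rw [← mul_assoc, h4, one_mul]
      _ ≤ _ := by gcongr
  have hbd' : ∀ z, ‖z‖ ≤ ρ → ‖h z‖ ≤ (2 / ρ) ^ (N * M) * S := by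
    intro z hz
    refine Complex.norm_le_of_forall_mem_frontier_norm_le (U := Metric.ball 0 ρ)
      Metric.isBounded_ball hh.diffContOnCl ?_ ?_
    · intro w hw
      rw [frontier_ball _ hρ0.ne'] at hw
      exact hbd w (by simpa using hw)
    · rw [closure_ball _ hρ0.ne']
      simpa using hz
  have hn' : (n : ℝ) + 1 ≤ N := by exact_mod_cast hn
  have hS' : ∀ z ∈ Metric.sphere (n : ℂ) 1,
      ‖g z‖ ≤ (2 * ((N : ℝ) + 1) / ρ) ^ (N * M) * S := by
    intro z hz
    rw [mem_sphere_iff_norm] at hz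
    have hz1 : ‖z‖ ≤ N := by
      have := norm_le_norm_sub_add z (n : ℂ)
      rw [hz, Complex.norm_natCast] at this
      linarith
    have h1 := hbd' z (by linarith)
    rw [hgh z, norm_mul, norm_pow, norm_prod]
    have h2 : ∏ i ∈ Finset.range N, ‖z - (i : ℂ)‖ ≤ ((N : ℝ) + 1) ^ N := by
      conv_rhs => rw [← Finset.card_range N, ← Finset.prod_const, Finset.card_range]
      apply Finset.prod_le_prod
      · intros; positivity
      · intro i hi
        have hi' : (i : ℝ) < N := by exact_mod_cast Finset.mem_range.1 hi
        have h5 : ‖z - (i : ℂ)‖ ≤ ‖z - (n : ℂ)‖ + ‖(n : ℂ) - (i : ℂ)‖ := norm_sub_le_norm_sub_add_norm_sub _ _ _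
        have h6 : ‖(n : ℂ) - (i : ℂ)‖ ≤ N := by
          have : (n : ℂ) - (i : ℂ) = (((n : ℝ) - (i : ℝ) : ℝ) : ℂ) := by push_cast; rfl
          rw [this, Complex.norm_real, Real.norm_eq_abs, abs_le]
          constructor <;> [skip; skip] <;> nlinarith [Nat.cast_nonneg (α := ℝ) n, Nat.cast_nonneg (α := ℝ) i]
        linarith
    calc _ ≤ (((N : ℝ) + 1) ^ N) ^ M * ((2 / ρ) ^ (N * M) * S) := by gcongr
      _ = _ := by rw [← pow_mul, ← mul_assoc, ← mul_pow]; congr 2; ring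
  have := Complex.norm_iteratedDeriv_le_of_forall_mem_sphere_norm_le M one_pos
    hg.diffContOnCl hS'
  simpa using this

section ring
variable {R : Type*} [CommRing R]

/-- The constant coefficient differential operator with symbol `Q` applied to `p`. -/
noncomputable def act (Q p : R[X]) : R[X] :=
  aeval (R := R) (A := Module.End R R[X]) (derivative : R[X] →ₗ[R] R[X]) Q p

lemma act_mul (Q Q' p : R[X]) : act (Q * Q') p = act Q (act Q' p) := by
  simp [act, map_mul]

lemma act_one (p : R[X]) : act 1 p = p := by simp [act]

lemma act_zero (p : R[X]) : act 0 p = 0 := by simp [act]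

lemma act_add (Q Q' p : R[X]) : act (Q + Q') p = act Q p + act Q' p := by
  simp [act]

lemma act_add_right (Q p p' : R[X]) : act Q (p + p') = act Q p + act Q p' := by
  simp [act]

lemma act_C (c : R) (p : R[X]) : act (C c) p = C c * p := by
  simp [act, Module.algebraMap_end_apply, smul_eq_C_mul]

lemma act_X (p : R[X]) : act X p = derivative p := by simp [act]

lemma act_sum {J : Type*} (s : Finset J) (Q : J → R[X]) (p : R[X]) :
    act (∑ j ∈ s, Q j) p = ∑ j ∈ s, act (Q j) p := by
  simp [act, map_sum]

lemma act_sum_right {J : Type*} (s : Finset J) (Q : R[X]) (p : J → R[X]) :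
    act Q (∑ j ∈ s, p j) = ∑ j ∈ s, act Q (p j) := by
  simp [act, map_sum]

lemma act_C_mul_right (Q : R[X]) (c : R) (p : R[X]) : act Q (C c * p) = C c * act Q p := by
  rw [← act_C, ← act_mul, mul_comm, act_mul, act_C]

lemma act_map {R' : Type*} [CommRing R'] (f : R →+* R') (Q p : R[X]) :
    (act Q p).map f = act (Q.map f) (p.map f) := by
  induction Q using Polynomial.induction_on' generalizing p with
  | add a b ha hb => rw [act_add, Polynomial.map_add, ha, hb, Polynomial.map_add, act_add]
  | monomial n c =>
    rw [← C_mul_X_pow_eq_monomial, act_mul, act_C, Polynomial.map_mul, Polynomial.map_mul,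
      act_mul, map_C, act_C]
    congr 1
    induction n generalizing p with
    | zero => simp [act_one]
    | succ n ih =>
      rw [pow_succ, act_mul, ih, act_X, Polynomial.map_mul, act_mul, map_X, act_X, derivative_map]

variable {I ι : Type*} [Fintype I] [Fintype ι] [DecidableEq ι]

/-- Value of an exponential polynomial to which the operator with symbol `Q` has been applied. -/
noncomputable def val (q Q : I → R[X]) (w : R) (Θ : I → R) : R :=
  ∑ i, (act (Q i) (q i)).eval w * Θ i

lemma val_add (q Q Q' : I → R[X]) (w : R) (Θ : I → R) :
    val q (Q + Q') w Θ = val q Q w Θ + val q Q' w Θ := by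
  simp [val, act_add, add_mul, Finset.sum_add_distrib]

lemma val_smul (q Q : I → R[X]) (c : R) (w : R) (Θ : I → R) :
    val q (c • Q) w Θ = c * val q Q w Θ := by
  simp [val, smul_eq_C_mul, act_mul, act_C, Finset.mul_sum, mul_assoc]

/-- `val` as a linear map in the symbol. -/
noncomputable def valL (q : I → R[X]) (w : R) (Θ : I → R) : (I → R[X]) →ₗ[R] R where
  toFun Q := val q Q w Θ
  map_add' Q Q' := val_add q Q Q' w Θ
  map_smul' c Q := by simp [val_smul]

lemma val_map {R' : Type*} [CommRing R'] (f : R →+* R') (q Q : I → R[X]) (w : R) (Θ : I → R) :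
    f (val q Q w Θ) = val (fun i => (q i).map f) (fun i => (Q i).map f) (f w) (fun i => f (Θ i)) := by
  simp only [val, map_sum, map_mul, ← act_map, eval_map_apply]

lemma val_mul_right (q Q : I → R[X]) (w c : R) (Θ : I → R) :
    val q Q w (fun i => c * Θ i) = c * val q Q w Θ := by
  simp only [val, Finset.mul_sum]
  exact Finset.sum_congr rfl fun i _ => by ring

/-- Symbol of the `j`-th partial derivative. -/
noncomputable def symE (xh : I → ι → R) (o : ι) (j : ι) : I → R[X] :=
  fun i => C (xh i j) + if j = o then X else 0

/-- Symbol of the directional derivative. -/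
noncomputable def symV (xh : I → ι → R) (o : ι) (v : ι → R) : I → R[X] :=
  ∑ j, v j • symE xh o j

lemma act_symV (xh : I → ι → R) (o : ι) (v : ι → R) (i : I) (p : R[X]) :
    act (symV xh o v i) p = C (∑ j, xh i j * v j) * p + C (v o) * derivative p := by
  have : symV xh o v i = C (∑ j, xh i j * v j) + C (v o) * X := by
    simp only [symV, symE, Finset.sum_apply, Pi.smul_apply, smul_eq_C_mul, mul_add,
      Finset.sum_add_distrib, mul_ite, mul_zero, Finset.sum_ite_eq', Finset.mem_univ, if_true,
      map_sum, C_mul]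
    congr 1
    exact Finset.sum_congr rfl fun j _ => by ring
  rw [this, act_add, act_C, act_mul, act_C, act_X]

lemma symE_map {R' : Type*} [CommRing R'] (f : R →+* R') (xh : I → ι → R) (o j : ι) (i : I) :
    (symE xh o j i).map f = symE (fun i j => f (xh i j)) o j i := by
  simp only [symE]
  split_ifs <;> simp

lemma symE_multiset_map {R' : Type*} [CommRing R'] (f : R →+* R') (xh : I → ι → R) (o : ι)
    (t : Multiset ι) (i : I) :
    ((t.map (symE xh o)).prod i).map f = (t.map (symE (fun i j => f (xh i j)) o)).prod i := by
  induction t using Multiset.induction_on with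
  | empty => simp
  | cons a t ih => simp [Multiset.map_cons, Multiset.prod_cons, Pi.mul_apply, ih, symE_map]

/-- Zero estimate. -/
lemma zero_estimate [IsDomain R] [CharZero R] (A : ℕ) (xh : I → ι → R) (o : ι)
    (hinj : Function.Injective fun i => xh i o) (q : I → R[X])
    (hdeg : ∀ i, (q i).degree < A) (hq : q ≠ 0) (w : R) (Θ : I → R) (hΘ : ∀ i, Θ i ≠ 0) :
    ∃ k, val q (symE xh o o ^ k) w Θ ≠ 0 := by
  classical
  by_contra! hcon
  obtain ⟨i0, hi0⟩ := Function.ne_iff.1 hq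
  have hi0' : q i0 ≠ 0 := hi0
  -- all polynomials in symE
  have hall : ∀ P : R[X], val q (fun i => P.comp (C (xh i o) + X)) w Θ = 0 := by
    intro P
    have : (fun i => P.comp (C (xh i o) + X)) = aeval (symE xh o o) P := by
      funext i
      have h1 : aeval (symE xh o o) P i = (Pi.evalAlgHom R (fun _ : I => R[X]) i) (aeval (symE xh o o) P) := rfl
      rw [h1, ← aeval_algHom_apply]
      simp [symE, comp, aeval_def, eval₂_eq_sum]
    rw [this, aeval_eq_sum_range]
    have := map_sum (valL q w Θ) (fun k => P.coeff k • symE xh o o ^ k) (Finset.range (P.natDegree + 1))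
    change val q _ w Θ = _ at this
    rw [this]
    apply Finset.sum_eq_zero
    intro k _
    rw [map_smul]
    change _ • val q _ w Θ = 0
    rw [hcon, smul_zero]
  have hd : ∀ (p : R[X]) (k : ℕ), act (X ^ k) p = derivative^[k] p := by
    intro p k
    induction k generalizing p with
    | zero => simp [act_one]
    | succ k ih => rw [pow_succ, act_mul, ih, act_X, Function.iterate_succ_apply]
  set a0 := (q i0).natDegree with ha0
  set P : R[X] := (X - C (xh i0 o)) ^ a0 * ∏ i ∈ Finset.univ.erase i0, (X - C (xh i o)) ^ A with hP
  have h1 := hall P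
  have hne : ∀ i, i ≠ i0 → act (P.comp (C (xh i o) + X)) (q i) = 0 := by
    intro i hi
    have : P = ((X - C (xh i0 o)) ^ a0 * ∏ k ∈ (Finset.univ.erase i0).erase i, (X - C (xh k o)) ^ A)
        * (X - C (xh i o)) ^ A := by
      rw [hP, ← Finset.mul_prod_erase (Finset.univ.erase i0) _ (Finset.mem_erase.2 ⟨hi, Finset.mem_univ i⟩)]
      ring
    rw [this, mul_comp, act_mul]
    have h2 : ((X - C (xh i o)) ^ A).comp (C (xh i o) + X) = X ^ A := by simp
    rw [h2, hd, iterate_derivative_eq_zero_of_degree_lt (hdeg i)]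
    simp [act]
  have h0 : act (P.comp (C (xh i0 o) + X)) (q i0) =
      C ((∏ i ∈ Finset.univ.erase i0, (xh i0 o - xh i o) ^ A) * (a0.factorial * (q i0).leadingCoeff)) := by
    rw [hP, mul_comm, mul_comp, act_mul]
    have h2 : ((X - C (xh i0 o)) ^ a0).comp (C (xh i0 o) + X) = X ^ a0 := by simp
    have h3 : derivative^[a0] (q i0) = C (a0.factorial * (q i0).leadingCoeff) := by
      have hz : (derivative^[a0] (q i0)).natDegree ≤ 0 := by
        have := natDegree_iterate_derivative (q i0) a0
        omega
      rw [eq_C_of_natDegree_le_zero hz, coeff_iterate_derivative]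
      simp [Nat.descFactorial_self, ha0, nsmul_eq_mul]
    rw [h2, hd, h3]
    have h4 : ∀ (Q : R[X]) (c : R), act Q (C c) = C (Q.coeff 0 * c) := by
      intro Q c
      induction Q using Polynomial.induction_on' with
      | add a b ha hb => rw [act_add, ha, hb]; simp [add_mul]
      | monomial n b =>
        rw [← C_mul_X_pow_eq_monomial, act_mul, act_C, hd]
        cases n with
        | zero => simp
        | succ n => simp [iterate_derivative_C]
    rw [h4]
    congr 2
    rw [coeff_zero_eq_eval_zero, eval_comp, eval_prod]
    simp
  rw [val, Finset.sum_eq_single i0] at h1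
  · rw [h0, eval_C] at h1
    have h5 := (mul_eq_zero.1 h1).resolve_right (hΘ i0)
    rcases mul_eq_zero.1 h5 with h6 | h6
    · rw [Finset.prod_eq_zero_iff] at h6
      obtain ⟨i, hi, h7⟩ := h6
      have h8 := hinj (sub_eq_zero.1 (by by_contra h9; exact pow_ne_zero _ h9 h7))
      exact (Finset.mem_erase.1 hi).1 h8.symm
    · rcases mul_eq_zero.1 h6 with h7 | h7
      · exact Nat.factorial_ne_zero a0 (by exact_mod_cast h7)
      · exact hi0' (leadingCoeff_eq_zero.1 h7)
  · intro i _ hi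
    rw [hne i hi]; simp
  · simp
end ring

section bounds
variable {I ι : Type*} [Fintype I] [Fintype ι] [DecidableEq ι]

/-- Sum of absolute values of the first `A` coefficients. -/
noncomputable def coeffNorm (A : ℕ) (p : ℂ[X]) : ℝ := ∑ k ∈ Finset.range A, ‖p.coeff k‖

lemma coeffNorm_nonneg (A : ℕ) (p : ℂ[X]) : 0 ≤ coeffNorm A p :=
  Finset.sum_nonneg fun _ _ => norm_nonneg _

lemma coeffNorm_add (A : ℕ) (p p' : ℂ[X]) :
    coeffNorm A (p + p') ≤ coeffNorm A p + coeffNorm A p' := by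
  simp only [coeffNorm, coeff_add, ← Finset.sum_add_distrib]
  exact Finset.sum_le_sum fun _ _ => norm_add_le _ _

lemma coeffNorm_C_mul (A : ℕ) (c : ℂ) (p : ℂ[X]) :
    coeffNorm A (C c * p) = ‖c‖ * coeffNorm A p := by
  simp [coeffNorm, Finset.mul_sum]

lemma coeffNorm_derivative (A : ℕ) (p : ℂ[X]) (hp : p.degree < A) :
    coeffNorm A (derivative p) ≤ A * coeffNorm A p := by
  have h1 : coeffNorm A (derivative p) =
      ∑ k ∈ Finset.range A, ((k + 1 : ℕ) : ℝ) * ‖p.coeff (k + 1)‖ := by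
    refine Finset.sum_congr rfl fun k _ => ?_
    rw [coeff_derivative, norm_mul, mul_comm]
    congr 1
    rw [← Complex.norm_natCast]
    push_cast; rfl
  have hA : p.coeff A = 0 := coeff_eq_zero_of_degree_lt hp
  have h2 : ∀ k ∈ Finset.range A, ((k + 1 : ℕ) : ℝ) * ‖p.coeff (k + 1)‖
      ≤ (A : ℝ) * ‖p.coeff (k + 1)‖ := by
    intro k hk
    have : k + 1 ≤ A := Finset.mem_range.1 hk
    gcongr
  rw [h1]
  refine (Finset.sum_le_sum h2).trans ?_
  rw [← Finset.mul_sum]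
  gcongr
  have h3 := Finset.sum_range_succ (fun k => ‖p.coeff k‖) A
  have h4 := Finset.sum_range_succ' (fun k => ‖p.coeff k‖) A
  rw [hA, norm_zero, add_zero] at h3
  rw [coeffNorm, ← h3, h4]
  linarith [norm_nonneg (p.coeff 0)]

lemma norm_eval_le (A : ℕ) (p : ℂ[X]) (hp : p.degree < A) (w : ℂ) (W : ℝ) (hW : 1 ≤ W)
    (hw : ‖w‖ ≤ W) : ‖p.eval w‖ ≤ coeffNorm A p * W ^ A := by
  have h1 : p.eval w = ∑ k ∈ Finset.range A, p.coeff k * w ^ k := by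
    rcases eq_or_ne p 0 with rfl | h0
    · simp
    · exact eval_eq_sum_range' ((natDegree_lt_iff_degree_lt h0).2 hp) w
  rw [h1, coeffNorm, Finset.sum_mul]
  refine norm_sum_le_of_le _ fun k hk => ?_
  rw [norm_mul, norm_pow]
  have h2 : ‖w‖ ^ k ≤ W ^ A :=
    (pow_le_pow_left₀ (norm_nonneg _) hw k).trans
      (pow_le_pow_right₀ hW (Finset.mem_range.1 hk).le)
  gcongr

/-- The operator with symbol `Q` has norm at most `G` on polynomials of degree `< A`. -/
def OpBd (A : ℕ) (G : ℝ) (Q : ℂ[X]) : Prop :=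
  ∀ p : ℂ[X], p.degree < A → (act Q p).degree < A ∧ coeffNorm A (act Q p) ≤ G * coeffNorm A p

lemma OpBd.mul {A : ℕ} {G G' : ℝ} {Q Q' : ℂ[X]} (hG : 0 ≤ G) (h : OpBd A G Q) (h' : OpBd A G' Q') :
    OpBd A (G * G') (Q * Q') := by
  intro p hp
  rw [act_mul]
  obtain ⟨h1, h2⟩ := h' p hp
  obtain ⟨h3, h4⟩ := h _ h1
  refine ⟨h3, h4.trans ?_⟩
  rw [mul_assoc]
  gcongr

lemma OpBd.one (A : ℕ) : OpBd A 1 1 := by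
  intro p hp
  rw [act_one, one_mul]
  exact ⟨hp, le_rfl⟩

lemma OpBd.mono {A : ℕ} {G G' : ℝ} {Q : ℂ[X]} (h : OpBd A G Q) (hG : G ≤ G') : OpBd A G' Q := by
  intro p hp
  refine ⟨(h p hp).1, (h p hp).2.trans ?_⟩
  have := coeffNorm_nonneg A p
  gcongr

lemma OpBd.linear (A : ℕ) (c e : ℂ) : OpBd A (‖c‖ + ‖e‖ * A) (C c + C e * X) := by
  intro p hp
  rw [act_add, act_C, act_mul, act_C, act_X]
  have hd : (derivative p).degree < A := (degree_derivative_le).trans_lt hp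
  constructor
  · refine (degree_add_le _ _).trans_lt (max_lt ?_ ?_)
    · rw [← smul_eq_C_mul]; exact (degree_smul_le _ _).trans_lt hp
    · rw [← smul_eq_C_mul]; exact (degree_smul_le _ _).trans_lt hd
  · refine (coeffNorm_add _ _ _).trans ?_
    rw [coeffNorm_C_mul, coeffNorm_C_mul, add_mul]
    have := coeffNorm_derivative A p hp
    have h2 : ‖e‖ * coeffNorm A (derivative p) ≤ ‖e‖ * (A * coeffNorm A p) := by gcongr
    linarith

lemma OpBd.multiset {A : ℕ} {G : ℝ} (hG : 0 ≤ G) {J : Type*} (F : J → I → ℂ[X]) (i : I)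
    (h : ∀ j, OpBd A G (F j i)) (t : Multiset J) : OpBd A (G ^ t.card) ((t.map F).prod i) := by
  induction t using Multiset.induction_on with
  | empty => simpa using OpBd.one A
  | cons a t ih =>
    rw [Multiset.map_cons, Multiset.prod_cons, Multiset.card_cons, Pi.mul_apply, pow_succ, mul_comm (G ^ _)]
    exact (h a).mul hG ih

lemma OpBd.symV {A : ℕ} (xh : I → ι → ℂ) (o : ι) (v : ι → ℂ) (i : I) :
    OpBd A (∑ j, ‖xh i j‖ * ‖v j‖ + ‖v o‖ * A) (symV xh o v i) := by
  intro p hp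
  rw [act_symV, ← act_C, ← act_X, ← act_C, ← act_mul, ← act_add]
  refine (OpBd.linear A _ _).mono ?_ p hp
  gcongr
  exact norm_sum_le_of_le _ fun j _ => (norm_mul _ _).le

lemma OpBd.symE {A : ℕ} (xh : I → ι → ℂ) (o j : ι) (i : I) :
    OpBd A (‖xh i j‖ + A) (symE xh o j i) := by
  by_cases h : j = o
  · have := OpBd.linear A (xh i j) 1
    simpa [_root_.symE, h] using this
  · have := (OpBd.linear A (xh i j) 0).mono (G' := ‖xh i j‖ + A) (by simp)
    simpa [_root_.symE, h] using this

lemma val_bound (A : ℕ) (q Q : I → ℂ[X]) (w : ℂ) (Θ : I → ℂ) (G P W Z : ℝ) (hG : 0 ≤ G)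
    (hP : 0 ≤ P)
    (hW1 : 1 ≤ W) (hQ : ∀ i, OpBd A G (Q i)) (hq : ∀ i, (q i).degree < A)
    (hqP : ∀ i k, ‖(q i).coeff k‖ ≤ P) (hw : ‖w‖ ≤ W) (hΘ : ∀ i, ‖Θ i‖ ≤ Z) :
    ‖val q Q w Θ‖ ≤ (Fintype.card I * A : ℕ) * (G * P * W ^ A * Z) := by
  have h : ∀ i ∈ Finset.univ, ‖(act (Q i) (q i)).eval w * Θ i‖ ≤ A * (G * P * W ^ A * Z) := by
    intro i _
    rw [norm_mul]
    obtain ⟨h1, h2⟩ := hQ i (q i) (hq i)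
    have h3 := norm_eval_le A _ h1 w W hW1 hw
    have h4 : coeffNorm A (q i) ≤ A * P := by
      have := Finset.sum_le_card_nsmul (Finset.range A) (fun k => ‖(q i).coeff k‖) P
        (fun k _ => hqP i k)
      simpa [coeffNorm] using this
    have h5 : ‖(act (Q i) (q i)).eval w‖ ≤ G * (A * P) * W ^ A := by
      refine h3.trans ?_
      have : coeffNorm A (act (Q i) (q i)) ≤ G * (A * P) := h2.trans (by gcongr)
      gcongr
    calc _ ≤ G * (A * P) * W ^ A * Z := by
            gcongr
            exact hΘ i
      _ = _ := by ring
  refine (norm_sum_le_of_le _ h).trans ?_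
  simp [mul_assoc]

/-- Changing the generators in a product. -/
lemma expand_bound {𝔸 : Type*} [CommRing 𝔸] [Algebra ℂ 𝔸] (lam : 𝔸 →ₗ[ℂ] ℂ) (E V : ι → 𝔸)
    (B : ι → ι → ℂ) (hE : ∀ j, E j = ∑ l, B j l • V l) (Cst ε : ℝ) (hC : ∀ j, ∑ l, ‖B j l‖ ≤ Cst)
    (hC0 : 0 ≤ Cst) (hε : 0 ≤ ε)
    (L : ℕ) (h : ∀ t : Multiset ι, t.card = L → ‖lam (t.map V).prod‖ ≤ ε)
    (t : Multiset ι) (ht : t.card = L) : ‖lam (t.map E).prod‖ ≤ Cst ^ L * ε := by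
  have key : ∀ f g : Multiset ι, f.card + g.card = L →
      ‖lam ((f.map E).prod * (g.map V).prod)‖ ≤ Cst ^ f.card * ε := by
    intro f
    induction f using Multiset.induction_on with
    | empty => intro g hg; simpa using h g (by simpa using hg)
    | cons a f ih =>
      intro g hg
      have h1 : ((a ::ₘ f).map E).prod * (g.map V).prod =
          ∑ l, B a l • ((f.map E).prod * ((l ::ₘ g).map V).prod) := by
        rw [Multiset.map_cons, Multiset.prod_cons, hE a, Finset.sum_mul, Finset.sum_mul]
        refine Finset.sum_congr rfl fun l _ => ?_
        rw [Multiset.map_cons, Multiset.prod_cons, smul_mul_assoc, smul_mul_assoc]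
        congr 1
        ring
      rw [h1, map_sum]
      have h2 : ∀ l ∈ Finset.univ, ‖lam (B a l • ((f.map E).prod * ((l ::ₘ g).map V).prod))‖
          ≤ ‖B a l‖ * (Cst ^ f.card * ε) := by
        intro l _
        rw [map_smul, norm_smul]
        gcongr
        apply ih
        rw [Multiset.card_cons] at hg ⊢
        omega
      refine (norm_sum_le_of_le _ h2).trans ?_
      rw [← Finset.sum_mul, Multiset.card_cons, pow_succ, mul_comm (Cst ^ _) Cst, mul_assoc]
      gcongr
      exact hC a
  have := key t 0 (by simpa using ht)
  rw [ht] at this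
  simpa using this

/-- Value of the exponential polynomial at a complex point. -/
noncomputable def Phi (xh : I → ι → ℂ) (o : ι) (q Q : I → ℂ[X]) (w : ι → ℂ) : ℂ :=
  val q Q (w o) (fun i => Complex.exp (∑ j, xh i j * w j))

lemma Phi_hasDerivAt (xh : I → ι → ℂ) (o : ι) (q Q : I → ℂ[X]) (w v : ι → ℂ) (z : ℂ) :
    HasDerivAt (fun z : ℂ => Phi xh o q Q (w + z • v))
      (Phi xh o q (Q * symV xh o v) (w + z • v)) z := by
  unfold Phi val
  apply HasDerivAt.fun_sum
  intro i _
  have h1 : HasDerivAt (fun z : ℂ => (w + z • v) o) (v o) z := by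
    simp only [Pi.add_apply, Pi.smul_apply, smul_eq_mul]
    simpa using ((hasDerivAt_id z).mul_const (v o)).const_add (w o)
  have h2 : HasDerivAt (fun z : ℂ => eval ((w + z • v) o) (act (Q i) (q i)))
      (eval ((w + z • v) o) (derivative (act (Q i) (q i))) * v o) z :=
    ((act (Q i) (q i)).hasDerivAt _).comp z h1
  have h3 : HasDerivAt (fun z : ℂ => ∑ j, xh i j * (w + z • v) j) (∑ j, xh i j * v j) z := by
    apply HasDerivAt.fun_sum
    intro j _
    simp only [Pi.add_apply, Pi.smul_apply, smul_eq_mul]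
    simpa using (((hasDerivAt_id z).mul_const (v j)).const_add (w j)).const_mul (xh i j)
  convert! h2.mul h3.cexp using 1
  rw [Pi.mul_apply, mul_comm (Q i), act_mul, act_symV, eval_add, eval_mul, eval_mul, eval_C, eval_C]
  ring

lemma Phi_iteratedDeriv (xh : I → ι → ℂ) (o : ι) (q Q : I → ℂ[X]) (w v : ι → ℂ) (k : ℕ) :
    iteratedDeriv k (fun z : ℂ => Phi xh o q Q (w + z • v)) =
      fun z => Phi xh o q (Q * symV xh o v ^ k) (w + z • v) := by
  induction k with
  | zero => simp
  | succ k ih =>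
    rw [iteratedDeriv_succ, ih]
    funext z
    rw [(Phi_hasDerivAt xh o q _ w v z).deriv, pow_succ, mul_assoc]

/-- Lattice points. -/
def pt (v : ι → ι → ℂ) (n : ι → ℕ) : ι → ℂ := fun j => ∑ l, (n l : ℂ) * v l j

lemma pt_update (v : ι → ι → ℂ) (n : ι → ℕ) (l : ι) (i : ℕ) :
    pt v (Function.update n l 0) + (i : ℂ) • v l = pt v (Function.update n l i) := by
  funext j
  simp only [pt, Pi.add_apply, Pi.smul_apply, smul_eq_mul]
  rw [← Finset.add_sum_erase _ _ (Finset.mem_univ l), ← Finset.add_sum_erase _ _ (Finset.mem_univ l)]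
  have : ∀ a : ℕ, ∑ x ∈ Finset.univ.erase l, ((Function.update n l a x : ℕ) : ℂ) * v x j
      = ∑ x ∈ Finset.univ.erase l, (n x : ℂ) * v x j := by
    intro a
    refine Finset.sum_congr rfl fun x hx => ?_
    rw [Function.update_of_ne (Finset.mem_erase.1 hx).1]
  rw [this, this]
  simp
  ring

/-- Main analytic estimate. -/
lemma analytic_estimate [Nonempty ι] (xh : I → ι → ℂ) (o : ι) (q : I → ℂ[X]) (v B : ι → ι → ℂ)
    (hB : ∀ j j', ∑ l, B j l * v l j' = if j = j' then 1 else 0)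
    (CB : ℝ) (hCB : ∀ j, ∑ l, ‖B j l‖ ≤ CB) (hCB0 : 0 ≤ CB) (N' L : ℕ) (N : ℕ)
    (hN : N = Fintype.card ι * N')
    (hvan : ∀ t : Multiset ι, t.card < L → ∀ n : ι → ℕ, (∀ l, n l < N) →
      Phi xh o q (t.map (symE xh o)).prod (pt v n) = 0)
    (ρ S : ℝ) (hρ : 2 * ((N : ℝ) + 1) ≤ ρ)
    (hS : ∀ t : Multiset ι, t.card ≤ L → ∀ n : ι → ℕ, (∀ l, n l < N) → ∀ l, ∀ z : ℂ, ‖z‖ = ρ →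
      ‖Phi xh o q (t.map (fun l => symV xh o (v l))).prod (pt v n + z • v l)‖ ≤ S)
    (t : Multiset ι) (ht : t.card = L) (n : ι → ℕ) (hn : ∀ l, n l < N) :
    ‖Phi xh o q (t.map (symE xh o)).prod (pt v n)‖ ≤
      CB ^ L * ((L.factorial : ℝ) * ((2 * ((N : ℝ) + 1) / ρ) ^ (N' * L) * S)) := by
  have hρ0 : 0 < ρ := by have : (0:ℝ) ≤ N := Nat.cast_nonneg N; linarith
  have hS0 : 0 ≤ S := by
    obtain ⟨l⟩ := ‹Nonempty ι›
    refine (norm_nonneg _).trans (hS 0 (by simp) n hn l (ρ : ℂ) ?_)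
    rw [Complex.norm_real, Real.norm_eq_abs, abs_of_pos hρ0]
  -- vanishing in terms of V
  have hvanV : ∀ t : Multiset ι, t.card < L → ∀ n : ι → ℕ, (∀ l, n l < N) →
      Phi xh o q (t.map (fun l => symV xh o (v l))).prod (pt v n) = 0 := by
    intro t ht n hn
    obtain ⟨Cst, hCst⟩ : ∃ Cst : ℝ, ∀ l, ∑ j, ‖v l j‖ ≤ Cst :=
      ⟨∑ l, ∑ j, ‖v l j‖, fun l => Finset.single_le_sum (f := fun l => ∑ j, ‖v l j‖)
        (fun _ _ => Finset.sum_nonneg fun _ _ => norm_nonneg _) (Finset.mem_univ l)⟩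
    have := expand_bound (valL q (pt v n o) (fun i => Complex.exp (∑ j, xh i j * pt v n j)))
      (fun l => symV xh o (v l)) (symE xh o) v (fun l => rfl) (max Cst 0) 0
      (fun l => (hCst l).trans (le_max_left _ _)) (le_max_right _ _) le_rfl t.card
      (fun t' ht' => by
        have := hvan t' (by omega) n hn
        rw [norm_le_zero_iff]
        exact this) t rfl
    rw [mul_zero, norm_le_zero_iff] at this
    exact this
  have hEV : ∀ j, symE xh o j = ∑ l, B j l • symV xh o (v l) := by
    intro j
    simp only [symV, Finset.smul_sum, smul_smul]
    rw [Finset.sum_comm]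
    simp only [← Finset.sum_smul, hB]
    simp
  refine expand_bound (valL q (pt v n o) (fun i => Complex.exp (∑ j, xh i j * pt v n j)))
      (symE xh o) (fun l => symV xh o (v l)) B hEV CB _ hCB hCB0 (by positivity) L ?_ t ht
  intro t ht
  change ‖Phi xh o q (t.map (fun l => symV xh o (v l))).prod (pt v n)‖ ≤ _
  -- pigeonhole
  obtain ⟨l, hl⟩ : ∃ l, L ≤ Fintype.card ι * t.count l := by
    by_contra! hcon
    have h1 : ∑ l, t.count l = L := by
      rw [← ht]; exact Multiset.sum_count_eq_card (fun a _ => Finset.mem_univ a)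
    have h2 : ∑ l : ι, Fintype.card ι * t.count l < ∑ l : ι, L :=
      Finset.sum_lt_sum_of_nonempty Finset.univ_nonempty (fun l _ => hcon l)
    rw [← Finset.mul_sum, h1] at h2
    simp at h2
  set M := t.count l with hM
  have hML : M ≤ L := by rw [← ht]; exact Multiset.count_le_card l t
  set rest := t.filter (fun x => ¬ l = x) with hrest
  have htdec : t = Multiset.replicate M l + rest := by
    rw [hM, hrest, ← Multiset.filter_eq, Multiset.filter_add_not]
  have hcard : M + rest.card = L := by
    rw [← ht]; conv_rhs => rw [htdec]
    simp
  set Q := (rest.map (fun l => symV xh o (v l))).prod with hQ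
  have hprod : ∀ k, (((Multiset.replicate k l + rest)).map (fun l => symV xh o (v l))).prod
      = Q * symV xh o (v l) ^ k := by
    intro k
    rw [Multiset.map_add, Multiset.prod_add, Multiset.map_replicate, Multiset.prod_replicate, mul_comm]
  set g : ℂ → ℂ := fun z => Phi xh o q Q (pt v (Function.update n l 0) + z • v l) with hg
  have hgrid : ∀ i < N, ∀ l', Function.update n l i l' < N := by
    intro i hi l'
    by_cases h : l' = l
    · subst h; simpa using hi
    · rw [Function.update_of_ne h]; exact hn l'
  have hder : ∀ k (i : ℕ), iteratedDeriv k g (i : ℂ) =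
      Phi xh o q ((Multiset.replicate k l + rest).map (fun l => symV xh o (v l))).prod
        (pt v (Function.update n l i)) := by
    intro k i
    rw [hg, Phi_iteratedDeriv, hprod]
    simp only [pt_update]
  have hdiff : Differentiable ℂ g := fun z => (Phi_hasDerivAt xh o q Q _ (v l) z).differentiableAt
  have hN0 : 0 < N := lt_of_le_of_lt (Nat.zero_le _) (hn l)
  have hsch := schwarz_bound N M g hdiff
    (fun i hi k hk => by
      rw [hder]
      refine hvanV _ ?_ _ (hgrid i hi)
      rw [Multiset.card_add, Multiset.card_replicate]; omega) ρ S hρ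
    (fun z hz => hS rest (by omega) _ (hgrid 0 hN0) l z hz) (n l) (hn l)
  rw [hder, ← htdec, Function.update_eq_self] at hsch
  refine hsch.trans ?_
  have h1 : (M.factorial : ℝ) ≤ L.factorial := by exact_mod_cast Nat.factorial_le hML
  have h2 : (2 * ((N : ℝ) + 1) / ρ) ^ (N * M) ≤ (2 * ((N : ℝ) + 1) / ρ) ^ (N' * L) := by
    apply pow_le_pow_of_le_one
    · positivity
    · rw [div_le_one hρ0]; exact hρ
    · rw [hN, mul_comm (Fintype.card ι), mul_assoc]
      exact Nat.mul_le_mul_left _ hl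
  gcongr

end bounds

set_option maxHeartbeats 1000000 in
/-- The numerical contradiction. -/
lemma numeric (m h N' N d : ℕ) (hm : 1 ≤ m) (H CB c : ℝ) (hH : 1 ≤ H) (hCB : 1 ≤ CB) (hc : 1 ≤ c)
    (hdH : (d : ℝ) ≤ H)
    (hN' : N' = (m ^ 2 + m + 2) + (m + 1) + h * (m ^ 2 + m) + 1) (hN : N = m * N') :
    ∃ s : ℕ, 1 ≤ s ∧ ∀ r L : ℕ, s ≤ r → r ^ (m + 1) ≤ L → L < (r + 1) ^ (m + 1) →
      ∀ (G W Z P Hs GV S qn : ℝ),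
      qn = ((2 * s ^ m * (N * s ^ m) ^ m : ℕ) : ℝ) →
      G = m * ((N * s ^ m : ℕ) : ℝ) * H + (2 * s ^ m : ℕ) →
      W = m * N * H →
      Z = H ^ (m * m * ((N * s ^ m) * N)) →
      P = c * qn * (qn * (G ^ (m * s ^ (m + 1)) * 1 * W ^ (2 * s ^ m) * Z)) →
      Hs = qn * (G ^ L * P * W ^ (2 * s ^ m) * Z) →
      GV = m * (m * ((N * s ^ m : ℕ) : ℝ) * H) * H + H * (2 * s ^ m : ℕ) →
      S = qn * (GV ^ L * P * (W + r * H) ^ (2 * s ^ m) *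
        Real.exp (m * (m * ((N * s ^ m : ℕ) : ℝ) * H * (m * N * H + r * H)))) →
      2 * ((N : ℝ) + 1) ≤ r ∧ 1 ≤ Hs ∧ 1 ≤ G ∧ 1 ≤ GV ∧ 1 ≤ W ∧ 0 ≤ P ∧
      (d : ℝ) ^ (m * m * ((N * s ^ m) * N)) *
        (CB ^ L * ((L.factorial : ℝ) * ((2 * ((N : ℝ) + 1) / r) ^ (N' * L) * S))) * Hs ^ h < 1 := by
  obtain ⟨Cz, hCz⟩ : ∃ x : ℝ, x = H ^ (m * m * (N * N)) := ⟨_, rfl⟩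
  obtain ⟨Wc, hWc⟩ : ∃ x : ℝ, x = m * N * H := ⟨_, rfl⟩
  obtain ⟨Cg, hCg⟩ : ∃ x : ℝ, x = m * N * H + 2 := ⟨_, rfl⟩
  obtain ⟨Cq, hCq⟩ : ∃ x : ℝ, x = 2 * (2 ^ m * N) ^ m * 2 ^ m := ⟨_, rfl⟩
  obtain ⟨Cp, hCp⟩ : ∃ x : ℝ, x = c * Cq * (Cq * (Cg ^ m * 1 * Wc ^ 2 * Cz)) := ⟨_, rfl⟩
  obtain ⟨Ch, hCh⟩ : ∃ x : ℝ, x = Cq * (Cg * Cp * Wc ^ 2 * Cz) := ⟨_, rfl⟩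
  obtain ⟨Cv, hCv⟩ : ∃ x : ℝ, x = H * (m * m * N * H + 2) := ⟨_, rfl⟩
  obtain ⟨κ, hκ⟩ : ∃ x : ℝ, x = m * (m * N * H * (m * N * H + H)) := ⟨_, rfl⟩
  obtain ⟨Cs, hCs⟩ : ∃ x : ℝ, x = Cq * (Cv * Cp * (Wc + H) ^ 2 * Real.exp κ) := ⟨_, rfl⟩
  obtain ⟨Ct, hCt⟩ : ∃ x : ℝ, x = Cz * (CB * (2 ^ (m + 1) * ((2 * ((N : ℝ) + 1)) ^ N' * Cs))) * Ch ^ h := ⟨_, rfl⟩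
  have hN'1 : 1 ≤ N' := by omega
  have hN1 : 1 ≤ N := by rw [hN]; exact Nat.mul_pos hm hN'1
  have hNr : (1 : ℝ) ≤ N := by exact_mod_cast hN1
  have hmr : (1 : ℝ) ≤ m := by exact_mod_cast hm
  have hmN : (1 : ℝ) ≤ m * N := one_le_mul_of_one_le_of_one_le hmr hNr
  have hW1 : 1 ≤ Wc := hWc ▸ one_le_mul_of_one_le_of_one_le hmN hH
  obtain ⟨s, hs⟩ := exists_nat_gt (max Ct (2 * ((N : ℝ) + 1)))
  have hs1 : Ct < s := (le_max_left _ _).trans_lt hs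
  have hs2 : 2 * ((N : ℝ) + 1) < s := (le_max_right _ _).trans_lt hs
  have hs3 : (1 : ℝ) ≤ s := by linarith
  have hs3' : 1 ≤ s := by exact_mod_cast hs3
  refine ⟨s, hs3', ?_⟩
  intro r L hsr hrL hLr G W Z P Hs GV S qn hqn hG hW hZ hP hHs hGV hS
  have hsr' : (s : ℝ) ≤ r := by exact_mod_cast hsr
  have hr1 : (1 : ℝ) ≤ r := hs3.trans hsr'
  have hr1' : 1 ≤ r := hs3'.trans hsr
  have hL1 : 1 ≤ L := (Nat.one_le_pow _ _ hr1').trans hrL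
  have hsm : s ^ m ≤ L := by
    calc s ^ m ≤ r ^ m := Nat.pow_le_pow_left hsr m
      _ ≤ r ^ (m + 1) := Nat.pow_le_pow_right hr1' (by omega)
      _ ≤ L := hrL
  have hsT : s ^ (m + 1) ≤ L := (Nat.pow_le_pow_left hsr _).trans hrL
  have hs1m : 1 ≤ s ^ m := Nat.one_le_pow _ _ hs3'
  have hs1mr : (1 : ℝ) ≤ (s : ℝ) ^ m := one_le_pow₀ hs3
  have hsrm : (s : ℝ) ^ m ≤ (r : ℝ) ^ m := by gcongr
  have hrm1 : (1 : ℝ) ≤ (r : ℝ) ^ m := one_le_pow₀ hr1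
  have hrLr : (r : ℝ) ^ (m + 1) ≤ L := by exact_mod_cast hrL
  have mulL : ∀ a b x y : ℝ, 0 ≤ b → 0 ≤ x → a ≤ x ^ L → b ≤ y ^ L → a * b ≤ (x * y) ^ L := by
    intro a b x y hb hx h1 h2
    rw [mul_pow]
    exact mul_le_mul h1 h2 hb (by positivity)
  have oneL : ∀ a : ℝ, 1 ≤ a → a ≤ a ^ L := fun a ha => le_self_pow₀ ha (by omega)
  have expL : ∀ (a : ℝ) (e k : ℕ), 1 ≤ a → e ≤ k * L → a ^ e ≤ (a ^ k) ^ L := by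
    intro a e k ha he
    rw [← pow_mul]
    exact pow_le_pow_right₀ ha he
  -- individual bounds
  have bZ1 : 1 ≤ Z := by rw [hZ]; exact one_le_pow₀ hH
  have bZ : Z ≤ Cz ^ L := by
    rw [hZ, hCz]
    apply expL _ _ _ hH
    calc m * m * (N * s ^ m * N) = m * m * (N * N) * s ^ m := by ring
      _ ≤ _ := Nat.mul_le_mul_left _ hsm
  have bW1 : 1 ≤ W := by rw [hW, ← hWc]; exact hW1
  have bW : W ^ (2 * s ^ m) ≤ (Wc ^ 2) ^ L := by
    rw [hW, ← hWc]; exact expL _ _ _ hW1 (Nat.mul_le_mul_left _ hsm)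
  have bWW : 1 ≤ W ^ (2 * s ^ m) := one_le_pow₀ bW1
  have bG1 : 1 ≤ G := by
    rw [hG]; push_cast
    have : 0 ≤ (m : ℝ) * (N * (s : ℝ) ^ m) * H := by positivity
    linarith
  have bG : G ≤ Cg * r ^ m := by
    rw [hG, hCg]; push_cast
    calc (m : ℝ) * (N * (s : ℝ) ^ m) * H + 2 * (s : ℝ) ^ m = (m * N * H + 2) * (s : ℝ) ^ m := by ring
      _ ≤ _ := by gcongr
  have bGL : G ^ L ≤ (Cg * r ^ m) ^ L := pow_le_pow_left₀ (by linarith) bG L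
  have bGT : G ^ (m * s ^ (m + 1)) ≤ (Cg ^ m * (r : ℝ) ^ (m * m)) ^ L := by
    calc G ^ (m * s ^ (m + 1)) ≤ (G ^ m) ^ L := expL _ _ _ bG1 (Nat.mul_le_mul_left _ hsT)
      _ ≤ ((Cg * r ^ m) ^ m) ^ L := by gcongr
      _ = _ := by rw [mul_pow, ← pow_mul]
  have bq1 : 1 ≤ qn := by
    rw [hqn]
    have : 1 ≤ 2 * s ^ m * (N * s ^ m) ^ m := by
      have h1 : 1 ≤ (N * s ^ m) ^ m := Nat.one_le_pow _ _ (Nat.mul_pos hN1 hs1m)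
      exact Nat.mul_pos (Nat.mul_pos two_pos hs1m) h1
    exact Nat.one_le_cast.2 this
  have bq : qn ≤ Cq ^ L := by
    rw [hqn, hCq]; push_cast
    have h1 : (s : ℝ) ^ m ≤ (2 ^ m) ^ L := by
      have h2 : (s : ℝ) ≤ 2 ^ L := by
        have : s < 2 ^ s := Nat.lt_two_pow_self
        have h3 : s ≤ L := by
          calc s ≤ s ^ (m+1) := Nat.le_self_pow (by omega) s
            _ ≤ L := hsT
        have h4 : 2 ^ s ≤ 2 ^ L := Nat.pow_le_pow_right (by norm_num) h3
        exact_mod_cast (this.le.trans h4)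
      calc (s : ℝ) ^ m ≤ (2 ^ L) ^ m := by gcongr
        _ = _ := pow_right_comm _ _ _
    have h5 : (N * (s : ℝ) ^ m) ^ m ≤ ((2 ^ m * N) ^ m) ^ L := by
      calc (N * (s : ℝ) ^ m) ^ m ≤ ((2 ^ m * N) ^ L) ^ m := by
            gcongr
            rw [mul_comm]
            exact mulL _ _ _ _ (by positivity) (by positivity) h1 (oneL _ hNr)
        _ = _ := pow_right_comm _ _ _
    have h6 := mulL _ _ _ _ (by positivity) (by positivity) (mulL 2 _ 2 _ (by positivity) (by norm_num)
      (oneL 2 (by norm_num)) h5) h1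
    calc 2 * (s : ℝ) ^ m * (N * (s : ℝ) ^ m) ^ m = 2 * (N * (s : ℝ) ^ m) ^ m * (s : ℝ) ^ m := by ring
      _ ≤ _ := h6
  have hCz0 : 0 < Cz := by rw [hCz]; positivity
  have hCg0 : 0 < Cg := by rw [hCg]; positivity
  have hCq0 : 0 < Cq := by rw [hCq]; positivity
  have hCp0 : 0 < Cp := by rw [hCp]; positivity
  have hCh0 : 0 < Ch := by rw [hCh]; positivity
  have hCv0 : 0 < Cv := by rw [hCv]; positivity
  have hCs0 : 0 < Cs := by rw [hCs]; positivity
  have bGT1 : 1 ≤ G ^ (m * s ^ (m + 1)) := one_le_pow₀ bG1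
  have bGL1 : 1 ≤ G ^ L := one_le_pow₀ bG1
  have bP1 : 1 ≤ P := by
    rw [hP, mul_one]
    exact one_le_mul_of_one_le_of_one_le (one_le_mul_of_one_le_of_one_le hc bq1)
      (one_le_mul_of_one_le_of_one_le bq1 (one_le_mul_of_one_le_of_one_le
        (one_le_mul_of_one_le_of_one_le bGT1 bWW) bZ1))
  have bP : P ≤ (Cp * (r : ℝ) ^ (m * m)) ^ L := by
    have h1 := mulL _ _ _ _ (by positivity) (by positivity)
      (mulL _ _ _ _ (by positivity) (by positivity) (oneL c hc) bq)
      (mulL _ _ _ _ (by positivity) (by positivity) bq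
        (mulL _ _ _ _ (by positivity) (by positivity)
          (mulL _ _ _ _ (by positivity) (by positivity) bGT bW) bZ))
    rw [hP, mul_one]
    refine h1.trans_eq ?_
    rw [hCp]; congr 1; ring
  have bHs1 : 1 ≤ Hs := by
    rw [hHs]
    exact one_le_mul_of_one_le_of_one_le bq1 (one_le_mul_of_one_le_of_one_le
        (one_le_mul_of_one_le_of_one_le (one_le_mul_of_one_le_of_one_le bGL1 bP1) bWW) bZ1)
  have bHs : Hs ≤ (Ch * (r : ℝ) ^ (m ^ 2 + m)) ^ L := by
    have h1 := mulL _ _ _ _ (by positivity) (by positivity) bq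
        (mulL _ _ _ _ (by positivity) (by positivity)
          (mulL _ _ _ _ (by positivity) (by positivity)
            (mulL _ _ _ _ (by positivity) (by positivity) bGL bP) bW) bZ)
    rw [hHs]
    refine h1.trans_eq ?_
    rw [hCh]; congr 1; ring
  have bHsh : Hs ^ h ≤ (Ch ^ h * (r : ℝ) ^ (h * (m ^ 2 + m))) ^ L := by
    calc Hs ^ h ≤ ((Ch * (r : ℝ) ^ (m ^ 2 + m)) ^ L) ^ h := by gcongr
      _ = _ := by rw [← pow_mul, mul_comm L h, pow_mul, mul_pow, ← pow_mul, mul_comm h]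
  have bGV1 : 1 ≤ GV := by
    rw [hGV]; push_cast
    have h1 : 0 ≤ (m : ℝ) * (m * (N * (s : ℝ) ^ m) * H) * H := by positivity
    have h2 : 1 ≤ H * (2 * (s : ℝ) ^ m) :=
      one_le_mul_of_one_le_of_one_le hH (by linarith only [hs1mr])
    linarith only [h1, h2]
  have bGV : GV ≤ Cv * r ^ m := by
    rw [hGV, hCv]; push_cast
    calc (m : ℝ) * (m * (N * (s : ℝ) ^ m) * H) * H + H * (2 * (s : ℝ) ^ m)
        = H * (m * m * N * H + 2) * (s : ℝ) ^ m := by ring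
      _ ≤ _ := by gcongr
  have bGVL : GV ^ L ≤ (Cv * r ^ m) ^ L := pow_le_pow_left₀ (by linarith) bGV L
  have bWr : (W + r * H) ^ (2 * s ^ m) ≤ (((Wc + H) * r) ^ 2) ^ L := by
    have h1 : W + r * H ≤ (Wc + H) * r := by
      rw [hW, ← hWc]
      have h3 := le_mul_of_one_le_right (zero_le_one.trans hW1) hr1
      rw [add_mul, mul_comm H]
      linarith only [h3]
    have h0 : 0 ≤ (r : ℝ) * H := by positivity
    have h2 : 1 ≤ W + r * H := by linarith only [h0, bW1]
    calc (W + r * H) ^ (2 * s ^ m) ≤ ((W + r * H) ^ 2) ^ L :=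
          expL _ _ _ h2 (Nat.mul_le_mul_left _ hsm)
      _ ≤ _ := by gcongr
  have hκ0 : 0 ≤ κ := by rw [hκ]; positivity
  have bexp : Real.exp (m * (m * ((N * s ^ m : ℕ) : ℝ) * H * (m * N * H + r * H)))
      ≤ (Real.exp κ) ^ L := by
    rw [← Real.exp_nat_mul]
    apply Real.exp_le_exp.2
    push_cast
    calc (m : ℝ) * (m * (N * (s : ℝ) ^ m) * H * (m * N * H + r * H))
        ≤ m * (m * (N * (r : ℝ) ^ m) * H * ((m * N * H + H) * r)) := by
          gcongr
          have h0 : (0:ℝ) ≤ m * N * H := by positivity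
          have h3 := le_mul_of_one_le_right h0 hr1
          rw [add_mul, mul_comm H]
          linarith only [h3]
      _ = κ * (r : ℝ) ^ (m + 1) := by rw [hκ, pow_succ]; ring
      _ ≤ κ * L := by gcongr
      _ = L * κ := by ring
  have hWrH : 0 ≤ W + r * H := by positivity
  have bS : S ≤ (Cs * (r : ℝ) ^ (m ^ 2 + m + 2)) ^ L := by
    have h1 := mulL _ _ _ _ (by positivity) (by positivity) bq
        (mulL _ _ _ _ (by positivity) (by positivity)
          (mulL _ _ _ _ (by positivity) (by positivity)
            (mulL _ _ _ _ (by positivity) (by positivity) bGVL bP) bWr) bexp)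
    rw [hS]
    refine h1.trans_eq ?_
    rw [hCs]; congr 1; ring
  have hS0 : 0 ≤ S := by rw [hS]; positivity
  have bd : (d : ℝ) ^ (m * m * ((N * s ^ m) * N)) ≤ Cz ^ L := by
    refine le_trans ?_ bZ
    rw [hZ]
    gcongr
  have bfac : (L.factorial : ℝ) ≤ (2 ^ (m + 1) * (r : ℝ) ^ (m + 1)) ^ L := by
    have h1 : (L.factorial : ℝ) ≤ (L : ℝ) ^ L := by exact_mod_cast Nat.factorial_le_pow L
    refine h1.trans ?_
    gcongr
    have h2 : (L : ℝ) ≤ ((r : ℝ) + 1) ^ (m + 1) := by exact_mod_cast hLr.le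
    refine h2.trans ?_
    rw [← mul_pow]
    gcongr
    linarith
  have bgain : (2 * ((N : ℝ) + 1) / r) ^ (N' * L) ≤
      ((2 * ((N : ℝ) + 1)) ^ N' / (r : ℝ) ^ N') ^ L := by
    rw [pow_mul, div_pow]
  refine ⟨by linarith, bHs1, bG1, bGV1, bW1, by linarith, ?_⟩
  have hfin := mulL _ _ _ _ (by positivity) (by positivity)
    (mulL _ _ _ _ (by positivity) (by positivity) bd
      (mulL _ _ _ _ (by positivity) (by positivity) (pow_le_pow_left₀ (by linarith) (le_refl CB) L)
        (mulL _ _ _ _ (by positivity) (by positivity) bfac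
          (mulL _ _ _ _ (by positivity) (by positivity) bgain bS)))) bHsh
  refine hfin.trans_lt ?_
  have heq : Cz * (CB * (2 ^ (m + 1) * (r : ℝ) ^ (m + 1) * ((2 * ((N : ℝ) + 1)) ^ N' / (r : ℝ) ^ N' *
      (Cs * (r : ℝ) ^ (m ^ 2 + m + 2))))) * (Ch ^ h * (r : ℝ) ^ (h * (m ^ 2 + m))) = Ct / r := by
    have hr0 : (r : ℝ) ≠ 0 := by linarith
    have h1 : (r : ℝ) ^ N' = (r : ℝ) ^ (m ^ 2 + m + 2) * (r : ℝ) ^ (m + 1) *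
        (r : ℝ) ^ (h * (m ^ 2 + m)) * r := by
      rw [← pow_add, ← pow_add, ← pow_succ, hN']
    rw [hCt, div_mul_eq_mul_div, h1]
    have e1 : (r : ℝ) ^ (m ^ 2 + m + 2) ≠ 0 := pow_ne_zero _ hr0
    have e2 : (r : ℝ) ^ (m + 1) ≠ 0 := pow_ne_zero _ hr0
    have e3 : (r : ℝ) ^ (h * (m ^ 2 + m)) ≠ 0 := pow_ne_zero _ hr0
    generalize (r : ℝ) ^ (m ^ 2 + m + 2) = x1 at *
    generalize (r : ℝ) ^ (m + 1) = x2 at *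
    generalize (r : ℝ) ^ (h * (m ^ 2 + m)) = x3 at *
    generalize (2 * ((N : ℝ) + 1)) ^ N' = x4 at *
    field_simp
  rw [heq]
  apply pow_lt_one₀
  · have : 0 ≤ Ct := by rw [hCt]; positivity
    positivity
  · rw [div_lt_one (by linarith)]
    linarith
  · omega

section data
variable {ι : Type} [Fintype ι] [DecidableEq ι] {R : Type*} [CommRing R]

/-- Frequencies. -/
def xhD (X : ι → ι → R) (M : ℕ) : (ι → Fin M) → ι → R := fun i j => ∑ k, ((i k : ℕ) : R) * X k j

/-- Special coordinate of the lattice points. -/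
def woD (vo : ι → R) (n : ι → ℕ) : R := ∑ l, (n l : R) * vo l

/-- Values of the exponentials at lattice points, with denominators cleared. -/
def ThD (η : ι → ι → R) (d M N : ℕ) (n : ι → ℕ) (i : ι → Fin M) : R :=
  ∏ k, ∏ l, (η k l ^ ((i k : ℕ) * n l) * (d : R) ^ (M * N - (i k : ℕ) * n l))

/-- Values of derivatives of the auxiliary function at lattice points. -/
noncomputable def valD (X : ι → ι → R) (vo : ι → R) (η : ι → ι → R) (d M N : ℕ) (o : ι)
    (q : (ι → Fin M) → R[X]) (t : Multiset ι) (n : ι → ℕ) : R :=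
  val q (t.map (symE (xhD X M) o)).prod (woD vo n) (ThD η d M N n)

lemma valD_map {R' : Type*} [CommRing R'] (f : R →+* R') (X : ι → ι → R) (vo : ι → R)
    (η : ι → ι → R) (d M N : ℕ) (o : ι)
    (q : (ι → Fin M) → R[X]) (t : Multiset ι) (n : ι → ℕ) :
    f (valD X vo η d M N o q t n) = valD (fun k j => f (X k j)) (fun l => f (vo l))
      (fun k l => f (η k l)) d M N o (fun i => (q i).map f) t n := by
  rw [valD, val_map, valD]
  have h1 : (fun i j => f (xhD X M i j)) = xhD (fun k j => f (X k j)) M := by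
    funext i j; simp [xhD]
  have h2 : f (woD vo n) = woD (fun l => f (vo l)) n := by simp [woD]
  have h3 : (fun i => f (ThD η d M N n i)) = ThD (fun k l => f (η k l)) d M N n := by
    funext i; simp [ThD]
  have h4 : (fun i => ((t.map (symE (xhD X M) o)).prod i).map f) =
      (t.map (symE (xhD (fun k j => f (X k j)) M) o)).prod := by
    funext i; rw [symE_multiset_map, h1]
  rw [h2, h3, h4]

lemma valD_single (X : ι → ι → R) (vo : ι → R) (η : ι → ι → R) (d M N A : ℕ) (o : ι)
    (ξ : (ι → Fin M) × Fin A → R) (t : Multiset ι) (n : ι → ℕ) :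
    valD X vo η d M N o (fun i => ∑ a : Fin A, C (ξ (i, a)) * Polynomial.X ^ (a : ℕ)) t n =
      ∑ ia : (ι → Fin M) × Fin A,
        valD X vo η d M N o (Pi.single ia.1 (Polynomial.X ^ (ia.2 : ℕ))) t n * ξ ia := by
  have h1 : ∀ (i : ι → Fin M) (p : R[X]), valD X vo η d M N o (Pi.single i p) t n =
      (act ((t.map (symE (xhD X M) o)).prod i) p).eval (woD vo n) * ThD η d M N n i := by
    intro i p
    rw [valD, val, Finset.sum_eq_single i]
    · rw [Pi.single_eq_same]
    · intro b _ hb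
      rw [Pi.single_eq_of_ne hb]
      simp [act]
    · simp
  rw [Fintype.sum_prod_type, valD, val]
  refine Finset.sum_congr rfl fun i _ => ?_
  rw [act_sum_right, eval_finsetSum, Finset.sum_mul]
  refine Finset.sum_congr rfl fun a _ => ?_
  rw [h1, act_C_mul_right, eval_C_mul]
  ring

lemma xhD_bound (X : ι → ι → ℂ) (M : ℕ) (H : ℝ) (hX : ∀ k j, ‖X k j‖ ≤ H)
    (i : ι → Fin M) (j : ι) : ‖xhD X M i j‖ ≤ Fintype.card ι * (M : ℝ) * H := by
  rw [xhD]
  have : ∀ k ∈ Finset.univ, ‖((i k : ℕ) : ℂ) * X k j‖ ≤ M * H := by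
    intro k _
    rw [norm_mul, Complex.norm_natCast]
    have : ((i k : ℕ) : ℝ) ≤ M := by exact_mod_cast (i k).2.le
    exact mul_le_mul this (hX k j) (norm_nonneg _) (Nat.cast_nonneg _)
  refine (norm_sum_le_of_le _ this).trans_eq ?_
  simp [mul_assoc]

lemma woD_bound (vo : ι → ℂ) (N : ℕ) (H : ℝ) (hv : ∀ l, ‖vo l‖ ≤ H)
    (n : ι → ℕ) (hn : ∀ l, n l < N) : ‖woD vo n‖ ≤ Fintype.card ι * (N : ℝ) * H := by
  rw [woD]
  have : ∀ l ∈ Finset.univ, ‖(n l : ℂ) * vo l‖ ≤ N * H := by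
    intro k _
    rw [norm_mul, Complex.norm_natCast]
    have : ((n k : ℕ) : ℝ) ≤ N := by exact_mod_cast (hn k).le
    exact mul_le_mul this (hv k) (norm_nonneg _) (Nat.cast_nonneg _)
  refine (norm_sum_le_of_le _ this).trans_eq ?_
  simp [mul_assoc]

lemma ThD_bound (η : ι → ι → ℂ) (d M N : ℕ) (H : ℝ) (hη : ∀ k l, ‖η k l‖ ≤ H) (hd : (d : ℝ) ≤ H)
    (n : ι → ℕ) (hn : ∀ l, n l < N) (i : ι → Fin M) :
    ‖ThD η d M N n i‖ ≤ H ^ (Fintype.card ι * Fintype.card ι * (M * N)) := by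
  have hH : 0 ≤ H := (Nat.cast_nonneg d).trans hd
  have key : ∀ k l, ‖η k l ^ ((i k : ℕ) * n l) * (d : ℂ) ^ (M * N - (i k : ℕ) * n l)‖
      ≤ H ^ (M * N) := by
    intro k l
    rw [norm_mul, norm_pow, norm_pow, Complex.norm_natCast]
    have h1 : (i k : ℕ) * n l ≤ M * N := Nat.mul_le_mul (i k).2.le (hn l).le
    calc _ ≤ H ^ ((i k : ℕ) * n l) * H ^ (M * N - (i k : ℕ) * n l) := by
          gcongr
          exact hη k l
      _ = _ := by rw [← pow_add, Nat.add_sub_cancel' h1]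
  rw [ThD, norm_prod]
  calc _ ≤ ∏ k : ι, ∏ l : ι, H ^ (M * N) := by
        refine Finset.prod_le_prod (fun _ _ => norm_nonneg _) fun k _ => ?_
        rw [norm_prod]
        exact Finset.prod_le_prod (fun _ _ => norm_nonneg _) fun l _ => key k l
    _ = _ := by
        simp only [Finset.prod_const, Finset.card_univ, ← pow_mul]
        congr 1; ring

lemma valD_bound (X : ι → ι → ℂ) (vo : ι → ℂ) (η : ι → ι → ℂ) (d M N A : ℕ) (o : ι) (H P : ℝ)
    (hH : 0 ≤ H) (hP : 0 ≤ P)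
    (hX : ∀ k j, ‖X k j‖ ≤ H) (hv : ∀ l, ‖vo l‖ ≤ H) (hη : ∀ k l, ‖η k l‖ ≤ H) (hd : (d : ℝ) ≤ H)
    (hW1 : 1 ≤ Fintype.card ι * (N : ℝ) * H)
    (q : (ι → Fin M) → ℂ[X]) (hq : ∀ i, (q i).degree < A) (hqP : ∀ i k, ‖(q i).coeff k‖ ≤ P)
    (t : Multiset ι) (n : ι → ℕ) (hn : ∀ l, n l < N) :
    ‖valD X vo η d M N o q t n‖ ≤ ((A * M ^ Fintype.card ι : ℕ) : ℝ) *
      ((Fintype.card ι * (M : ℝ) * H + A) ^ t.card * P * (Fintype.card ι * (N : ℝ) * H) ^ A *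
        H ^ (Fintype.card ι * Fintype.card ι * (M * N))) := by
  have hG : 0 ≤ Fintype.card ι * (M : ℝ) * H + A := by positivity
  refine (val_bound A q _ _ _ ((Fintype.card ι * (M : ℝ) * H + A) ^ t.card) P
    (Fintype.card ι * (N : ℝ) * H) (H ^ (Fintype.card ι * Fintype.card ι * (M * N)))
    (by positivity) hP hW1 (fun i => ?_) hq hqP (woD_bound vo N H hv n hn)
    (fun i => ThD_bound η d M N H hη hd n hn i)).trans_eq ?_
  · exact OpBd.multiset hG _ i (fun j => (OpBd.symE _ o j i).mono
      (by gcongr; exact xhD_bound X M H hX i j)) t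
  · congr 2
    rw [mul_comm A]
    simp

lemma valD_eq_Phi (X : ι → ι → ℂ) (vo : ι → ℂ) (η : ι → ι → ℂ) (d M N : ℕ) (o : ι)
    (v : ι → ι → ℂ) (hvo : ∀ l, v l o = vo l)
    (hη : ∀ k l, η k l = d * Complex.exp (∑ j, X k j * v l j))
    (q : (ι → Fin M) → ℂ[X]) (t : Multiset ι) (n : ι → ℕ) (hn : ∀ l, n l < N) :
    valD X vo η d M N o q t n = (d : ℂ) ^ (Fintype.card ι * Fintype.card ι * (M * N)) *
      Phi (xhD X M) o q (t.map (symE (xhD X M) o)).prod (pt v n) := by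
  rw [valD, Phi, ← val_mul_right]
  have h1 : woD vo n = pt v n o := by simp [woD, pt, hvo]
  rw [h1]
  congr 1
  funext i
  have key : ∀ k l, η k l ^ ((i k : ℕ) * n l) * (d : ℂ) ^ (M * N - (i k : ℕ) * n l)
      = (d : ℂ) ^ (M * N) * Complex.exp (((i k : ℕ) : ℂ) * (n l : ℂ) * (∑ j, X k j * v l j)) := by
    intro k l
    have h1 : (i k : ℕ) * n l ≤ M * N := Nat.mul_le_mul (i k).2.le (hn l).le
    rw [hη, mul_pow, ← Complex.exp_nat_mul, mul_right_comm, ← pow_add, Nat.add_sub_cancel' h1]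
    push_cast; rfl
  simp only [ThD, key, Finset.prod_mul_distrib, Finset.prod_const, Finset.card_univ,
    ← Complex.exp_sum, ← pow_mul]
  congr 1
  · congr 1; ring
  · congr 1
    simp only [xhD, pt, Finset.mul_sum, Finset.sum_mul]
    rw [Finset.sum_comm' (t' := Finset.univ) (s' := fun _ => Finset.univ) (by simp)]
    rw [Finset.sum_comm' (s := (Finset.univ : Finset ι)) (t' := Finset.univ)
      (s' := fun _ => Finset.univ) (t := fun _ => Finset.univ)
      (f := fun j x => ∑ k, ((i k : ℕ) : ℂ) * X k j * ((n x : ℂ) * v x j)) (by simp)]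
    refine Finset.sum_congr rfl fun l _ => ?_
    rw [Finset.sum_comm]
    refine Finset.sum_congr rfl fun j _ => Finset.sum_congr rfl fun k _ => ?_
    ring

end data

lemma siegel_app (K : Type*) [Field K] [NumberField K] : ∃ c : ℝ, 1 ≤ c ∧
    ∀ (E J : Type) [Fintype E] [Fintype J] [DecidableEq E] [DecidableEq J] (p : ℕ), 0 < p →
    Fintype.card E = p → Fintype.card J = 2 * p → ∀ (a : Matrix E J (𝓞 K)), a ≠ 0 → ∀ (b : ℝ),
    (∀ (f : K →+* ℂ) e j, ‖f (a e j)‖ ≤ b) → ∃ ξ : J → 𝓞 K, ξ ≠ 0 ∧ a.mulVec ξ = 0 ∧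
    ∀ (f : K →+* ℂ) l, ‖f (ξ l)‖ ≤ c * ((2 * p : ℕ) : ℝ) * b := by
  classical
  have key : ∃ c₁ : ℝ, ∀ (E J : Type) [Fintype E] [Fintype J] [DecidableEq E] [DecidableEq J] (p : ℕ), 0 < p →
    Fintype.card E = p → Fintype.card J = 2 * p → ∀ (a : Matrix E J (𝓞 K)), a ≠ 0 → ∀ (b : ℝ),
    (∀ e j, house (algebraMap (𝓞 K) K (a e j)) ≤ b) → ∃ ξ : J → 𝓞 K, ξ ≠ 0 ∧ a.mulVec ξ = 0 ∧
    ∀ l, house (ξ l).1 ≤ c₁ * ((c₁ * (2 * p : ℕ) * b) ^ ((p:ℝ) / ((2 * p : ℕ) - p))) := by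
    exact Exists.intro _ (fun E J _ _ _ _ p hp hE hJ a ha b hb =>
      house.exists_ne_zero_int_vec_house_le K a ha hp (by omega) hJ hb hE)
  obtain ⟨c₁, hc⟩ := key
  refine ⟨max 1 (c₁ * c₁), le_max_left _ _, ?_⟩
  intro E J _ _ _ _ p hp hE hJ a ha b hb
  obtain ⟨ξ, h1, h2, h3⟩ := hc E J p hp hE hJ a ha b (by
    intro e j
    rw [house_eq_sup']
    have : ∀ f : K →+* ℂ, ‖f (a e j)‖₊ ≤ b.toNNReal := fun f => by
      rw [← NNReal.coe_le_coe, coe_nnnorm]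
      exact (hb f e j).trans (Real.le_coe_toNNReal b)
    have hb0 : 0 ≤ b := (norm_nonneg _).trans (hb (Classical.arbitrary _) e j)
    have h4 := Finset.sup'_le Finset.univ_nonempty (fun φ : K →+* ℂ ↦ ‖φ (a e j)‖₊) (fun f _ => this f)
    rw [← Real.coe_toNNReal b hb0]
    exact_mod_cast h4)
  refine ⟨ξ, h1, h2, fun f l => ?_⟩
  refine (norm_embedding_le_house _ f).trans ((h3 l).trans ?_)
  have hb0 : 0 ≤ b := by
    have e : Nonempty E := Fintype.card_pos_iff.1 (by omega)
    exact (norm_nonneg _).trans (hb (Classical.arbitrary _) e.some l)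
  have h5 : (p:ℝ) / ((2 * p : ℕ) - p) = 1 := by
    have : (p:ℝ) ≠ 0 := by positivity
    push_cast
    field_simp
    ring
  rw [h5, Real.rpow_one]
  have : 0 ≤ ((2 * p : ℕ) : ℝ) * b := by positivity
  calc _ = (c₁ * c₁) * (((2 * p : ℕ) : ℝ) * b) := by ring
    _ ≤ max 1 (c₁ * c₁) * (((2 * p : ℕ) : ℝ) * b) := by gcongr; exact le_max_right _ _
    _ = _ := by ring

lemma valD_single1 {ι : Type} [Fintype ι] [DecidableEq ι] {R : Type*} [CommRing R]
    (X : ι → ι → R) (vo : ι → R) (η : ι → ι → R) (d M N : ℕ) (o : ι)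
    (t : Multiset ι) (n : ι → ℕ) (i : ι → Fin M) (p : R[X]) :
    valD X vo η d M N o (Pi.single i p) t n =
      (act ((t.map (symE (xhD X M) o)).prod i) p).eval (woD vo n) * ThD η d M N n i := by
  rw [valD, val, Finset.sum_eq_single i]
  · rw [Pi.single_eq_same]
  · intro b _ hb
    rw [Pi.single_eq_of_ne hb]
    simp [act]
  · simp

lemma aux_exists (K : Type*) [Field K] [NumberField K] : ∃ c : ℝ, 1 ≤ c ∧
    ∀ {ι : Type} [Fintype ι] [DecidableEq ι] (o : ι) (X : ι → ι → 𝓞 K) (vo : ι → 𝓞 K)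
    (η : ι → ι → 𝓞 K) (d M N A T : ℕ) (H : ℝ), 1 ≤ H → (d : ℝ) ≤ H → 0 < d → 0 < M → 0 < N →
    0 < A → 0 < T →
    (∀ (f : K →+* ℂ) k j, ‖f (algebraMap (𝓞 K) K (X k j))‖ ≤ H) →
    (∀ (f : K →+* ℂ) l, ‖f (algebraMap (𝓞 K) K (vo l))‖ ≤ H) →
    (∀ (f : K →+* ℂ) k l, ‖f (algebraMap (𝓞 K) K (η k l))‖ ≤ H) →
    A * M ^ Fintype.card ι = 2 * (T ^ Fintype.card ι * N ^ Fintype.card ι) →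
    ∃ q : (ι → Fin M) → (𝓞 K)[X], q ≠ 0 ∧ (∀ i, (q i).degree < A) ∧
      (∀ (f : K →+* ℂ) i k, ‖f (algebraMap (𝓞 K) K ((q i).coeff k))‖ ≤
        c * ((A * M ^ Fintype.card ι : ℕ) : ℝ) * (((A * M ^ Fintype.card ι : ℕ) : ℝ) *
      ((Fintype.card ι * (M : ℝ) * H + A) ^ (Fintype.card ι * T) * 1 *
        (Fintype.card ι * (N : ℝ) * H) ^ A *
        H ^ (Fintype.card ι * Fintype.card ι * (M * N))))) ∧
      ∀ t : Multiset ι, t.card < T → ∀ n : ι → ℕ, (∀ l, n l < N) →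
        valD X vo η d M N o q t n = 0 := by
  obtain ⟨c, hc1, hc⟩ := siegel_app K
  refine ⟨c, hc1, ?_⟩
  intro ι _ _ o X vo η d M N A T H hH hdH hd hM hN hA hT hX hvo hη hcard
  classical
  let mset : (ι → Fin T) → Multiset ι := fun τ =>
    Finsupp.toMultiset (Finsupp.equivFunOnFinite.symm (fun j => (τ j : ℕ)))
  have hmcard : ∀ τ, (mset τ).card ≤ Fintype.card ι * T := by
    intro τ
    simp only [mset, Finsupp.card_toMultiset]
    rw [Finsupp.sum_fintype _ _ (by simp)]
    refine (Finset.sum_le_card_nsmul _ _ T fun j _ => ?_).trans_eq (by simp)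
    exact (τ j).2.le
  have hmset : ∀ t : Multiset ι, t.card < T → ∃ τ, mset τ = t := by
    intro t ht
    refine ⟨fun j => ⟨t.count j, (Multiset.count_le_card j t).trans_lt ht⟩, ?_⟩
    ext j
    simp [mset, Finsupp.count_toMultiset]
  have hm1 : 1 ≤ Fintype.card ι := Fintype.card_pos_iff.2 ⟨o⟩
  have hm1r : (1 : ℝ) ≤ Fintype.card ι := by exact_mod_cast hm1
  have hN1r : (1 : ℝ) ≤ N := by exact_mod_cast hN
  have hA1r : (1 : ℝ) ≤ A := by exact_mod_cast hA
  have hW1 : 1 ≤ Fintype.card ι * (N : ℝ) * H :=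
    one_le_mul_of_one_le_of_one_le (one_le_mul_of_one_le_of_one_le hm1r hN1r) hH
  have hG1 : 1 ≤ Fintype.card ι * (M : ℝ) * H + A := by
    have : 0 ≤ Fintype.card ι * (M : ℝ) * H := by positivity
    linarith
  have hmem := hc ((ι → Fin T) × (ι → Fin N)) ((ι → Fin M) × Fin A)
    (T ^ Fintype.card ι * N ^ Fintype.card ι) (by positivity) (by simp)
    (by rw [← hcard]; simp [mul_comm])
    (fun e j => valD X vo η d M N o (Pi.single j.1 (Polynomial.X ^ (j.2 : ℕ))) (mset e.1)
      (fun l => (e.2 l : ℕ))) ?_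
    (((A * M ^ Fintype.card ι : ℕ) : ℝ) *
      ((Fintype.card ι * (M : ℝ) * H + A) ^ (Fintype.card ι * T) * 1 *
        (Fintype.card ι * (N : ℝ) * H) ^ A *
        H ^ (Fintype.card ι * Fintype.card ι * (M * N)))) ?_
  · obtain ⟨ξ, h1, h2, h3⟩ := hmem
    have hco : ∀ i k, (∑ a : Fin A, C (ξ (i, a)) * (Polynomial.X : (𝓞 K)[X]) ^ (a : ℕ)).coeff k
        = if h : k < A then ξ (i, ⟨k, h⟩) else 0 := by
      intro i k
      simp only [finsetSum_coeff, coeff_C_mul, coeff_X_pow]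
      split_ifs with h
      · rw [Finset.sum_eq_single ⟨k, h⟩]
        · simp
        · intro b _ hb
          have : k ≠ b := fun h' => hb (by ext; exact h'.symm)
          simp [this]
        · simp
      · refine Finset.sum_eq_zero fun a _ => ?_
        have : k ≠ a := by have := a.2; omega
        simp [this]
    refine ⟨fun i => ∑ a : Fin A, C (ξ (i, a)) * Polynomial.X ^ (a : ℕ), ?_, ?_, ?_, ?_⟩
    · intro h0
      apply h1
      funext ia
      have := congrArg (fun p => p.coeff ia.2) (congrFun h0 ia.1)
      simp only [hco] at this
      simpa using this
    · intro i
      rw [degree_lt_iff_coeff_zero]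
      intro k hk
      rw [hco, dif_neg (by omega)]
    · intro f i k
      simp only [hco]
      rw [← hcard] at h3
      split_ifs with h
      · exact h3 f _
      · simp only [map_zero, norm_zero]
        positivity
    · intro t ht n hn
      obtain ⟨τ, rfl⟩ := hmset t ht
      rw [valD_single]
      exact congrFun h2 (τ, fun l => ⟨n l, hn l⟩)
  · intro h0
    have := congrFun (congrFun h0 (fun _ => ⟨0, hT⟩, fun _ => ⟨0, hN⟩)) (fun _ => ⟨0, hM⟩, ⟨0, hA⟩)
    have e0 : mset (fun _ => ⟨0, hT⟩) = 0 := by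
      apply Multiset.ext.2; intro a
      simp [mset]
    simp only [e0, valD_single1] at this
    simp only [Multiset.map_zero, Multiset.prod_zero, Pi.one_apply, act_one, ThD] at this
    simp [hd.ne'] at this
  · intro f e j
    have h1 := valD_map (f.comp (algebraMap (𝓞 K) K)) X vo η d M N o
      (Pi.single j.1 (Polynomial.X ^ (j.2 : ℕ))) (mset e.1) (fun l => (e.2 l : ℕ))
    have h2 := valD_bound (fun k j => f.comp (algebraMap (𝓞 K) K) (X k j))
      (fun l => f.comp (algebraMap (𝓞 K) K) (vo l))
      (fun k l => f.comp (algebraMap (𝓞 K) K) (η k l)) d M N A o H 1 (by linarith) zero_le_one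
      (hX f) (hvo f) (hη f) hdH hW1
      (fun i => ((Pi.single j.1 (Polynomial.X ^ (j.2 : ℕ)) : (ι → Fin M) → (𝓞 K)[X]) i).map
        (f.comp (algebraMap (𝓞 K) K))) ?_ ?_ (mset e.1) (fun l => (e.2 l : ℕ)) (fun l => (e.2 l).2)
    · rw [← h1] at h2
      refine h2.trans ?_
      gcongr
      exact hmcard _
    · intro i
      by_cases hi : i = j.1
      · subst hi
        rw [Pi.single_eq_same]
        simp only [Polynomial.map_pow, map_X]
        rw [degree_X_pow]
        exact_mod_cast j.2.2
      · rw [Pi.single_eq_of_ne hi]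
        simp
    · intro i k
      by_cases hi : i = j.1
      · subst hi
        rw [Pi.single_eq_same]
        simp only [Polynomial.map_pow, map_X, coeff_X_pow]
        split_ifs <;> simp
      · rw [Pi.single_eq_of_ne hi]
        simp

lemma house_le_of_forall {K : Type*} [Field K] [NumberField K] (x : K) (b : ℝ)
    (hb : ∀ f : K →+* ℂ, ‖f x‖ ≤ b) : house x ≤ b := by
  rw [house_eq_sup']
  have hb0 : 0 ≤ b := (norm_nonneg _).trans (hb (Classical.arbitrary _))
  have : ∀ f : K →+* ℂ, ‖f x‖₊ ≤ b.toNNReal := fun f => by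
    rw [← NNReal.coe_le_coe, coe_nnnorm]
    exact (hb f).trans (Real.le_coe_toNNReal b)
  have h4 := Finset.sup'_le Finset.univ_nonempty (fun φ : K →+* ℂ ↦ ‖φ x‖₊) (fun f _ => this f)
  rw [← Real.coe_toNNReal b hb0]
  exact_mod_cast h4

lemma liouville {K : Type*} [Field K] [NumberField K] (φ : K →+* ℂ) (x : 𝓞 K) (hx : x ≠ 0) (b : ℝ)
    (hb1 : 1 ≤ b) (hb : ∀ f : K →+* ℂ, ‖f (algebraMap (𝓞 K) K x)‖ ≤ b) :
    1 ≤ ‖φ (algebraMap (𝓞 K) K x)‖ * b ^ Module.finrank ℚ K := by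
  have h1 := norm_norm_le_norm_mul_house_pow (algebraMap (𝓞 K) K x) φ
  have h2 : (1 : ℝ) ≤ ‖Algebra.norm ℚ (algebraMap (𝓞 K) K x)‖ := by
    have h3 : Algebra.norm ℚ (algebraMap (𝓞 K) K x) = ((Algebra.norm ℤ x : ℤ) : ℚ) :=
      (Algebra.coe_norm_int x).symm
    rw [h3]
    have h4 : Algebra.norm ℤ x ≠ 0 := Algebra.norm_ne_zero_iff.2 hx
    have h5 : (1 : ℤ) ≤ |Algebra.norm ℤ x| := Int.one_le_abs h4
    rw [Int.norm_cast_rat, Int.norm_eq_abs]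
    have : ((1 : ℤ) : ℝ) ≤ (|Algebra.norm ℤ x| : ℤ) := by exact_mod_cast h5
    simpa using this
  refine h2.trans (h1.trans ?_)
  have h6 := house_le_of_forall _ b hb
  have h7 := house_nonneg (algebraMap (𝓞 K) K x)
  gcongr
  calc house (algebraMap (𝓞 K) K x) ^ (Module.finrank ℚ K - 1) ≤ b ^ (Module.finrank ℚ K - 1) := by
        gcongr
    _ ≤ _ := pow_le_pow_right₀ hb1 (Nat.sub_le _ _)

lemma xhD_inj {R : Type*} [CommRing R] {ι : Type} [Fintype ι] [DecidableEq ι] (o : ι)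
    (X : ι → ι → R) (M : ℕ) (hind : ∀ x : ι → ℤ, ∑ k, (x k : R) * X k o = 0 → x = 0) :
    Function.Injective fun i : ι → Fin M => xhD X M i o := by
  intro i i' h
  have := hind (fun k => ((i k : ℕ) : ℤ) - ((i' k : ℕ) : ℤ)) (by
    simp only [xhD] at h
    simp [sub_mul, Finset.sum_sub_distrib, h])
  funext k
  have h2 := congrFun this k
  simp only [Pi.zero_apply] at h2
  ext; omega

lemma Phi_bound {ι : Type} [Fintype ι] [DecidableEq ι] (X : ι → ι → ℂ) (M N A : ℕ) (o : ι)
    (v : ι → ι → ℂ) (H P : ℝ) (hH : 1 ≤ H) (hP : 0 ≤ P) (hm : 1 ≤ Fintype.card ι) (hN : 1 ≤ N)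
    (hX : ∀ k j, ‖X k j‖ ≤ H) (hv : ∀ l j, ‖v l j‖ ≤ H)
    (q : (ι → Fin M) → ℂ[X]) (hq : ∀ i, (q i).degree < A) (hqP : ∀ i k, ‖(q i).coeff k‖ ≤ P)
    (r L : ℕ) (GV : ℝ)
    (hGV : GV = Fintype.card ι * (Fintype.card ι * (M : ℝ) * H) * H + H * A) (hGV1 : 1 ≤ GV)
    (t : Multiset ι) (ht : t.card ≤ L) (n : ι → ℕ) (hn : ∀ l, n l < N) (l : ι) (z : ℂ)
    (hz : ‖z‖ = r) :
    ‖Phi (xhD X M) o q (t.map (fun l => symV (xhD X M) o (v l))).prod (pt v n + z • v l)‖ ≤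
      ((A * M ^ Fintype.card ι : ℕ) : ℝ) * (GV ^ L * P *
        (Fintype.card ι * N * H + r * H) ^ A * Real.exp (Fintype.card ι *
          (Fintype.card ι * (M : ℝ) * H * (Fintype.card ι * N * H + r * H)))) := by
  have hwj : ∀ j, ‖(pt v n + z • v l) j‖ ≤ Fintype.card ι * N * H + r * H := by
    intro j
    rw [Pi.add_apply, Pi.smul_apply, smul_eq_mul]
    refine (norm_add_le _ _).trans (add_le_add ?_ ?_)
    · exact woD_bound (fun l => v l j) N H (fun l => hv l j) n hn
    · rw [norm_mul, hz]
      gcongr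
      exact hv l j
  have hm1r : (1 : ℝ) ≤ Fintype.card ι := by exact_mod_cast hm
  have hN1r : (1 : ℝ) ≤ N := by exact_mod_cast hN
  have hW1 : 1 ≤ Fintype.card ι * (N : ℝ) * H :=
    one_le_mul_of_one_le_of_one_le (one_le_mul_of_one_le_of_one_le hm1r hN1r) hH
  have hrH : 0 ≤ (r : ℝ) * H := by positivity
  refine (val_bound A q _ _ _ (GV ^ L) P (Fintype.card ι * N * H + r * H)
    (Real.exp (Fintype.card ι *
          (Fintype.card ι * (M : ℝ) * H * (Fintype.card ι * N * H + r * H))))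
    (by positivity) hP (by linarith) (fun i => ?_) hq hqP (hwj o)
    (fun i => ?_)).trans_eq ?_
  · refine (OpBd.multiset (G := GV) (by linarith) _ i (fun j => (OpBd.symV _ o (v j) i).mono ?_) t).mono
      (pow_le_pow_right₀ hGV1 ht)
    rw [hGV]
    refine add_le_add ?_ ?_
    · have : ∀ k ∈ Finset.univ, ‖xhD X M i k‖ * ‖v j k‖ ≤ (Fintype.card ι * (M : ℝ) * H) * H := by
        intro k _
        exact mul_le_mul (xhD_bound X M H hX i k) (hv j k) (norm_nonneg _) (by positivity)
      refine (Finset.sum_le_sum this).trans_eq ?_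
      simp [mul_assoc]
    · gcongr
      exact hv j o
  · rw [Complex.norm_exp]
    apply Real.exp_le_exp.2
    refine (Complex.re_le_norm _).trans ?_
    have : ∀ j ∈ Finset.univ, ‖xhD X M i j * (pt v n + z • v l) j‖ ≤
        Fintype.card ι * (M : ℝ) * H * (Fintype.card ι * N * H + r * H) := by
      intro j _
      rw [norm_mul]
      exact mul_le_mul (xhD_bound X M H hX i j) (hwj j) (norm_nonneg _) (by positivity)
    refine (norm_sum_le_of_le _ this).trans_eq ?_
    simp
  · congr 2
    rw [mul_comm A]
    simp

lemma exists_root (m L : ℕ) : ∃ r : ℕ, r ^ (m + 1) ≤ L ∧ L < (r + 1) ^ (m + 1) := by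
  classical
  have hex : ∃ k, L < (k + 1) ^ (m + 1) := ⟨L, by
    calc L < L + 1 := Nat.lt_succ_self L
      _ ≤ _ := Nat.le_self_pow (by omega) _⟩
  refine ⟨Nat.find hex, ?_, Nat.find_spec hex⟩
  rcases Nat.eq_zero_or_pos (Nat.find hex) with h | h
  · rw [h]; simp
  · have := Nat.find_min hex (m := Nat.find hex - 1) (by omega)
    rw [Nat.sub_add_cancel h] at this
    omega

theorem core {K : Type*} [Field K] [NumberField K] (φ : K →+* ℂ) {ι : Type} [Fintype ι]
    [DecidableEq ι] (o : ι) (X : ι → ι → 𝓞 K) (vo : ι → 𝓞 K) (η : ι → ι → 𝓞 K) (d : ℕ) (hd : 0 < d)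
    (v B : ι → ι → ℂ) (hvo : ∀ l, v l o = φ (algebraMap (𝓞 K) K (vo l)))
    (hη : ∀ k l, φ (algebraMap (𝓞 K) K (η k l)) =
      d * Complex.exp (∑ j, φ (algebraMap (𝓞 K) K (X k j)) * v l j))
    (hB : ∀ j j', ∑ l, B j l * v l j' = if j = j' then 1 else 0)
    (hind : ∀ x : ι → ℤ, ∑ k, (x k : 𝓞 K) * X k o = 0 → x = 0) : False := by
  classical
  obtain ⟨c, hc1, hc⟩ := aux_exists K
  -- the constant H
  obtain ⟨H, hH1, hdH, hHX, hHvo, hHη, hHv⟩ : ∃ H : ℝ, 1 ≤ H ∧ (d : ℝ) ≤ H ∧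
      (∀ (f : K →+* ℂ) k j, ‖f (algebraMap (𝓞 K) K (X k j))‖ ≤ H) ∧
      (∀ (f : K →+* ℂ) l, ‖f (algebraMap (𝓞 K) K (vo l))‖ ≤ H) ∧
      (∀ (f : K →+* ℂ) k l, ‖f (algebraMap (𝓞 K) K (η k l))‖ ≤ H) ∧ (∀ l j, ‖v l j‖ ≤ H) := by
    let S : Finset ℝ := {1, (d : ℝ)} ∪
      (Finset.univ.image (fun p : (K →+* ℂ) × ι × ι => ‖p.1 (algebraMap (𝓞 K) K (X p.2.1 p.2.2))‖) ∪
      (Finset.univ.image (fun p : (K →+* ℂ) × ι => ‖p.1 (algebraMap (𝓞 K) K (vo p.2))‖) ∪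
      (Finset.univ.image (fun p : (K →+* ℂ) × ι × ι => ‖p.1 (algebraMap (𝓞 K) K (η p.2.1 p.2.2))‖) ∪
      Finset.univ.image (fun p : ι × ι => ‖v p.1 p.2‖))))
    obtain ⟨H, hH⟩ := S.bddAbove
    have hH' : ∀ x ∈ S, x ≤ H := fun x hx => hH (by exact_mod_cast hx)
    refine ⟨H, hH' _ ?_, hH' _ ?_, fun f k j => hH' _ ?_, fun f l => hH' _ ?_,
      fun f k l => hH' _ ?_, fun l j => hH' _ ?_⟩
    · simp [S]
    · simp [S]
    · exact Finset.mem_union_right _ (Finset.mem_union_left _ (Finset.mem_image.2 ⟨(f, k, j), Finset.mem_univ _, rfl⟩))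
    · exact Finset.mem_union_right _ (Finset.mem_union_right _ (Finset.mem_union_left _ (Finset.mem_image.2 ⟨(f, l), Finset.mem_univ _, rfl⟩)))
    · exact Finset.mem_union_right _ (Finset.mem_union_right _ (Finset.mem_union_right _ (Finset.mem_union_left _ (Finset.mem_image.2 ⟨(f, k, l), Finset.mem_univ _, rfl⟩))))
    · exact Finset.mem_union_right _ (Finset.mem_union_right _ (Finset.mem_union_right _ (Finset.mem_union_right _ (Finset.mem_image.2 ⟨(l, j), Finset.mem_univ _, rfl⟩))))
  obtain ⟨CB, hCB1, hCB⟩ : ∃ CB : ℝ, 1 ≤ CB ∧ ∀ j, ∑ l, ‖B j l‖ ≤ CB := by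
    refine ⟨1 + ∑ j, ∑ l, ‖B j l‖, ?_, fun j => ?_⟩
    · have : 0 ≤ ∑ j, ∑ l, ‖B j l‖ :=
        Finset.sum_nonneg fun _ _ => Finset.sum_nonneg fun _ _ => norm_nonneg _
      linarith
    · have := Finset.single_le_sum (f := fun j => ∑ l, ‖B j l‖)
        (fun _ _ => Finset.sum_nonneg fun _ _ => norm_nonneg _) (Finset.mem_univ j)
      linarith
  have hm1 : 1 ≤ Fintype.card ι := Fintype.card_pos_iff.2 ⟨o⟩
  obtain ⟨N', hN'⟩ : ∃ N' : ℕ, N' = (Fintype.card ι ^ 2 + Fintype.card ι + 2) + (Fintype.card ι + 1) +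
    Module.finrank ℚ K * (Fintype.card ι ^ 2 + Fintype.card ι) + 1 := ⟨_, rfl⟩
  obtain ⟨N, hN⟩ : ∃ N : ℕ, N = Fintype.card ι * N' := ⟨_, rfl⟩
  have hN0 : 0 < N := by rw [hN]; exact Nat.mul_pos hm1 (by omega)
  obtain ⟨s, hs1, hnum⟩ := numeric (Fintype.card ι) (Module.finrank ℚ K) N' N d hm1 H CB c hH1 hCB1
    hc1 hdH hN' hN
  obtain ⟨A, hA⟩ : ∃ A : ℕ, A = 2 * s ^ Fintype.card ι := ⟨_, rfl⟩
  obtain ⟨M, hM⟩ : ∃ M : ℕ, M = N * s ^ Fintype.card ι := ⟨_, rfl⟩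
  obtain ⟨T, hT⟩ : ∃ T : ℕ, T = s ^ (Fintype.card ι + 1) := ⟨_, rfl⟩
  have hA0 : 0 < A := by rw [hA]; positivity
  have hM0 : 0 < M := by rw [hM]; positivity
  have hT0 : 0 < T := by rw [hT]; positivity
  obtain ⟨q, hq0, hqdeg, hqP, hqvan⟩ := hc o X vo η d M N A T H hH1 hdH hd hM0 hN0 hA0 hT0
    hHX hHvo hHη (by rw [hA, hM, hT]; ring)
  -- nonvanishing
  have hη0 : ∀ k l, η k l ≠ 0 := by
    intro k l h0
    have := hη k l
    rw [h0, map_zero, map_zero] at this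
    have h2 : (d : ℂ) ≠ 0 := by exact_mod_cast hd.ne'
    exact mul_ne_zero h2 (Complex.exp_ne_zero _) this.symm
  have hex : ∃ L, ∃ t : Multiset ι, t.card = L ∧ ∃ n : ι → ℕ, (∀ l, n l < N) ∧
      valD X vo η d M N o q t n ≠ 0 := by
    obtain ⟨k, hk⟩ := zero_estimate A (xhD X M) o (xhD_inj o X M hind) q hqdeg hq0
      (woD vo (fun _ => 0)) (ThD η d M N (fun _ => 0)) (fun i => by
        rw [ThD]
        refine Finset.prod_ne_zero_iff.2 fun k _ => Finset.prod_ne_zero_iff.2 fun l _ => ?_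
        exact mul_ne_zero (pow_ne_zero _ (hη0 k l)) (pow_ne_zero _ (by exact_mod_cast hd.ne')))
    refine ⟨k, Multiset.replicate k o, by simp, fun _ => 0, fun _ => hN0, ?_⟩
    rw [valD, Multiset.map_replicate, Multiset.prod_replicate]
    exact hk
  obtain ⟨L, ⟨t, htL, n, hn, hne⟩, hmin⟩ : ∃ L, (∃ t : Multiset ι, t.card = L ∧ ∃ n : ι → ℕ,
      (∀ l, n l < N) ∧ valD X vo η d M N o q t n ≠ 0) ∧
      ∀ t : Multiset ι, t.card < L → ∀ n : ι → ℕ, (∀ l, n l < N) →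
        valD X vo η d M N o q t n = 0 := by
    refine ⟨Nat.find hex, Nat.find_spec hex, fun t ht n hn => ?_⟩
    by_contra h
    exact Nat.find_min hex ht ⟨t, rfl, n, hn, h⟩
  have hTL : T ≤ L := by
    by_contra h
    exact hne (hqvan t (by omega) n hn)
  obtain ⟨r, hr1, hr2⟩ := exists_root (Fintype.card ι) L
  have hsr : s ≤ r := by
    have h1 : s ^ (Fintype.card ι + 1) < (r + 1) ^ (Fintype.card ι + 1) :=
      (hT ▸ hTL).trans_lt hr2
    have := lt_of_pow_lt_pow_left₀ _ (Nat.zero_le _) h1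
    omega
  have hfin := hnum r L hsr hr1 hr2 _ _ _ _ _ _ _ _ rfl rfl rfl rfl rfl rfl rfl rfl
  rw [← hA, ← hM, ← hT] at hfin
  obtain ⟨hρ, hHs1, hG1, hGV1, hW1, hP0, hlt⟩ := hfin
  -- upper bounds
  have hmapdeg : ∀ (f : 𝓞 K →+* ℂ) i, ((q i).map f).degree < A := fun f i =>
    degree_map_le.trans_lt (hqdeg i)
  have hmapco := fun (f : K →+* ℂ) i k =>
    (congrArg norm (coeff_map (p := q i) (f.comp (algebraMap (𝓞 K) K)) k)).trans_le (hqP f i k)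
  have hup := fun f : K →+* ℂ =>
    (congrArg norm (valD_map (f.comp (algebraMap (𝓞 K) K)) X vo η d M N o q t n)).trans_le
    (valD_bound _ _ _ d M N A o H _ (by linarith) hP0 (hHX f) (hHvo f) (hHη f) hdH hW1
      _ (hmapdeg (f.comp (algebraMap (𝓞 K) K))) (hmapco f) t n hn)
  rw [htL] at hup
  have hlow := liouville φ _ hne _ hHs1 hup
  -- the analytic upper bound
  have hPhi := fun (t : Multiset ι) (n : ι → ℕ) (hn : ∀ l, n l < N) =>
    (valD_map (φ.comp (algebraMap (𝓞 K) K)) X vo η d M N o q t n).trans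
      (valD_eq_Phi _ _ _ d M N o v hvo hη _ t n hn)
  have hd0 : (d : ℂ) ≠ 0 := by exact_mod_cast hd.ne'
  have : Nonempty ι := ⟨o⟩
  have han := analytic_estimate _ o _ v B hB CB hCB (by linarith) N' L N hN
    (fun t ht n hn => by
      have h1 := hPhi t n hn
      rw [hmin t ht n hn, map_zero] at h1
      exact (mul_eq_zero.1 h1.symm).resolve_left (pow_ne_zero _ hd0))
    r _ hρ
    (fun t ht n hn l z hz => Phi_bound _ M N A o v H _ hH1 hP0 hm1 hN0 (hHX φ) hHv _
      (hmapdeg (φ.comp (algebraMap (𝓞 K) K))) (hmapco φ) r L _ rfl hGV1 t ht n hn l z hz)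
    t htL n hn
  have h3 := congrArg norm (hPhi t n hn)
  rw [norm_mul, norm_pow, Complex.norm_natCast] at h3
  refine absurd (hlow.trans_lt ?_) (lt_irrefl _)
  refine lt_of_le_of_lt ?_ hlt
  refine le_trans (le_of_eq (congrArg (fun x => x * _) h3)) ?_
  gcongr

lemma exists_nat_denom {K : Type*} [Field K] [NumberField K] (s : Finset K) :
    ∃ d : ℕ, 0 < d ∧ ∀ x ∈ s, IsIntegral ℤ ((d : K) * x) := by
  classical
  obtain ⟨y, hy, h⟩ := exists_integral_multiples ℤ ℚ s
  refine ⟨y.natAbs, Int.natAbs_pos.2 hy, fun x hx => ?_⟩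
  have h1 := h x hx
  rw [zsmul_eq_mul] at h1
  rcases Int.natAbs_eq y with h2 | h2
  · rw [h2] at h1
    simpa using h1
  · rw [h2] at h1
    simpa using h1.neg

theorem core2 {ι : Type} [Fintype ι] [DecidableEq ι] (o : ι) (x v B : ι → ι → ℂ)
    (hx : ∀ k j, IsAlgebraic ℚ (x k j)) (hvo : ∀ l, IsAlgebraic ℚ (v l o))
    (hθ : ∀ k l, IsAlgebraic ℚ (Complex.exp (∑ j, x k j * v l j)))
    (hB : ∀ j j', ∑ l, B j l * v l j' = if j = j' then 1 else 0)
    (hind : ∀ z : ι → ℤ, ∑ k, (z k : ℂ) * x k o = 0 → z = 0) : False := by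
  classical
  let S : Set ℂ := Set.range (fun p : ι × ι => x p.1 p.2) ∪ (Set.range (fun l => v l o) ∪
    Set.range (fun p : ι × ι => Complex.exp (∑ j, x p.1 j * v p.2 j)))
  have hSfin : S.Finite := (Set.finite_range _).union ((Set.finite_range _).union (Set.finite_range _))
  have hSint : ∀ y ∈ S, IsIntegral ℚ y := by
    rintro y (⟨p, rfl⟩ | ⟨l, rfl⟩ | ⟨p, rfl⟩)
    · exact (hx _ _).isIntegral
    · exact (hvo _).isIntegral
    · exact (hθ _ _).isIntegral
  let K := IntermediateField.adjoin ℚ S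
  have : Finite S := hSfin
  have : FiniteDimensional ℚ K := IntermediateField.finiteDimensional_adjoin hSint
  have : NumberField K := { }
  have hmem : ∀ y ∈ S, y ∈ K := fun y hy => IntermediateField.subset_adjoin ℚ S hy
  let xK : ι → ι → K := fun k j => ⟨x k j, hmem _ (Or.inl ⟨(k, j), rfl⟩)⟩
  let vK : ι → K := fun l => ⟨v l o, hmem _ (Or.inr (Or.inl ⟨l, rfl⟩))⟩
  let θK : ι → ι → K := fun k l => ⟨_, hmem _ (Or.inr (Or.inr ⟨(k, l), rfl⟩))⟩
  let φ : K →+* ℂ := algebraMap K ℂ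
  have hφx : ∀ k j, φ (xK k j) = x k j := fun _ _ => rfl
  have hφv : ∀ l, φ (vK l) = v l o := fun _ => rfl
  have hφθ : ∀ k l, φ (θK k l) = Complex.exp (∑ j, x k j * v l j) := fun _ _ => rfl
  obtain ⟨D, hD, hDint⟩ := exists_nat_denom
    (Finset.univ.image (fun p : ι × ι => xK p.1 p.2) ∪ Finset.univ.image vK)
  obtain ⟨d, hd, hdint⟩ := exists_nat_denom
    (Finset.univ.image (fun p : ι × ι => θK p.1 p.2 ^ (D * D)))
  have h1 : ∀ k j, IsIntegral ℤ ((D : K) * xK k j) := fun k j => hDint _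
    (Finset.mem_union_left _ (Finset.mem_image.2 ⟨(k, j), Finset.mem_univ _, rfl⟩))
  have h2 : ∀ l, IsIntegral ℤ ((D : K) * vK l) := fun l => hDint _
    (Finset.mem_union_right _ (Finset.mem_image.2 ⟨l, Finset.mem_univ _, rfl⟩))
  have h3 : ∀ k l, IsIntegral ℤ ((d : K) * θK k l ^ (D * D)) := fun k l => hdint _
    (Finset.mem_image.2 ⟨(k, l), Finset.mem_univ _, rfl⟩)
  have hD0 : (D : ℂ) ≠ 0 := by exact_mod_cast hD.ne'
  let X : ι → ι → 𝓞 K := fun k j => ⟨_, h1 k j⟩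
  have hX : ∀ k j, φ (algebraMap (𝓞 K) K (X k j)) = D * x k j := by
    intro k j
    have : algebraMap (𝓞 K) K (X k j) = (D : K) * xK k j := rfl
    rw [this, map_mul, map_natCast, hφx]
  refine core φ o X (fun l => ⟨_, h2 l⟩)
    (fun k l => ⟨_, h3 k l⟩) d hd (fun l j => D * v l j) (fun j l => (D : ℂ)⁻¹ * B j l) ?_ ?_ ?_ ?_
  · intro l
    have : algebraMap (𝓞 K) K (⟨_, h2 l⟩ : 𝓞 K) = (D : K) * vK l := rfl
    rw [this, map_mul, map_natCast, hφv]
  · intro k l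
    have : algebraMap (𝓞 K) K (⟨_, h3 k l⟩ : 𝓞 K) = (d : K) * θK k l ^ (D * D) := rfl
    rw [this, map_mul, map_natCast, map_pow, hφθ, ← Complex.exp_nat_mul]
    congr 2
    simp only [hX, Finset.mul_sum]
    refine Finset.sum_congr rfl fun j _ => ?_
    push_cast; ring
  · intro j j'
    rw [← hB j j']
    refine Finset.sum_congr rfl fun l _ => ?_
    field_simp
  · intro z hz
    apply hind
    have h4 := congrArg (fun y => φ (algebraMap (𝓞 K) K y)) hz
    simp only [map_sum, map_mul, hX, map_zero, map_intCast] at h4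
    have h5 : (D : ℂ) * ∑ k, (z k : ℂ) * x k o = 0 := by
      rw [← h4, Finset.mul_sum]
      exact Finset.sum_congr rfl fun k _ => by ring
    exact (mul_eq_zero.1 h5).resolve_left hD0

lemma exp_rat_alg (l : ℂ) (hl : IsAlgebraic ℚ (Complex.exp l)) (q : ℚ) :
    IsAlgebraic ℚ (Complex.exp ((q : ℂ) * l)) := by
  have h1 : IsAlgebraic ℚ (Complex.exp ((q : ℂ) * l) ^ q.den) := by
    rw [← Complex.exp_nat_mul]
    have : (q.den : ℂ) * ((q : ℂ) * l) = (q.num : ℂ) * l := by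
      rw [← mul_assoc]
      congr 1
      exact_mod_cast Rat.den_mul_eq_num q
    rw [this, Complex.exp_int_mul]
    rcases q.num.eq_nat_or_neg with ⟨n, h | h⟩
    · rw [h, zpow_natCast]; exact hl.pow n
    · rw [h, zpow_neg, zpow_natCast]; exact (hl.pow n).inv
  exact h1.of_pow q.pos

theorem two_logs (l1 l2 α : ℂ) (hα : IsAlgebraic ℚ α) (h1 : IsAlgebraic ℚ (Complex.exp l1))
    (h2 : IsAlgebraic ℚ (Complex.exp l2)) (hu : IsAlgebraic ℚ (l1 + α * l2))
    (hu0 : l1 + α * l2 ≠ 0) : False := by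
  classical
  let F := IntermediateField.adjoin ℚ {α}
  have : FiniteDimensional ℚ F := IntermediateField.adjoin.finiteDimensional hα.isIntegral
  let g : F := IntermediateField.AdjoinSimple.gen ℚ α
  have hg : (algebraMap F ℂ g) = α := IntermediateField.AdjoinSimple.algebraMap_gen ℚ α
  let u : (F →ₐ[ℚ] ℂ) → ℂ := fun σ => l1 + σ g * l2
  let ι := {σ : F →ₐ[ℚ] ℂ // u σ ≠ 0}
  let o : ι := ⟨F.val, hu0⟩
  let e : ι ≃ Fin (Fintype.card ι) := Fintype.equivFin ι
  let a : ι → ℂ := fun j => j.1 g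
  have hainj : Function.Injective a := by
    intro j j' h
    apply Subtype.ext
    exact IntermediateField.algHom_ext_of_eq_adjoin ℚ rfl (by
      rintro x hx
      obtain rfl := Set.mem_singleton_iff.1 hx
      exact h)
  have halg : ∀ j, IsAlgebraic ℚ (a j) := fun j =>
    (Algebra.IsAlgebraic.isAlgebraic (R := ℚ) g).algHom j.1
  let W : Matrix ι ι ℂ := Matrix.of fun l j => a j ^ (e l : ℕ)
  have hW : W.det ≠ 0 := by
    have : W = ((Matrix.vandermonde (a ∘ e.symm)).transpose).submatrix e e := by
      ext l j
      simp [W, Matrix.vandermonde]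
    rw [this, Matrix.det_submatrix_equiv_self, Matrix.det_transpose,
      Matrix.det_vandermonde_ne_zero_iff]
    exact hainj.comp e.symm.injective
  let V : Matrix ι ι ℂ := Matrix.of fun l j => u j.1 * W l j
  have hV : IsUnit V.det := by
    rw [isUnit_iff_ne_zero, Matrix.det_mul_row]
    exact mul_ne_zero (Finset.prod_ne_zero_iff.2 fun j _ => j.2) hW
  refine core2 o (fun k j => a j ^ (e k : ℕ)) V (V⁻¹ : Matrix ι ι ℂ) ?_ ?_ ?_ ?_ ?_
  · exact fun k j => (halg j).pow _
  · exact fun l => IsAlgebraic.mul hu ((halg o).pow _)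
  · intro k l
    have hs : ∑ j : ι, a j ^ (e k : ℕ) * V l j =
        ((Algebra.trace ℚ F (g ^ ((e k : ℕ) + e l)) : ℚ) : ℂ) * l1 +
        ((Algebra.trace ℚ F (g ^ ((e k : ℕ) + e l + 1)) : ℚ) : ℂ) * l2 := by
      have ht : ∀ y : F, ((Algebra.trace ℚ F y : ℚ) : ℂ) = ∑ σ : F →ₐ[ℚ] ℂ, σ y := fun y => by
        have := trace_eq_sum_embeddings ℂ (K := ℚ) (L := F) (x := y)
        simpa using this
      rw [ht, ht, Finset.sum_mul, Finset.sum_mul, ← Finset.sum_add_distrib]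
      have h3 : ∀ σ : F →ₐ[ℚ] ℂ, σ (g ^ ((e k : ℕ) + e l)) * l1 + σ (g ^ ((e k : ℕ) + e l + 1)) * l2
          = σ g ^ ((e k : ℕ) + e l) * u σ := by
        intro σ
        simp only [map_pow, u]; ring
      simp only [h3]
      have h4 : ∑ j : ι, a j ^ (e k : ℕ) * V l j = ∑ j : ι, (j.1 g) ^ ((e k : ℕ) + e l) * u j.1 := by
        refine Finset.sum_congr rfl fun j _ => ?_
        simp only [V, W, Matrix.of_apply, a]; ring
      rw [h4]
      refine Fintype.sum_of_injective (Subtype.val : ι → (F →ₐ[ℚ] ℂ)) Subtype.val_injective _ _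
        (fun σ hσ => ?_) (fun j => rfl)
      have : u σ = 0 := by
        by_contra h
        exact hσ ⟨⟨σ, h⟩, rfl⟩
      rw [this, mul_zero]
    rw [hs, Complex.exp_add]
    exact (exp_rat_alg _ h1 _).mul (exp_rat_alg _ h2 _)
  · intro j j'
    have := congrFun (congrFun (Matrix.nonsing_inv_mul V hV) j) j'
    rw [Matrix.mul_apply, Matrix.one_apply] at this
    exact this
  · intro z hz
    have hz' : ∑ k, (z k : F) * g ^ (e k : ℕ) = 0 := by
      apply (algebraMap F ℂ).injective
      simp only [map_sum, map_mul, map_intCast, map_pow, map_zero]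
      exact hz
    have h3 : Matrix.vecMul (fun k => (z k : ℂ)) W = 0 := by
      funext j
      have := congrArg j.1 hz'
      simp only [map_sum, map_mul, map_intCast, map_pow, map_zero] at this
      simpa [Matrix.vecMul, dotProduct, W, a] using this
    have h4 := Matrix.eq_zero_of_vecMul_eq_zero hW h3
    funext k
    have := congrFun h4 k
    simpa using this

end helpers

theorem cos_pi_add_transcendental (α β : ℝ) (hα : α ≠ 0) (hβ : β ≠ 0)
    (haalg : IsAlgebraic ℚ α) (hbalg : IsAlgebraic ℚ β) :
    Transcendental ℚ (Real.cos (α * Real.pi + β)) := by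
  intro hcos
  have hI : IsAlgebraic ℚ Complex.I := by
    apply IsAlgebraic.of_pow (n := 2) (by norm_num)
    rw [Complex.I_sq]
    exact (isAlgebraic_one (R := ℚ) (A := ℂ)).neg
  have hc : IsAlgebraic ℚ ((Real.cos (α * Real.pi + β) : ℝ) : ℂ) := hcos.algebraMap (A := ℂ)
  have ha : IsAlgebraic ℚ (α : ℂ) := haalg.algebraMap (A := ℂ)
  have hb : IsAlgebraic ℚ (β : ℂ) := hbalg.algebraMap (A := ℂ)
  have hs : IsAlgebraic ℚ ((Real.sin (α * Real.pi + β) : ℝ) : ℂ) := by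
    apply IsAlgebraic.of_pow (n := 2) (by norm_num)
    have : ((Real.sin (α * Real.pi + β) : ℝ) : ℂ) ^ 2 = 1 - ((Real.cos (α * Real.pi + β) : ℝ) : ℂ) ^ 2 := by
      rw [← Complex.ofReal_pow, Real.sin_sq]; push_cast; rfl
    rw [this]
    exact isAlgebraic_one.sub (hc.pow 2)
  have hlin : ((α * Real.pi + β : ℝ) : ℂ) * Complex.I + (α : ℂ) * (-(Real.pi * Complex.I)) =
      β * Complex.I := by push_cast; ring
  refine two_logs (((α * Real.pi + β : ℝ) : ℂ) * Complex.I) (-(Real.pi * Complex.I)) α ha ?_ ?_ ?_ ?_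
  · rw [Complex.exp_mul_I, ← Complex.ofReal_cos, ← Complex.ofReal_sin]
    exact hc.add (hs.mul hI)
  · rw [Complex.exp_neg, Complex.exp_pi_mul_I]
    exact (isAlgebraic_one.neg).inv
  · rw [hlin]; exact hb.mul hI
  · rw [hlin]
    exact mul_ne_zero (by exact_mod_cast hβ) Complex.I_ne_zero
end

section
/- Let θ ∈ (0, π] with θ ∈ ℚπ, say θ = (l/m)π with 0 < l/m ≤ 1. Then there exists a non-bipartite mixed graph G whose H_θ-spectrum is symmetric with respect to the origin; i.e., θ does not have the bipartite detection property. -/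
open Polynomial Matrix Real

/-- The θ-Hermitian adjacency matrix of a mixed graph on `Fin n` with arc
relation `A` (no loops). -/
noncomputable def MGHerm {n : ℕ} (A : Fin n → Fin n → Bool) (θ : ℝ) : Matrix (Fin n) (Fin n) ℂ :=
  fun x y =>
    if A x y ∧ A y x then 1
    else if A x y then Complex.exp (θ * Complex.I)
    else if A y x then Complex.exp (-θ * Complex.I)
    else 0

/-- A mixed graph is bipartite if its underlying graph is bipartite. -/
def MGBipartite {n : ℕ} (A : Fin n → Fin n → Bool) : Prop :=
  ∃ S : Set (Fin n), ∀ x y : Fin n, (A x y ∨ A y x) → (x ∈ S ↔ y ∉ S)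

/-- The spectrum of `M` (as a root multiset of its characteristic polynomial)
is symmetric with respect to the origin, with multiplicities. -/
def SymSpec {n : ℕ} (M : Matrix (Fin n) (Fin n) ℂ) : Prop :=
  ∀ μ : ℂ, M.charpoly.rootMultiplicity μ = M.charpoly.rootMultiplicity (-μ)


/-- If `M` anticommutes with an involution, its spectrum is symmetric. -/
theorem symm_of_anticomm {V : Type*} [Fintype V] [DecidableEq V] (M T : Matrix V V ℂ)
    (hT : T * T = 1) (h : T * M = -(M * T)) (μ : ℂ) :
    M.charpoly.rootMultiplicity μ = M.charpoly.rootMultiplicity (-μ) := by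
  have h1 : (-M).charpoly = M.charpoly := by
    have : -M = T * M * T := by
      rw [h, neg_mul, mul_assoc, hT, mul_one]
    rw [this, Matrix.charpoly_mul_comm, ← mul_assoc, hT, one_mul]
  have h2 : M.charpoly.comp (C (-1) * X + C 0) = C ((-1) ^ Fintype.card V) * M.charpoly := by
    apply Polynomial.funext
    intro t
    conv_rhs => rw [← h1]
    simp only [eval_comp, eval_mul, eval_add, eval_C, eval_X, Matrix.eval_charpoly]
    rw [← Matrix.det_neg]
    congr 1
    simp [Matrix.scalar_apply]
    abel
  have h3 := rootMultiplicity_comp_C_mul_X_add_C M.charpoly (-1) 0 μ (by simp)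
  rw [h2] at h3
  have hne : (C ((-1 : ℂ) ^ Fintype.card V) * M.charpoly) ≠ 0 := by
    apply mul_ne_zero
    · simp
    · exact (Matrix.charpoly_monic M).ne_zero
  rw [rootMultiplicity_mul hne, rootMultiplicity_C] at h3
  simpa using h3

/-- Vertices of the book: `N` sheets, each a path with `N+1` interior vertices, and two hubs. -/
abbrev BV (N : ℕ) := (Fin N × Fin (N + 1)) ⊕ Bool

/-- Arc relation of the book graph. -/
def BA (N : ℕ) : BV N → BV N → Bool
  | .inl (a, i), .inl (b, j) =>
      decide (a = b ∧ (j.1 = i.1 + 1 ∨ (i.1 = j.1 + 1 ∧ ¬ j.1 < a.1)))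
  | .inl (_, i), .inr s => decide (i.1 = if s then N else 0)
  | .inr s, .inl (_, i) => decide (i.1 = if s then N else 0)
  | .inr s, .inr t => decide (s ≠ t)

/-- weight of a sheet edge -/
noncomputable def pw (z z' : ℂ) (a i j : ℕ) : ℂ :=
  if j = i + 1 then (if i < a then z else 1)
  else if i = j + 1 then (if j < a then z' else 1) else 0

/-- The involution on sheets. -/
noncomputable def rw' (z z' : ℂ) (N : ℕ) (i a b : ℕ) : ℂ :=
  (-1) ^ i * ((if a = b then 1 else 0) - 2 / N * (z ^ (a - i) * z' ^ (b - i)))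

noncomputable def PM (z z' : ℂ) (N : ℕ) : Matrix (Fin N × Fin (N + 1)) (Fin N × Fin (N + 1)) ℂ :=
  fun p q => if p.1 = q.1 then pw z z' p.1 p.2 q.2 else 0

noncomputable def RM (z z' : ℂ) (N : ℕ) : Matrix (Fin N × Fin (N + 1)) (Fin N × Fin (N + 1)) ℂ :=
  fun p q => if p.2 = q.2 then rw' z z' N p.2 p.1 q.1 else 0

noncomputable def QM (N : ℕ) : Matrix (Fin N × Fin (N + 1)) Bool ℂ :=
  fun p s => if p.2.1 = (if s then N else 0) then 1 else 0

noncomputable def EM : Matrix Bool Bool ℂ := fun s t => if s = t then 0 else 1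

noncomputable def FM : Matrix Bool Bool ℂ := Matrix.diagonal fun s => if s then 1 else -1

theorem key_entry (z z' : ℂ) (h : z * z' = 1) (N i j a b : ℕ) :
    rw' z z' N i a b * pw z z' b i j = -(pw z z' a i j * rw' z z' N j a b) := by
  have A1 : ∀ c i : ℕ, (if i < c then z else 1) * z ^ (c - (i + 1)) = z ^ (c - i) := by
    intro c i
    split_ifs with hc
    · rw [← pow_succ']; congr 1; omega
    · rw [one_mul]; congr 1; omega
  have A1' : ∀ c i : ℕ, (if i < c then z' else 1) * z' ^ (c - (i + 1)) = z' ^ (c - i) := by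
    intro c i
    split_ifs with hc
    · rw [← pow_succ']; congr 1; omega
    · rw [one_mul]; congr 1; omega
  have A2 : ∀ c i : ℕ, (if i < c then z else 1) * z' ^ (c - i) = z' ^ (c - (i + 1)) := by
    intro c i
    rw [← A1' c i]
    split_ifs with hc
    · rw [← mul_assoc, h, one_mul]
    · simp
  have A2' : ∀ c i : ℕ, (if i < c then z' else 1) * z ^ (c - i) = z ^ (c - (i + 1)) := by
    intro c i
    rw [← A1 c i]
    split_ifs with hc
    · rw [← mul_assoc, mul_comm z', h, one_mul]
    · simp
  unfold pw rw'
  by_cases h1 : j = i + 1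
  · subst h1
    simp only [if_true]
    have e1 := A1 a i
    have e2 := A2 b i
    rw [pow_succ]
    by_cases hab : a = b
    · subst hab
      simp only [if_true]
      linear_combination (-1) ^ i * (2 / (N : ℂ)) * (-(z ^ (a - i)) * e2 + (-1) * z' ^ (a - (i+1)) * (-e1))
    · simp only [if_neg hab]
      linear_combination (-1) ^ i * (2 / (N : ℂ)) * (-(z ^ (a - i)) * e2 + (-1) * z' ^ (b - (i+1)) * (-e1))
  · rw [if_neg h1, if_neg h1]
    by_cases h2 : i = j + 1
    · subst h2
      simp only [if_true]
      have e1 := A1' b j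
      have e2 := A2' a j
      rw [pow_succ]
      by_cases hab : a = b
      · subst hab
        simp only [if_true]
        linear_combination (-1) ^ j * (2 / (N : ℂ)) * ((z ^ (a - (j+1))) * e1 - z' ^ (a - j) * e2)
      · simp only [if_neg hab]
        linear_combination (-1) ^ j * (2 / (N : ℂ)) * ((z ^ (a - (j+1))) * e1 - z' ^ (b - j) * e2)
    · simp [h2]

theorem RP (z z' : ℂ) (h : z * z' = 1) (N : ℕ) :
    RM z z' N * PM z z' N = -(PM z z' N * RM z z' N) := by
  ext ⟨a, i⟩ ⟨b, j⟩
  simp only [Matrix.mul_apply, Matrix.neg_apply, RM, PM, Fintype.sum_prod_type]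
  have L : ∑ c : Fin N, ∑ k : Fin (N + 1), ((if i = k then rw' z z' N i a c else 0) *
      (if c = b then pw z z' c k j else 0)) = rw' z z' N i a b * pw z z' b i j := by
    rw [Finset.sum_eq_single b, Finset.sum_eq_single i] <;> simp +contextual [eq_comm]
  have R : ∑ c : Fin N, ∑ k : Fin (N + 1), ((if a = c then pw z z' a i k else 0) *
      (if k = j then rw' z z' N k c b else 0)) = pw z z' a i j * rw' z z' N j a b := by
    rw [Finset.sum_eq_single a, Finset.sum_eq_single j] <;> simp +contextual [eq_comm]
  rw [L, R, key_entry z z' h]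

theorem phase_cancel (z z' : ℂ) (h : z * z' = 1) (n : ℕ) : z' ^ n * z ^ n = 1 := by
  rw [← mul_pow, mul_comm, h, one_pow]

theorem RR (z z' : ℂ) (h : z * z' = 1) (N : ℕ) (hN : 0 < N) :
    RM z z' N * RM z z' N = 1 := by
  ext ⟨a, i⟩ ⟨b, j⟩
  simp only [Matrix.mul_apply, RM, Fintype.sum_prod_type]
  have hN' : (N : ℂ) ≠ 0 := by exact_mod_cast hN.ne'
  have L : ∀ c : Fin N, ∑ k : Fin (N + 1), ((if i = k then rw' z z' N i a c else 0) *
      (if k = j then rw' z z' N k c b else 0)) =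
      if i = j then rw' z z' N i a c * rw' z z' N i c b else 0 := by
    intro c
    rw [Finset.sum_eq_single i] <;> simp +contextual [eq_comm]
  simp only [L]
  by_cases hij : i = j
  · subst hij
    simp only [if_true]
    have hs : ((-1 : ℂ) ^ (i : ℕ)) * (-1) ^ (i : ℕ) = 1 := by
      rw [← mul_pow]; simp
    have E : ∀ c : Fin N, rw' z z' N i a c * rw' z z' N i c b =
        (if a = c then (if c = b then 1 else 0) else 0)
        - (if a = c then 2 / N * (z ^ (c.1 - i.1) * z' ^ (b.1 - i.1)) else 0)
        - (if c = b then 2 / N * (z ^ (a.1 - i.1) * z' ^ (c.1 - i.1)) else 0)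
        + 4 / (N * N) * (z ^ (a.1 - i.1) * z' ^ (b.1 - i.1)) := by
      intro c
      have hz := phase_cancel z z' h (c.1 - i.1)
      unfold rw'
      simp only [Fin.val_inj]
      have : (4 : ℂ) / (N * N) = 2 / N * (2 / N) := by field_simp; norm_num
      rw [this]
      generalize (2 : ℂ) / N = U
      have T : ∀ D₁ D₂ : ℂ,
          (-1) ^ i.1 * (D₁ - U * (z ^ (a.1 - i.1) * z' ^ (c.1 - i.1))) *
            ((-1) ^ i.1 * (D₂ - U * (z ^ (c.1 - i.1) * z' ^ (b.1 - i.1)))) =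
          D₁ * D₂ - D₁ * (U * (z ^ (c.1 - i.1) * z' ^ (b.1 - i.1)))
            - D₂ * (U * (z ^ (a.1 - i.1) * z' ^ (c.1 - i.1)))
            + U * U * (z ^ (a.1 - i.1) * z' ^ (b.1 - i.1)) := by
        intro D₁ D₂
        linear_combination (D₁ - U * (z ^ (a.1 - i.1) * z' ^ (c.1 - i.1))) *
          (D₂ - U * (z ^ (c.1 - i.1) * z' ^ (b.1 - i.1))) * hs +
          U * U * (z ^ (a.1 - i.1) * z' ^ (b.1 - i.1)) * hz
      rw [T]
      split_ifs <;> simp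
    simp only [E, Finset.sum_add_distrib, Finset.sum_sub_distrib, Finset.sum_ite_eq,
      Finset.sum_ite_eq', Finset.mem_univ, if_true, Finset.sum_const, Finset.card_univ,
      Fintype.card_fin, nsmul_eq_mul, Matrix.one_apply, Prod.mk.injEq, and_true]
    field_simp
    ring
  · simp [hij]

theorem RQ (z z' : ℂ) (N : ℕ) (hN : 0 < N) (hev : Even N)
    (hs' : ∑ b : Fin N, z' ^ b.1 = 0) :
    RM z z' N * QM N = -(QM N * FM) := by
  ext ⟨a, i⟩ s
  have hN' : (N : ℂ) ≠ 0 := by exact_mod_cast hN.ne'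
  rw [FM, Matrix.neg_apply, Matrix.mul_diagonal]
  simp only [Matrix.mul_apply, RM, QM, Fintype.sum_prod_type]
  have L : ∀ c : Fin N, ∑ k : Fin (N + 1), ((if i = k then rw' z z' N i a c else 0) *
      (if k.1 = (if s then N else 0) then (1 : ℂ) else 0)) =
      rw' z z' N i a c * (if i.1 = (if s then N else 0) then (1 : ℂ) else 0) := by
    intro c
    rw [Finset.sum_eq_single i] <;> simp +contextual [eq_comm]
  simp only [L]
  rw [← Finset.sum_mul]
  by_cases hi : i.1 = (if s then N else 0)
  · simp only [hi, if_true, mul_one, one_mul, rw', Fin.val_inj]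
    rw [← Finset.mul_sum, Finset.sum_sub_distrib, ← Finset.mul_sum, ← Finset.mul_sum]
    cases s
    · simp [hs']
    · have e : ∀ b : Fin N, b.1 - N = 0 := fun b => by omega
      simp [e, hev.neg_one_pow, hN']
      norm_num
  · simp [hi]

theorem QR (z z' : ℂ) (N : ℕ) (hN : 0 < N) (hev : Even N)
    (hs : ∑ b : Fin N, z ^ b.1 = 0) :
    FM * (QM N)ᵀ = -((QM N)ᵀ * RM z z' N) := by
  have h := RQ z' z N hN hev hs
  have hR : (RM z' z N)ᵀ = RM z z' N := by
    ext ⟨a, i⟩ ⟨b, j⟩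
    simp only [Matrix.transpose_apply, RM]
    by_cases hij : i = j
    · subst hij
      simp only [if_true, rw']
      rw [mul_comm (z' ^ _)]
      simp only [eq_comm]
    · simp [hij, Ne.symm hij]
  have h2 := congrArg Matrix.transpose h
  rw [Matrix.transpose_mul, Matrix.transpose_neg, Matrix.transpose_mul, hR] at h2
  rw [h2, neg_neg, FM, Matrix.diagonal_transpose]

theorem FE : FM * EM = -(EM * FM) := by
  ext s t
  rw [FM, Matrix.neg_apply, Matrix.mul_diagonal, Matrix.diagonal_mul]
  cases s <;> cases t <;> simp [EM]

theorem FF : FM * FM = 1 := by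
  rw [FM, Matrix.diagonal_mul_diagonal, ← Matrix.diagonal_one]
  congr 1
  ext s
  cases s <;> simp

theorem book_symm (z z' : ℂ) (h : z * z' = 1) (N : ℕ) (hN : 0 < N) (hev : Even N)
    (hs : ∑ b : Fin N, z ^ b.1 = 0) (hs' : ∑ b : Fin N, z' ^ b.1 = 0) (μ : ℂ) :
    (Matrix.fromBlocks (PM z z' N) (QM N) (QM N)ᵀ EM).charpoly.rootMultiplicity μ =
    (Matrix.fromBlocks (PM z z' N) (QM N) (QM N)ᵀ EM).charpoly.rootMultiplicity (-μ) := by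
  apply symm_of_anticomm _ (Matrix.fromBlocks (RM z z' N) 0 0 FM)
  · simp [Matrix.fromBlocks_multiply, RR z z' h N hN, FF]
  · simp [Matrix.fromBlocks_multiply, RP z z' h N, FE, RQ z z' N hN hev hs',
      QR z z' N hN hev hs, Matrix.fromBlocks_neg]

theorem book_herm (N : ℕ) (θ : ℝ) (u v : BV N) :
    (if BA N u v ∧ BA N v u then (1 : ℂ)
    else if BA N u v then Complex.exp (θ * Complex.I)
    else if BA N v u then Complex.exp (-θ * Complex.I)
    else 0) = Matrix.fromBlocks (PM (Complex.exp (θ * Complex.I)) (Complex.exp (-θ * Complex.I)) N)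
      (QM N) (QM N)ᵀ EM u v := by
  rcases u with ⟨a, i⟩ | s <;> rcases v with ⟨b, j⟩ | t
  · simp only [Matrix.fromBlocks_apply₁₁, BA, PM, pw, decide_eq_true_eq]
    by_cases hab : a = b
    · subst hab
      simp only [true_and, if_true]
      split_ifs <;> first | rfl | omega
    · simp [hab, Ne.symm hab]
  · simp only [Matrix.fromBlocks_apply₁₂, BA, QM, decide_eq_true_eq]
    split_ifs <;> simp_all
  · simp only [Matrix.fromBlocks_apply₂₁, BA, QM, decide_eq_true_eq, Matrix.transpose_apply]
    split_ifs <;> simp_all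
  · simp only [Matrix.fromBlocks_apply₂₂, BA, EM, decide_eq_true_eq]
    cases s <;> cases t <;> simp

theorem book_not_bip (N : ℕ) (hN : 0 < N) (hev : Even N) (S : Set (BV N))
    (hS : ∀ x y : BV N, (BA N x y ∨ BA N y x) → (x ∈ S ↔ y ∉ S)) : False := by
  have ind : ∀ i : ℕ, ∀ hi : i < N + 1,
      ((Sum.inl (⟨0, hN⟩, ⟨i, hi⟩) : BV N) ∈ S ↔
        (Even i ↔ (Sum.inl (⟨0, hN⟩, ⟨0, by omega⟩) : BV N) ∈ S)) := by
    intro i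
    induction i with
    | zero => intro hi; simp
    | succ k ih =>
      intro hi
      have h1 := ih (by omega)
      have h2 := hS (Sum.inl (⟨0, hN⟩, ⟨k, by omega⟩)) (Sum.inl (⟨0, hN⟩, ⟨k + 1, hi⟩))
        (Or.inl (by simp [BA]))
      rw [Nat.even_add_one]
      tauto
  have hL := ind N (by omega)
  have hx := hS (Sum.inr false) (Sum.inl (⟨0, hN⟩, ⟨0, by omega⟩)) (Or.inl (by simp [BA]))
  have hy := hS (Sum.inr true) (Sum.inl (⟨0, hN⟩, ⟨N, by omega⟩)) (Or.inl (by simp [BA]))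
  have hxy := hS (Sum.inr false) (Sum.inr true) (Or.inl (by simp [BA]))
  tauto

theorem geom_zero (z : ℂ) (N : ℕ) (h1 : z ≠ 1) (hz : z ^ N = 1) :
    ∑ b : Fin N, z ^ b.1 = 0 := by
  rw [Fin.sum_univ_eq_sum_range (fun k => z ^ k) N, geom_sum_eq h1, hz]
  simp

theorem rational_angle_not_bipartite_detection (l m : ℕ) (hm : 0 < m) (hl : 0 < l)
    (hlm : l ≤ m) (θ : ℝ) (hθ : θ = (l : ℝ) / m * Real.pi) :
    ∃ (n : ℕ) (A : Fin n → Fin n → Bool),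
      (∀ v, A v v = false) ∧ ¬ MGBipartite A ∧ SymSpec (MGHerm A θ) := by
  have hmR : (0 : ℝ) < m := by exact_mod_cast hm
  have hlR : (0 : ℝ) < l := by exact_mod_cast hl
  have hlmR : (l : ℝ) ≤ m := by exact_mod_cast hlm
  have hθ0 : 0 < θ := by rw [hθ]; positivity
  have hθπ : θ ≤ Real.pi := by
    rw [hθ]
    have : (l : ℝ) / m ≤ 1 := (div_le_one hmR).2 hlmR
    nlinarith [Real.pi_pos]
  set z := Complex.exp (θ * Complex.I) with hz
  set z' := Complex.exp (-θ * Complex.I) with hz'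
  have hzz : z * z' = 1 := by
    rw [hz, hz', ← Complex.exp_add]; simp
  have hz1 : z ≠ 1 := by
    intro h
    rw [hz, Complex.exp_eq_one_iff] at h
    obtain ⟨k, hk⟩ := h
    have h2 : (θ : ℂ) = ((k * (2 * Real.pi) : ℝ) : ℂ) := by
      apply mul_right_cancel₀ Complex.I_ne_zero
      rw [hk]; push_cast; ring
    have h3 : θ = k * (2 * Real.pi) := by exact_mod_cast h2
    have hk0 : (0 : ℝ) < k := by
      by_contra hc
      push Not at hc
      nlinarith [Real.pi_pos]
    have hk1 : (1 : ℝ) ≤ k := by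
      have : (0 : ℤ) < k := by exact_mod_cast hk0
      exact_mod_cast this
    nlinarith [Real.pi_pos]
  have hzN : z ^ (2 * m) = 1 := by
    rw [hz, ← Complex.exp_nat_mul, Complex.exp_eq_one_iff]
    refine ⟨l, ?_⟩
    have hm' : (m : ℂ) ≠ 0 := by exact_mod_cast hm.ne'
    rw [hθ]
    push_cast
    field_simp
  have hz1' : z' ≠ 1 := by
    intro h; rw [h, mul_one] at hzz; exact hz1 hzz
  have hzN' : z' ^ (2 * m) = 1 := by
    have := phase_cancel z z' hzz (2 * m)
    rwa [hzN, mul_one] at this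
  have hN : 0 < 2 * m := by omega
  have hev : Even (2 * m) := even_two_mul m
  let e := Fintype.equivFin (BV (2 * m))
  refine ⟨Fintype.card (BV (2 * m)), fun x y => BA (2 * m) (e.symm x) (e.symm y), ?_, ?_, ?_⟩
  · intro v
    have hl0 : ∀ u : BV (2 * m), BA (2 * m) u u = false := by
      rintro (⟨a, i⟩ | s) <;> simp [BA]
    exact hl0 (e.symm v)
  · rintro ⟨S, hS⟩
    apply book_not_bip (2 * m) hN hev {v | e v ∈ S}
    intro x y hxy
    apply hS (e x) (e y)
    simpa using hxy
  · have hM : MGHerm (fun x y => BA (2 * m) (e.symm x) (e.symm y)) θ =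
        Matrix.reindex e e (Matrix.fromBlocks (PM z z' (2 * m)) (QM (2 * m)) (QM (2 * m))ᵀ EM) := by
      ext x y
      exact book_herm (2 * m) θ (e.symm x) (e.symm y)
    intro μ
    rw [hM, Matrix.charpoly_reindex]
    exact book_symm z z' hzz (2 * m) hN hev (geom_zero z _ hz1 hzN) (geom_zero z' _ hz1' hzN') μ
end
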